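/- arXiv:2603.18929 — 3 statements merged into one kernel-verified Lean document; each statement's English description precedes it below -/
import Mathlib

section
/- There exists an absolute constant c ≥ 1 such that for every dimension d ≥ 2, every convex body K ⊆ ℝ^d, every x ∈ int(K), and every r with 0 < r ≤ 8, one has c^{−d} · ω_d · r^d ≤ vol_H^K(B_H^K(x,r)) ≤ c^{d} · ω_d · r^d, where B_H^K(x,r) is the Hilbert ball of radius r centered at x and vol_H^K is the Hilbert Holmes–Thompson volume. -/
open Set MeasureTheory Metric
open scoped Pointwise RealInnerProductSpace ENNReal

noncomputable section

abbrev Euc (d : ℕ) := EuclideanSpace ℝ (Fin d)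

/-- A convex body: a compact convex set with nonempty interior. -/
def IsConvexBody {d : ℕ} (K : Set (Euc d)) : Prop :=
  IsCompact K ∧ Convex ℝ K ∧ (interior K).Nonempty

/-- The polar of a set. -/
def polarSet {d : ℕ} (S : Set (Euc d)) : Set (Euc d) :=
  {y | ∀ x ∈ S, ⟪x, y⟫ ≤ 1}

/-- The Hilbert distance with respect to the body `K`. -/
def hilbertDist {d : ℕ} (K : Set (Euc d)) (x y : Euc d) : ℝ :=
  -(1 / 2) * Real.log ((1 - gauge ((fun k => k - x) '' K) (y - x)) *
    (1 - gauge ((fun k => k - y) '' K) (x - y)))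

/-- The Hilbert ball of radius `r` centered at `x`. -/
def hilbertBall {d : ℕ} (K : Set (Euc d)) (x : Euc d) (r : ℝ) : Set (Euc d) :=
  {y ∈ interior K | hilbertDist K x y ≤ r}

/-- The Hilbert covering number of `U` at scale `α` in the geometry induced by `K`. -/
def hilbertCov {d : ℕ} (K U : Set (Euc d)) (α : ℝ) : ℕ :=
  sInf {m : ℕ | ∃ x : Fin m → Euc d, (∀ i, x i ∈ interior K) ∧
    U ⊆ ⋃ i, hilbertBall K (x i) α}

/-- The translative covering number of `U` by translates of `α • D`. -/
def transCov {d : ℕ} (D U : Set (Euc d)) (α : ℝ) : ℕ :=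
  sInf {m : ℕ | ∃ x : Fin m → Euc d, U ⊆ ⋃ i, x i +ᵥ α • D}

/-- The Hilbert `α`-expansion of `G` in `K`. -/
def hilbertExpand {d : ℕ} (K G : Set (Euc d)) (α : ℝ) : Set (Euc d) :=
  {x ∈ interior K | sInf (hilbertDist K x '' G) ≤ α}

/-- The Lebesgue volume of the Euclidean unit ball in `ℝ^d`. -/
def ωd (d : ℕ) : ℝ := (volume (ball (0 : Euc d) 1)).toReal

/-- The Hilbert Finsler unit ball at `y` in the geometry induced by `K`. -/
def finslerBall {d : ℕ} (K : Set (Euc d)) (y : Euc d) : Set (Euc d) :=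
  {v | gauge ((fun k => k - y) '' K) v + gauge ((fun k => k - y) '' K) (-v) ≤ 2}

/-- The Hilbert Holmes–Thompson volume of `U` in the geometry induced by `K`. -/
def volH {d : ℕ} (K U : Set (Euc d)) : ℝ :=
  (1 / ωd d) * ∫ y in U, (volume (polarSet (finslerBall K y))).toReal

/-- The recentered Macbeath region `A(x) := (K ∩ (2x − K)) − x`. -/
def macbeathA {d : ℕ} (K : Set (Euc d)) (x : Euc d) : Set (Euc d) :=
  (fun k => k - x) '' (K ∩ ((fun k => (2 : ℝ) • x - k) '' K))

/-- One-dimensional Brunn–Minkowski for compact sets. -/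
lemma bm1_compact {A B : Set ℝ} (hA : IsCompact A) (hB : IsCompact B) (hA0 : A.Nonempty)
    (hB0 : B.Nonempty) {C : Set ℝ} (hC : ∀ a ∈ A, ∀ b ∈ B, (a + b) / 2 ∈ C) :
    volume A + volume B ≤ 2 * volume C := by
  obtain ⟨M, hM, hMA⟩ := hA.exists_isGreatest hA0
  obtain ⟨m, hm, hmB⟩ := hB.exists_isLeast hB0
  -- 2 • C contains (A + m) ∪ (M + B)
  have h1 : (fun a => a + m) '' A ∪ (fun b => M + b) '' B ⊆ (2 : ℝ) • C := by
    rintro z (⟨a, ha, rfl⟩ | ⟨b, hb, rfl⟩)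
    · exact ⟨(a + m) / 2, hC a ha m hm, by simp; ring⟩
    · exact ⟨(M + b) / 2, hC M hM b hb, by simp; ring⟩
  have h2 : volume ((fun a => a + m) '' A ∪ (fun b => M + b) '' B) = volume A + volume B := by
    rw [measure_union₀']
    · congr 1
      · simp
      · simp
    · exact (hA.image (by fun_prop)).measurableSet.nullMeasurableSet
    · refine measure_mono_null (t := {M + m}) ?_ (by simp)
      rintro z ⟨⟨a, ha, rfl⟩, ⟨b, hb, hab⟩⟩
      have := hMA ha
      have := hmB hb
      simp only [mem_singleton_iff] at *
      linarith
  rw [← h2]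
  refine (measure_mono h1).trans ?_
  rw [Measure.addHaar_smul]
  simp

lemma bm1 {A B : Set ℝ} (hA : MeasurableSet A) (hB : MeasurableSet B) (hA0 : A.Nonempty)
    (hB0 : B.Nonempty) {C : Set ℝ} (hC : ∀ a ∈ A, ∀ b ∈ B, (a + b) / 2 ∈ C) :
    volume A + volume B ≤ 2 * volume C := by
  obtain ⟨a0, ha0⟩ := hA0
  obtain ⟨b0, hb0⟩ := hB0
  have key : ∀ K1 ⊆ A, IsCompact K1 → ∀ K2 ⊆ B, IsCompact K2 →
      volume K1 + volume K2 ≤ 2 * volume C := by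
    intro K1 h1 c1 K2 h2 c2
    refine le_trans (add_le_add (measure_mono (subset_insert a0 K1))
      (measure_mono (subset_insert b0 K2))) ?_
    refine bm1_compact (c1.insert a0) (c2.insert b0) (insert_nonempty _ _) (insert_nonempty _ _) ?_
    intro a ha b hb
    exact hC a (insert_subset ha0 h1 ha) b (insert_subset hb0 h2 hb)
  rw [hA.measure_eq_iSup_isCompact, hB.measure_eq_iSup_isCompact]
  have k2 : ∀ K1 ⊆ A, IsCompact K1 → 
      volume K1 + (⨆ (K : Set ℝ) (_ : K ⊆ B) (_ : IsCompact K), volume K) ≤ 2 * volume C := by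
    intro K1 h1 c1
    by_cases hfin : volume K1 = ⊤
    · have := key K1 h1 c1 ∅ (empty_subset _) isCompact_empty
      simp [hfin] at this
      simp [this]
    · rw [← ENNReal.le_sub_iff_add_le_left hfin]
      · simp only [iSup_le_iff]
        intro K2 h2 c2
        rw [ENNReal.le_sub_iff_add_le_left hfin]
        · exact key K1 h1 c1 K2 h2 c2
        · exact le_trans le_self_add (key K1 h1 c1 K2 h2 c2)
      · exact le_trans le_self_add (key K1 h1 c1 ∅ (empty_subset _) isCompact_empty)
  set Y := (⨆ (K : Set ℝ) (_ : K ⊆ B) (_ : IsCompact K), volume K)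
  by_cases hfin : Y = ⊤
  · have := k2 ∅ (empty_subset _) isCompact_empty
    simp [hfin] at this
    simp [this]
  have hY : Y ≤ 2 * volume C := le_trans le_add_self (k2 ∅ (empty_subset _) isCompact_empty)
  rw [← ENNReal.le_sub_iff_add_le_right hfin hY]
  simp only [iSup_le_iff]
  intro K1 h1 c1
  rw [ENNReal.le_sub_iff_add_le_right hfin hY]
  exact k2 K1 h1 c1

lemma ennreal_amgm {u v w : ℝ≥0∞} (h : u + v ≤ 2 * w) : u * v ≤ w ^ 2 := by
  by_cases hw : w = ⊤
  · simp [hw]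
  have hu : u ≠ ⊤ := by
    rintro rfl
    simp at h
    exact (ENNReal.mul_ne_top (by simp) hw) h
  have hv : v ≠ ⊤ := by
    rintro rfl
    simp at h
    exact (ENNReal.mul_ne_top (by simp) hw) h
  lift u to NNReal using hu
  lift v to NNReal using hv
  lift w to NNReal using hw
  norm_cast at h ⊢
  have h' : (u : ℝ) + v ≤ 2 * w := by exact_mod_cast h
  have : (u : ℝ) * v ≤ w ^ 2 := by nlinarith [sq_nonneg ((u:ℝ) - v), u.2, v.2, w.2]
  exact_mod_cast this

/-- layer-cake on the unit interval -/
lemma layer_one {f : ℝ → ℝ} (hf : Measurable f) (h0 : ∀ x, 0 ≤ f x) (h1 : ∀ x, f x ≤ 1) :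
    ∫⁻ x, ENNReal.ofReal (f x) = ∫⁻ t in Ioo (0:ℝ) 1, volume {x | t < f x} := by
  rw [lintegral_eq_lintegral_meas_lt volume (Filter.Eventually.of_forall h0) hf.aemeasurable]
  have : Ioi (0:ℝ) = Ioo 0 1 ∪ Ici 1 := by
    ext x
    simp only [mem_Ioi, mem_union, mem_Ioo, mem_Ici]
    constructor
    · intro h
      rcases lt_or_ge x 1 with h' | h'
      · exact Or.inl ⟨h, h'⟩
      · exact Or.inr h'
    · rintro (h | h) <;> linarith
  rw [this, lintegral_union measurableSet_Ici]
  · have : ∫⁻ t in Ici (1:ℝ), volume {x | t < f x} = 0 := by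
      rw [setLIntegral_congr_fun (g := fun _ => 0) measurableSet_Ici]
      · simp
      · intro t ht
        have : {x | t < f x} = ∅ := by
          ext x; simp; exact (h1 x).trans ht
        simp [this]
    rw [this, add_zero]
  · rw [Set.disjoint_left]; intro x hx hx'; simp at *; linarith

lemma layer_le {f : ℝ → ℝ} (hf : Measurable f) (h0 : ∀ x, 0 ≤ f x) :
    ∫⁻ t in Ioo (0:ℝ) 1, volume {x | t < f x} ≤ ∫⁻ x, ENNReal.ofReal (f x) := by
  rw [lintegral_eq_lintegral_meas_lt volume (Filter.Eventually.of_forall h0) hf.aemeasurable]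
  exact lintegral_mono_set (fun x hx => hx.1)

/-- bounded PL, normalised. -/
lemma pl1_norm {f g h : ℝ → ℝ} (hf : Measurable f) (hg : Measurable g) (hh : Measurable h)
    (f0 : ∀ x, 0 ≤ f x) (g0 : ∀ x, 0 ≤ g x) (h0 : ∀ x, 0 ≤ h x)
    (f1 : ∀ x, f x ≤ 1) (g1 : ∀ x, g x ≤ 1)
    (fs : ∀ t < 1, ∃ x, t < f x) (gs : ∀ t < 1, ∃ x, t < g x)
    (H : ∀ s t, f s * g t ≤ h ((s + t) / 2) ^ 2) :
    (∫⁻ x, ENNReal.ofReal (f x)) * (∫⁻ x, ENNReal.ofReal (g x)) ≤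
      (∫⁻ x, ENNReal.ofReal (h x)) ^ 2 := by
  apply ennreal_amgm
  rw [layer_one hf f0 f1, layer_one hg g0 g1]
  refine le_trans ?_ (mul_le_mul_right (layer_le hh h0) 2)
  rw [← lintegral_add_left', ← lintegral_const_mul']
  · refine setLIntegral_mono' measurableSet_Ioo ?_
    intro t ht
    refine bm1 (measurableSet_lt measurable_const hf) (measurableSet_lt measurable_const hg)
      (fs t ht.2) (gs t ht.2) ?_
    intro a ha b hb
    have := H a b
    simp only [mem_ofPred_eq] at *
    have h3 : t ^ 2 < h ((a + b) / 2) ^ 2 := by nlinarith [ht.1]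
    exact lt_of_pow_lt_pow_left₀ 2 (h0 _) h3
  · simp
  · have : Antitone (fun t => volume {x | t < f x}) := by
      intro s t hst
      exact measure_mono (fun x hx => lt_of_le_of_lt hst hx)
    exact this.measurable.aemeasurable

lemma pl1_bdd {f g h : ℝ → ℝ} (hf : Measurable f) (hg : Measurable g) (hh : Measurable h)
    (f0 : ∀ x, 0 ≤ f x) (g0 : ∀ x, 0 ≤ g x) (h0 : ∀ x, 0 ≤ h x) {k : ℝ}
    (f1 : ∀ x, f x ≤ k) (g1 : ∀ x, g x ≤ k)
    (H : ∀ s t, f s * g t ≤ h ((s + t) / 2) ^ 2) :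
    (∫⁻ x, ENNReal.ofReal (f x)) * (∫⁻ x, ENNReal.ofReal (g x)) ≤
      (∫⁻ x, ENNReal.ofReal (h x)) ^ 2 := by
  have bf : BddAbove (range f) := ⟨k, by rintro _ ⟨x, rfl⟩; exact f1 x⟩
  have bg : BddAbove (range g) := ⟨k, by rintro _ ⟨x, rfl⟩; exact g1 x⟩
  set a := ⨆ x, f x with ha
  set b := ⨆ x, g x with hb
  have fa : ∀ x, f x ≤ a := fun x => le_ciSup bf x
  have gb : ∀ x, g x ≤ b := fun x => le_ciSup bg x
  rcases (le_trans (f0 0) (fa 0)).eq_or_lt with ha0 | ha0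
  · have : ∀ x, f x = 0 := fun x => le_antisymm (ha0 ▸ fa x) (f0 x)
    simp [this]
  rcases (le_trans (g0 0) (gb 0)).eq_or_lt with hb0 | hb0
  · have : ∀ x, g x = 0 := fun x => le_antisymm (hb0 ▸ gb x) (g0 x)
    simp [this]
  have hab : 0 < √(a * b) := Real.sqrt_pos.2 (mul_pos ha0 hb0)
  have key := pl1_norm (f := fun x => f x / a) (g := fun x => g x / b)
    (h := fun x => h x / √(a * b)) (hf.div_const _) (hg.div_const _) (hh.div_const _)
    (fun x => div_nonneg (f0 x) ha0.le) (fun x => div_nonneg (g0 x) hb0.le)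
    (fun x => div_nonneg (h0 x) hab.le)
    (fun x => (div_le_one ha0).2 (fa x)) (fun x => (div_le_one hb0).2 (gb x))
    (by
      intro t ht
      obtain ⟨x, hx⟩ := exists_lt_of_lt_ciSup (show t * a < a by nlinarith)
      exact ⟨x, by rwa [lt_div_iff₀ ha0]⟩)
    (by
      intro t ht
      obtain ⟨x, hx⟩ := exists_lt_of_lt_ciSup (show t * b < b by nlinarith)
      exact ⟨x, by rwa [lt_div_iff₀ hb0]⟩)
    (by
      intro s t
      rw [div_pow, Real.sq_sqrt (mul_pos ha0 hb0).le, div_mul_div_comm]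
      exact div_le_div_of_nonneg_right (H s t) (mul_pos ha0 hb0).le)
  have e1 : ∀ (F : ℝ → ℝ) (c : ℝ), 0 < c → (∫⁻ x, ENNReal.ofReal (F x)) =
      ENNReal.ofReal c * ∫⁻ x, ENNReal.ofReal (F x / c) := by
    intro F c hc
    rw [← lintegral_const_mul' _ _ (by simp)]
    congr 1; ext x
    rw [← ENNReal.ofReal_mul hc.le]
    congr 1; field_simp
  rw [e1 f a ha0, e1 g b hb0, e1 h _ hab, mul_mul_mul_comm, mul_pow,
    ← ENNReal.ofReal_mul ha0.le, ← ENNReal.ofReal_pow hab.le, Real.sq_sqrt (mul_pos ha0 hb0).le]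
  gcongr

/-- The (λ = 1/2) Prékopa–Leindler property for a measure and an operation. -/
def PLop {α : Type*} [MeasurableSpace α] (ν : Measure α) (m : α → α → α) : Prop :=
  ∀ f g h : α → ℝ≥0∞, Measurable f → Measurable g → Measurable h →
    (∀ s t, f s * g t ≤ h (m s t) ^ 2) →
    (∫⁻ x, f x ∂ν) * (∫⁻ x, g x ∂ν) ≤ (∫⁻ x, h x ∂ν) ^ 2

lemma plop_add : PLop (volume : Measure ℝ) (fun s t => (s + t) / 2) := by
  intro f g h hf hg hh H
  have trunc : ∀ F : ℝ → ℝ≥0∞, Measurable F →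
      ∫⁻ x, F x = ⨆ k : ℕ, ∫⁻ x, min (F x) k := by
    intro F hF
    rw [← lintegral_iSup (fun k => hF.min measurable_const)]
    · congr 1; ext x
      rw [← inf_iSup_eq, ENNReal.iSup_natCast]; simp
    · intro i j hij x
      simp only
      gcongr
  have key : ∀ k : ℕ, (∫⁻ x, min (f x) k) * (∫⁻ x, min (g x) k) ≤ (∫⁻ x, h x) ^ 2 := by
    intro k
    have nt : ∀ (F : ℝ → ℝ≥0∞) x, min (F x) k ≠ ⊤ := fun F x =>
      ne_top_of_le_ne_top (ENNReal.natCast_ne_top k) (min_le_right _ _)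
    have e : ∀ (F : ℝ → ℝ≥0∞), ∫⁻ x, min (F x) k = ∫⁻ x, ENNReal.ofReal (min (F x) k).toReal := by
      intro F; congr 1; ext x; rw [ENNReal.ofReal_toReal (nt F x)]
    have b : ∀ (F : ℝ → ℝ≥0∞) x, (min (F x) k).toReal ≤ k := by
      intro F x
      have := ENNReal.toReal_mono (ENNReal.natCast_ne_top k) (min_le_right (F x) (k : ℝ≥0∞))
      simpa using this
    have := pl1_bdd (f := fun x => (min (f x) k).toReal) (g := fun x => (min (g x) k).toReal)
      (h := fun x => (min (h x) k).toReal)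
      (hf.min measurable_const).ennreal_toReal (hg.min measurable_const).ennreal_toReal
      (hh.min measurable_const).ennreal_toReal
      (fun _ => ENNReal.toReal_nonneg) (fun _ => ENNReal.toReal_nonneg)
      (fun _ => ENNReal.toReal_nonneg) (b f) (b g)
      (by
        intro s t
        rw [← ENNReal.toReal_mul, ← ENNReal.toReal_pow]
        apply ENNReal.toReal_mono (ENNReal.pow_ne_top (nt h _))
        have h1 : min (f s) (k:ℝ≥0∞) * min (g t) k ≤ h ((s + t) / 2) ^ 2 :=
          le_trans (mul_le_mul' (min_le_left _ _) (min_le_left _ _)) (H s t)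
        have h2 : min (f s) (k:ℝ≥0∞) * min (g t) k ≤ (k : ℝ≥0∞) ^ 2 := by
          rw [sq]; exact mul_le_mul' (min_le_right _ _) (min_le_right _ _)
        rcases le_total (h ((s + t) / 2)) (k : ℝ≥0∞) with h3 | h3
        · rw [min_eq_left h3]; exact h1
        · rw [min_eq_right h3]; exact h2)
    rw [← e, ← e, ← e] at this
    refine this.trans ?_
    gcongr
    exact min_le_left _ _
  rw [trunc f hf, trunc g hg]
  simp only [ENNReal.iSup_mul, ENNReal.mul_iSup, iSup_le_iff]
  intro i j
  refine le_trans ?_ (key (max i j))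
  gcongr <;> simp

/-- tensorisation -/
lemma plop_pi {ν : Measure ℝ} [SigmaFinite ν] {m : ℝ → ℝ → ℝ} (h1 : PLop ν m) :
    ∀ n : ℕ, PLop (Measure.pi (fun _ : Fin n => ν)) (fun x y i => m (x i) (y i)) := by
  intro n
  induction n with
  | zero =>
    intro f g h hf hg hh H
    rw [Measure.pi_of_empty]
    simp only [lintegral_dirac]
    have := H (fun a => isEmptyElim a) (fun a => isEmptyElim a)
    refine this.trans (le_of_eq ?_)
    congr 2
    exact Subsingleton.elim _ _
  | succ n ih =>
    intro f g h hf hg hh H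
    have e := (measurePreserving_piFinSuccAbove (fun _ : Fin (n+1) => ν) 0).symm
    have hc : ∀ p : ℝ × (Fin n → ℝ), (MeasurableEquiv.piFinSuccAbove (fun _ : Fin (n+1) => ℝ) 0).symm p =
        (Fin.cons p.1 p.2 : Fin (n+1) → ℝ) := by
      intro p
      exact Fin.insertNth_zero' p.1 p.2
    have e2 : ∀ F : (Fin (n+1) → ℝ) → ℝ≥0∞, Measurable F →
        ∫⁻ x, F x ∂(Measure.pi (fun _ : Fin (n+1) => ν)) =
        ∫⁻ s, ∫⁻ X, F (Fin.cons s X) ∂(Measure.pi (fun _ : Fin n => ν)) ∂ν := by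
      intro F hF
      rw [← e.lintegral_comp hF, lintegral_prod]
      · simp only [hc]
      · exact (hF.comp e.measurable).aemeasurable
    have m0 : Measurable (fun p : ℝ × (Fin n → ℝ) => (Fin.cons p.1 p.2 : Fin (n+1) → ℝ)) := by
      simpa only [funext hc] using e.measurable
    rw [e2 f hf, e2 g hg, e2 h hh]
    apply h1
    · exact (hf.comp m0).lintegral_prod_right'
    · exact (hg.comp m0).lintegral_prod_right'
    · exact (hh.comp m0).lintegral_prod_right'
    · intro s t
      apply ih
      · exact hf.comp (m0.comp measurable_prodMk_left)
      · exact hg.comp (m0.comp measurable_prodMk_left)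
      · exact hh.comp (m0.comp measurable_prodMk_left)
      · intro X Y
        refine (H (Fin.cons s X) (Fin.cons t Y)).trans (le_of_eq ?_)
        congr 2
        ext i
        refine Fin.cases ?_ (fun i => ?_) i <;> simp

/-- Twice Lebesgue measure on the half line. -/
def nuAbs : Measure ℝ := volume.restrict (Ioi 0) + volume.restrict (Ioi 0)

instance : SigmaFinite nuAbs := by unfold nuAbs; infer_instance

lemma plop_mul : PLop nuAbs (fun s t => √|s * t|) := by
  intro f g h hf hg hh H
  have e : ∀ F : ℝ → ℝ≥0∞, ∫⁻ x, F x ∂nuAbs =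
      2 * ∫⁻ u, ENNReal.ofReal (Real.exp u) * F (Real.exp u) := by
    intro F
    have h1 := lintegral_image_eq_lintegral_abs_deriv_mul (s := univ) (f := Real.exp)
      (f' := Real.exp) MeasurableSet.univ (fun x _ => (Real.hasDerivAt_exp x).hasDerivWithinAt)
      (Real.exp_injective.injOn) F
    rw [image_univ, Real.range_exp] at h1
    simp only [Real.abs_exp, Measure.restrict_univ] at h1
    rw [nuAbs, lintegral_add_measure, h1, two_mul]
  rw [e, e, e, mul_mul_mul_comm, mul_pow, sq (2 : ℝ≥0∞)]
  refine mul_le_mul_right ?_ _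
  have mE : Measurable fun u => ENNReal.ofReal (Real.exp u) :=
    ENNReal.measurable_ofReal.comp Real.measurable_exp
  apply plop_add
  · exact mE.mul (hf.comp Real.measurable_exp)
  · exact mE.mul (hg.comp Real.measurable_exp)
  · exact mE.mul (hh.comp Real.measurable_exp)
  · intro s t
    have h1 := H (Real.exp s) (Real.exp t)
    simp only at h1
    have h2 : √|Real.exp s * Real.exp t| = Real.exp ((s + t) / 2) := by
      rw [← Real.exp_add, Real.abs_exp, Real.sqrt_eq_iff_mul_self_eq (Real.exp_pos _).le
        (Real.exp_pos _).le, ← Real.exp_add]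
      congr 1; ring
    rw [h2] at h1
    rw [mul_mul_mul_comm, mul_pow, ← ENNReal.ofReal_mul (Real.exp_pos _).le,
      ← ENNReal.ofReal_pow (Real.exp_pos _).le, ← Real.exp_add, ← Real.exp_nat_mul]
    have : s + t = ((2 : ℕ) : ℝ) * ((s + t) / 2) := by push_cast; ring
    rw [← this]
    gcongr

lemma mp_abs : MeasurePreserving (fun x : ℝ => |x|) volume nuAbs := by
  have mabs : Measurable (fun x : ℝ => |x|) := measurable_norm
  refine ⟨mabs, ?_⟩
  ext S hS
  rw [Measure.map_apply mabs hS]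
  have h1 : volume ((fun x : ℝ => |x|) ⁻¹' S) =
      volume ((S ∩ Ioi 0) ∪ Neg.neg ⁻¹' (S ∩ Ioi 0)) := by
    apply measure_congr
    have : ∀ᵐ x : ℝ, x ≠ 0 := by simp [ae_iff]
    filter_upwards [this] with x hx
    apply propext
    change |x| ∈ S ↔ ((x ∈ S ∧ 0 < x) ∨ (-x ∈ S ∧ 0 < -x))
    rcases lt_or_gt_of_ne hx with h | h
    · rw [abs_of_neg h]; constructor
      · intro h'; right; exact ⟨h', by linarith⟩
      · rintro (h' | h')
        · linarith [h'.2]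
        · exact h'.1
    · rw [abs_of_pos h]; constructor
      · intro h'; left; exact ⟨h', h⟩
      · rintro (h' | h')
        · exact h'.1
        · linarith [h'.2]
  rw [h1, measure_union]
  · rw [Measure.measure_preimage_neg, nuAbs, Measure.add_apply, Measure.restrict_apply hS]
  · rw [Set.disjoint_left]
    rintro x ⟨_, hx⟩ ⟨_, hx'⟩
    simp only [mem_Ioi] at *; linarith
  · exact (hS.inter measurableSet_Ioi).preimage measurable_neg

/-- flip the sign of coordinate `j` -/
def flipC {n : ℕ} (j : Fin n) (x : Fin n → ℝ) : Fin n → ℝ := fun i => if i = j then - x i else x i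

/-- a pair in polar relation, open and centrally symmetric. -/
structure PolarPair {n : ℕ} (U V : Set (Fin n → ℝ)) : Prop where
  openU : IsOpen U
  openV : IsOpen V
  symU : ∀ x ∈ U, -x ∈ U
  symV : ∀ x ∈ V, -x ∈ V
  dot : ∀ x ∈ U, ∀ y ∈ V, ∑ i, x i * y i ≤ 1

def zeroC {n : ℕ} (j : Fin n) (x : Fin n → ℝ) : Fin n → ℝ := fun i => if i = j then 0 else x i
def setC {n : ℕ} (j : Fin n) (x : Fin n → ℝ) (s : ℝ) : Fin n → ℝ := fun i => if i = j then s else x i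

def steinU {n : ℕ} (j : Fin n) (U : Set (Fin n → ℝ)) : Set (Fin n → ℝ) :=
  {x | ∃ s : ℝ, setC j x (s + 2 * x j) ∈ U ∧ setC j x s ∈ U}

def steinV {n : ℕ} (j : Fin n) (V : Set (Fin n → ℝ)) : Set (Fin n → ℝ) :=
  {y | ∃ w : Fin n → ℝ, y + zeroC j w ∈ V ∧ flipC j (y - zeroC j w) ∈ V}

lemma stein_polar {n : ℕ} (j : Fin n) {U V : Set (Fin n → ℝ)} (h : PolarPair U V) :
    PolarPair (steinU j U) (steinV j V) where
  openU := by
    have : steinU j U = ⋃ s : ℝ, {x | setC j x (s + 2 * x j) ∈ U} ∩ {x | setC j x s ∈ U} := by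
      ext x; simp [steinU]
    rw [this]
    refine isOpen_iUnion fun s => IsOpen.inter ?_ ?_
    · refine h.openU.preimage (continuous_pi fun i => ?_)
      unfold setC; split_ifs <;> fun_prop
    · refine h.openU.preimage (continuous_pi fun i => ?_)
      unfold setC; split_ifs <;> fun_prop
  openV := by
    have : steinV j V = ⋃ w : Fin n → ℝ, {y | y + zeroC j w ∈ V} ∩ {y | flipC j (y - zeroC j w) ∈ V} := by
      ext x; simp [steinV]
    rw [this]
    refine isOpen_iUnion fun s => IsOpen.inter ?_ ?_
    · refine h.openV.preimage (by fun_prop)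
    · refine h.openV.preimage (continuous_pi fun i => ?_)
      unfold flipC; split_ifs <;> simp only [Pi.sub_apply] <;> fun_prop
  symU := by
    rintro x ⟨s, h1, h2⟩
    refine ⟨-s, ?_, ?_⟩
    · convert h.symU _ h1 using 1
      ext i; simp only [setC, Pi.neg_apply]; split_ifs <;> ring
    · convert h.symU _ h2 using 1
      ext i; simp only [setC, Pi.neg_apply]; split_ifs <;> ring
  symV := by
    rintro x ⟨w, h1, h2⟩
    refine ⟨-w, ?_, ?_⟩
    · convert h.symV _ h1 using 1
      ext i; simp only [zeroC, Pi.neg_apply, Pi.add_apply]; split_ifs <;> ring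
    · convert h.symV _ h2 using 1
      ext i; simp only [zeroC, flipC, Pi.neg_apply, Pi.sub_apply]; split_ifs <;> ring
  dot := by
    rintro x ⟨s, h1, h2⟩ y ⟨w, h3, h4⟩
    have a1 := h.dot _ h1 _ h3
    have a2 := h.dot _ h2 _ h4
    have : ∑ i, x i * y i = (∑ i, setC j x (s + 2 * x j) i * (y + zeroC j w) i +
      ∑ i, setC j x s i * flipC j (y - zeroC j w) i) / 2 := by
      rw [← Finset.sum_add_distrib, Finset.sum_div]
      refine Finset.sum_congr rfl fun i _ => ?_
      simp only [setC, zeroC, flipC, Pi.add_apply, Pi.sub_apply]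
      split_ifs with hi
      · subst hi; ring
      · ring
    rw [this]; linarith

lemma stein_flip_new {n : ℕ} (j : Fin n) (U V : Set (Fin n → ℝ)) :
    (∀ x ∈ steinU j U, flipC j x ∈ steinU j U) ∧ (∀ x ∈ steinV j V, flipC j x ∈ steinV j V) := by
  constructor
  · rintro x ⟨s, h1, h2⟩
    refine ⟨s + 2 * x j, ?_, ?_⟩
    · convert h2 using 1
      ext i; simp only [setC, flipC]; split_ifs <;> simp_all
    · convert h1 using 1
      ext i; simp only [setC, flipC]; split_ifs <;> simp_all
  · rintro y ⟨w, h1, h2⟩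
    refine ⟨-w, ?_, ?_⟩
    · convert h2 using 1
      ext i; simp only [zeroC, flipC, Pi.add_apply, Pi.neg_apply, Pi.sub_apply]; split_ifs <;> ring
    · convert h1 using 1
      ext i; simp only [zeroC, flipC, Pi.add_apply, Pi.neg_apply, Pi.sub_apply]; split_ifs <;> ring

lemma stein_flip_old {n : ℕ} (j k : Fin n) (hk : k ≠ j) {U V : Set (Fin n → ℝ)}
    (hU : ∀ x ∈ U, flipC k x ∈ U) (hV : ∀ x ∈ V, flipC k x ∈ V) :
    (∀ x ∈ steinU j U, flipC k x ∈ steinU j U) ∧ (∀ x ∈ steinV j V, flipC k x ∈ steinV j V) := by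
  constructor
  · rintro x ⟨s, h1, h2⟩
    refine ⟨s, ?_, ?_⟩
    · convert hU _ h1 using 1
      ext i; simp only [setC, flipC]; split_ifs <;> simp_all
    · convert hU _ h2 using 1
      ext i; simp only [setC, flipC]; split_ifs <;> simp_all
  · rintro y ⟨w, h1, h2⟩
    refine ⟨flipC k w, ?_, ?_⟩
    · convert hV _ h1 using 1
      ext i; simp only [zeroC, flipC, Pi.add_apply, Pi.sub_apply]
      split_ifs <;> ring
    · convert hV _ h2 using 1
      ext i; simp only [zeroC, flipC, Pi.add_apply, Pi.sub_apply]
      split_ifs <;> ring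

lemma plop_sets {n : ℕ} {A B C : Set (Fin n → ℝ)} (hA : MeasurableSet A) (hB : MeasurableSet B)
    (hC : MeasurableSet C) (h : ∀ a ∈ A, ∀ b ∈ B, (fun i => (a i + b i) / 2) ∈ C) :
    volume A * volume B ≤ volume C ^ 2 := by
  classical
  have := plop_pi plop_add n (A.indicator 1) (B.indicator 1) (C.indicator 1)
    (measurable_one.indicator hA) (measurable_one.indicator hB) (measurable_one.indicator hC)
    (by
      intro s t
      by_cases hs : s ∈ A
      · by_cases ht : t ∈ B
        · simp [hs, ht, h s hs t ht]
        · simp [ht]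
      · simp [hs])
  rwa [lintegral_indicator_one hA, lintegral_indicator_one hB, lintegral_indicator_one hC] at this

lemma bm_sets1 {A B C : Set ℝ} (hA : MeasurableSet A) (hB : MeasurableSet B)
    (hC : MeasurableSet C) (h : ∀ a ∈ A, ∀ b ∈ B, (a + b) / 2 ∈ C) :
    volume A * volume B ≤ volume C ^ 2 := by
  classical
  have := plop_add (A.indicator 1) (B.indicator 1) (C.indicator 1)
    (measurable_one.indicator hA) (measurable_one.indicator hB) (measurable_one.indicator hC)
    (by
      intro s t
      by_cases hs : s ∈ A
      · by_cases ht : t ∈ B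
        · simp [hs, ht, h s hs t ht]
        · simp [ht]
      · simp [hs])
  rwa [lintegral_indicator_one hA, lintegral_indicator_one hB, lintegral_indicator_one hC] at this

lemma stein_vol {n : ℕ} (j : Fin (n+1)) {U V : Set (Fin (n+1) → ℝ)} (h : PolarPair U V) :
    volume U ≤ volume (steinU j U) ∧ volume V ≤ volume (steinV j V) := by
  have h' := stein_polar j h
  have e := (volume_preserving_piFinSuccAbove (fun _ : Fin (n+1) => ℝ) j).symm
  have hc : ∀ p : ℝ × (Fin n → ℝ), (MeasurableEquiv.piFinSuccAbove (fun _ : Fin (n+1) => ℝ) j).symm p =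
      (Fin.insertNth j p.1 p.2 : Fin (n+1) → ℝ) := fun p => rfl
  have m0 : Measurable (fun p : ℝ × (Fin n → ℝ) => (Fin.insertNth j p.1 p.2 : Fin (n+1) → ℝ)) := 
      e.measurable
  have ma : ∀ X, Measurable (fun s : ℝ => (Fin.insertNth j s X : Fin (n+1) → ℝ)) := fun X =>
    m0.comp measurable_prodMk_right
  have mb : ∀ s : ℝ, Measurable (fun X : Fin n → ℝ => (Fin.insertNth j s X : Fin (n+1) → ℝ)) :=
    fun s => m0.comp measurable_prodMk_left
  have E1 : ∀ S : Set (Fin (n+1) → ℝ), MeasurableSet S → volume S =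
      ∫⁻ X : Fin n → ℝ, volume {s : ℝ | (Fin.insertNth j s X : Fin (n+1) → ℝ) ∈ S} := by
    intro S hS
    rw [← e.measure_preimage hS.nullMeasurableSet]
    exact Measure.prod_apply_symm (hS.preimage m0)
  have E2 : ∀ S : Set (Fin (n+1) → ℝ), MeasurableSet S → volume S =
      ∫⁻ s : ℝ, volume {X : Fin n → ℝ | (Fin.insertNth j s X : Fin (n+1) → ℝ) ∈ S} := by
    intro S hS
    rw [← e.measure_preimage hS.nullMeasurableSet]
    exact Measure.prod_apply (hS.preimage m0)
  constructor
  · rw [E1 U h.openU.measurableSet, E1 _ h'.openU.measurableSet]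
    refine lintegral_mono fun X => ?_
    set A := {s : ℝ | (Fin.insertNth j s X : Fin (n+1) → ℝ) ∈ U} with hA
    have mA : MeasurableSet A := h.openU.measurableSet.preimage (ma X)
    have := bm_sets1 (A := A) (B := Neg.neg ⁻¹' A)
      (C := {s : ℝ | (Fin.insertNth j s X : Fin (n+1) → ℝ) ∈ steinU j U}) mA
      (mA.preimage measurable_neg) (h'.openU.measurableSet.preimage (ma X))
      (by
        intro a ha b hb
        refine ⟨-b, ?_, ?_⟩
        · have ha' : (Fin.insertNth j a X : Fin (n+1) → ℝ) ∈ U := ha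
          convert ha' using 1
          ext i
          refine Fin.succAboveCases j ?_ (fun i => ?_) i
          · simp [setC]; ring
          · simp [setC, Fin.succAbove_ne]
        · have hb' : (Fin.insertNth j (-b) X : Fin (n+1) → ℝ) ∈ U := hb
          convert hb' using 1
          ext i
          refine Fin.succAboveCases j ?_ (fun i => ?_) i
          · simp [setC]
          · simp [setC, Fin.succAbove_ne])
    rw [Measure.measure_preimage_neg, ← sq] at this
    exact (ENNReal.pow_le_pow_left_iff (by norm_num)).1 this
  · rw [E2 V h.openV.measurableSet, E2 _ h'.openV.measurableSet]
    refine lintegral_mono fun t => ?_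
    set A := {X : Fin n → ℝ | (Fin.insertNth j t X : Fin (n+1) → ℝ) ∈ V} with hA
    have mA : MeasurableSet A := h.openV.measurableSet.preimage (mb t)
    have := plop_sets (A := A) (B := Neg.neg ⁻¹' A)
      (C := {X : Fin n → ℝ | (Fin.insertNth j t X : Fin (n+1) → ℝ) ∈ steinV j V}) mA
      (mA.preimage measurable_neg) (h'.openV.measurableSet.preimage (mb t))
      (by
        intro a ha b hb
        refine ⟨Fin.insertNth j 0 (fun i => (a i - b i) / 2), ?_, ?_⟩
        · have ha' : (Fin.insertNth j t a : Fin (n+1) → ℝ) ∈ V := ha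
          convert ha' using 1
          ext i
          refine Fin.succAboveCases j ?_ (fun i => ?_) i
          · simp [zeroC]
          · simp [zeroC, Fin.succAbove_ne]; ring
        · have := h.symV _ hb
          convert this using 1
          ext i
          refine Fin.succAboveCases j ?_ (fun i => ?_) i
          · simp [zeroC, flipC]
          · simp [zeroC, flipC, Fin.succAbove_ne]; ring)
    rw [Measure.measure_preimage_neg, ← sq] at this
    exact (ENNReal.pow_le_pow_left_iff (by norm_num)).1 this

lemma exists_uncond {n : ℕ} {U V : Set (Fin n → ℝ)} (h : PolarPair U V) (S : Finset (Fin n)) :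
    ∃ U' V', PolarPair U' V' ∧ volume U ≤ volume U' ∧ volume V ≤ volume V' ∧
      ∀ k ∈ S, (∀ x ∈ U', flipC k x ∈ U') ∧ (∀ x ∈ V', flipC k x ∈ V') := by
  classical
  induction S using Finset.induction_on with
  | empty => exact ⟨U, V, h, le_rfl, le_rfl, by simp⟩
  | insert j S hj ih =>
    obtain ⟨U', V', hp, hu, hv, hk⟩ := ih
    cases n with
    | zero => exact j.elim0
    | succ n =>
      obtain ⟨v1, v2⟩ := stein_vol j hp
      refine ⟨steinU j U', steinV j V', stein_polar j hp, hu.trans v1, hv.trans v2, ?_⟩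
      intro k hkS
      by_cases hkj : k = j
      · subst hkj; exact stein_flip_new k U' V'
      · have := Finset.mem_of_mem_insert_of_ne hkS hkj
        exact stein_flip_old j k hkj (hk k this).1 (hk k this).2

lemma uncond_abs {n : ℕ} {U : Set (Fin n → ℝ)} (h : ∀ k, ∀ x ∈ U, flipC k x ∈ U)
    (ε : Fin n → ℝ) (hε : ∀ i, ε i = 1 ∨ ε i = -1) (x : Fin n → ℝ) (hx : x ∈ U) :
    (fun i => ε i * x i) ∈ U := by
  classical
  have : ∀ S : Finset (Fin n), (fun i => if i ∈ S then ε i * x i else x i) ∈ U := by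
    intro S
    induction S using Finset.induction_on with
    | empty => simpa using hx
    | insert j S hj ih =>
      rcases hε j with h1 | h1
      · convert ih using 1
        ext i
        by_cases hij : i = j
        · subst hij; simp [h1]
        · simp [hij]
      · convert h j _ ih using 1
        ext i
        by_cases hij : i = j
        · subst hij; simp [h1, flipC, hj]
        · simp [hij, flipC]
  simpa using this Finset.univ

lemma santalo_pi {n : ℕ} {U V : Set (Fin n → ℝ)} (h : PolarPair U V) :
    volume U * volume V ≤ volume {z : Fin n → ℝ | ∑ i, z i ^ 2 ≤ 1} ^ 2 := by
  classical
  obtain ⟨U', V', hp, hu, hv, hk⟩ := exists_uncond h Finset.univ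
  refine (mul_le_mul' hu hv).trans ?_
  have hkU : ∀ k, ∀ x ∈ U', flipC k x ∈ U' := fun k => (hk k (Finset.mem_univ k)).1
  have hkV : ∀ k, ∀ x ∈ V', flipC k x ∈ V' := fun k => (hk k (Finset.mem_univ k)).2
  have hsg : ∀ s : ℝ, ∃ e : ℝ, (e = 1 ∨ e = -1) ∧ |s| = e * s := by
    intro s
    rcases abs_choice s with h | h
    · exact ⟨1, Or.inl rfl, by rw [h]; ring⟩
    · exact ⟨-1, Or.inr rfl, by rw [h]; ring⟩
  choose e he1 he2 using hsg
  have e_sq : ∀ s, e s * e s = 1 := by intro s; rcases he1 s with h | h <;> rw [h] <;> norm_num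
  have mp : MeasurePreserving (fun (x : Fin n → ℝ) i => |x i|) volume
      (Measure.pi fun _ : Fin n => nuAbs) := measurePreserving_pi _ _ (fun _ => mp_abs)
  have inv : ∀ W : Set (Fin n → ℝ), (∀ k, ∀ x ∈ W, flipC k x ∈ W) → MeasurableSet W →
      volume W = (Measure.pi fun _ : Fin n => nuAbs) W := by
    intro W hW mW
    rw [← mp.measure_preimage mW.nullMeasurableSet]
    congr 1
    ext x
    constructor
    · intro hx
      have := uncond_abs hW (fun i => e (x i)) (fun i => he1 _) x hx
      simpa [← he2] using this
    · intro hx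
      have := uncond_abs hW (fun i => e (x i)) (fun i => he1 _) _ hx
      convert this using 1
      ext i
      change x i = e (x i) * |x i|
      rw [he2, ← mul_assoc, e_sq, one_mul]
  have mB : MeasurableSet {z : Fin n → ℝ | ∑ i, z i ^ 2 ≤ 1} :=
    measurableSet_le (by fun_prop) measurable_const
  rw [inv U' hkU hp.openU.measurableSet, inv V' hkV hp.openV.measurableSet, inv _ _ mB]
  · have := plop_pi plop_mul n (U'.indicator 1) (V'.indicator 1)
      ({z : Fin n → ℝ | ∑ i, z i ^ 2 ≤ 1}.indicator 1)
      (measurable_one.indicator hp.openU.measurableSet)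
      (measurable_one.indicator hp.openV.measurableSet) (measurable_one.indicator mB)
      (by
        intro s t
        by_cases hs : s ∈ U'
        · by_cases ht : t ∈ V'
          · have hz : (fun i => √|s i * t i|) ∈ {z : Fin n → ℝ | ∑ i, z i ^ 2 ≤ 1} := by
              have h1 := uncond_abs hkU (fun i => e (s i * t i)) (fun i => he1 _) s hs
              have := hp.dot _ h1 t ht
              change ∑ i, (√|s i * t i|) ^ 2 ≤ 1
              refine le_trans (le_of_eq ?_) this
              refine Finset.sum_congr rfl fun i _ => ?_
              rw [Real.sq_sqrt (abs_nonneg _), he2]; ring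
            rw [indicator_of_mem hs, indicator_of_mem ht, indicator_of_mem hz]; simp
          · simp [ht]
        · simp [hs])
    rwa [lintegral_indicator_one hp.openU.measurableSet,
      lintegral_indicator_one hp.openV.measurableSet, lintegral_indicator_one mB] at this
  · intro k x hx
    change ∑ i, (flipC k x i) ^ 2 ≤ 1
    refine le_trans (le_of_eq ?_) hx
    refine Finset.sum_congr rfl fun i _ => ?_
    simp only [flipC]; split_ifs <;> ring

/-- Jacobian matrix of `R` at `a`. -/
def jacM {n : ℕ} (R : Euc n → Euc n) (a : Euc n) : Matrix (Fin n) (Fin n) ℝ :=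
  LinearMap.toMatrix (EuclideanSpace.basisFun (Fin n) ℝ).toBasis
    (EuclideanSpace.basisFun (Fin n) ℝ).toBasis (fderiv ℝ R a : Euc n →ₗ[ℝ] Euc n)

def mapH {n : ℕ} (R : Euc n → Euc n) (σ τ : ℝ) (p : Euc n × Euc n) : Euc n × Euc n :=
  (p.1 + σ • R p.2, p.2 + τ • R p.1)

def dmapH {n : ℕ} (A B : Euc n →L[ℝ] Euc n) (σ τ : ℝ) :
    (Euc n × Euc n) →L[ℝ] (Euc n × Euc n) :=
  (ContinuousLinearMap.fst ℝ _ _ + σ • B.comp (ContinuousLinearMap.snd ℝ _ _)).prod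
    (ContinuousLinearMap.snd ℝ _ _ + τ • A.comp (ContinuousLinearMap.fst ℝ _ _))

lemma det_dmapH {n : ℕ} (A B : Euc n →L[ℝ] Euc n) (σ τ : ℝ) :
    (dmapH A B σ τ).det = Matrix.det (1 - (σ * τ) •
      (LinearMap.toMatrix (EuclideanSpace.basisFun (Fin n) ℝ).toBasis
        (EuclideanSpace.basisFun (Fin n) ℝ).toBasis (A : Euc n →ₗ[ℝ] Euc n) *
      LinearMap.toMatrix (EuclideanSpace.basisFun (Fin n) ℝ).toBasis
        (EuclideanSpace.basisFun (Fin n) ℝ).toBasis (B : Euc n →ₗ[ℝ] Euc n))) := by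
  set b := (EuclideanSpace.basisFun (Fin n) ℝ).toBasis with hb
  rw [ContinuousLinearMap.det, ← LinearMap.det_toMatrix (b.prod b)]
  have : LinearMap.toMatrix (b.prod b) (b.prod b) (dmapH A B σ τ : _ →ₗ[ℝ] _) =
      Matrix.fromBlocks 1 (σ • LinearMap.toMatrix b b (B : Euc n →ₗ[ℝ] Euc n))
        (τ • LinearMap.toMatrix b b (A : Euc n →ₗ[ℝ] Euc n)) 1 := by
    ext i j
    rcases i with i | i <;> rcases j with j | j <;>
      simp [LinearMap.toMatrix_apply, dmapH, hb, Matrix.one_apply]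
  rw [this, Matrix.det_fromBlocks_one₁₁]
  congr 2
  rw [Matrix.smul_mul, Matrix.mul_smul, smul_smul, mul_comm]

lemma hasFDerivAt_mapH {n : ℕ} {R : Euc n → Euc n} {σ τ : ℝ} {p : Euc n × Euc n}
    (h1 : DifferentiableAt ℝ R p.1) (h2 : DifferentiableAt ℝ R p.2) :
    HasFDerivAt (mapH R σ τ) (dmapH (fderiv ℝ R p.1) (fderiv ℝ R p.2) σ τ) p := by
  unfold mapH dmapH
  apply HasFDerivAt.prodMk
  · apply hasFDerivAt_fst.add
    exact (h2.hasFDerivAt.comp p hasFDerivAt_snd).const_smul σ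
  · apply hasFDerivAt_snd.add
    exact (h1.hasFDerivAt.comp p hasFDerivAt_fst).const_smul τ

lemma mapH_contr {n : ℕ} {R : Euc n → Euc n} (hR : LipschitzWith 1 R) {σ τ κ : ℝ}
    (hσ : |σ| ≤ κ) (hτ : |τ| ≤ κ) (p q : Euc n × Euc n) :
    dist (σ • R p.2, τ • R p.1) (σ • R q.2, τ • R q.1) ≤ κ * dist p q := by
  have hR' : ∀ x y, dist (R x) (R y) ≤ dist x y := fun x y => by simpa using hR.dist_le_mul x y
  have k0 : 0 ≤ κ := (abs_nonneg _).trans hσ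
  rw [Prod.dist_eq, max_le_iff]
  simp only [dist_smul₀, Real.norm_eq_abs]
  constructor
  · exact mul_le_mul hσ ((hR' _ _).trans (le_max_right _ _)) dist_nonneg k0
  · exact mul_le_mul hτ ((hR' _ _).trans (le_max_left _ _)) dist_nonneg k0

lemma mapH_bij {n : ℕ} {R : Euc n → Euc n} (hR : LipschitzWith 1 R) {σ τ : ℝ}
    (hσ : |σ| < 1) (hτ : |τ| < 1) : Function.Bijective (mapH R σ τ) := by
  set κ := max |σ| |τ|
  have k1 : κ < 1 := max_lt hσ hτ
  have k0 : 0 ≤ κ := (abs_nonneg _).trans (le_max_left _ _)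
  have hc := fun p q => mapH_contr hR (le_max_left |σ| |τ|) (le_max_right |σ| |τ|) p q
  have hH : ∀ p, mapH R σ τ p = p + (σ • R p.2, τ • R p.1) := fun p => rfl
  constructor
  · intro p q h
    rw [hH, hH] at h
    have h1 := hc p q
    have h2 : p - q = (σ • R q.2, τ • R q.1) - (σ • R p.2, τ • R p.1) := by
      rw [sub_eq_sub_iff_add_eq_add, h, add_comm]
    rw [dist_comm, dist_eq_norm, ← h2, ← dist_eq_norm] at h1
    have : dist p q = 0 := by nlinarith [dist_nonneg (x := p) (y := q)]
    exact dist_eq_zero.1 this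
  · intro w
    have : ContractingWith κ.toNNReal (fun p : Euc n × Euc n => w - (σ • R p.2, τ • R p.1)) := by
      refine ⟨by rw [← Real.toNNReal_one]; exact (Real.toNNReal_lt_toNNReal_iff one_pos).2 k1, ?_⟩
      apply LipschitzWith.of_dist_le_mul
      intro p q
      rw [dist_sub_left, Real.coe_toNNReal _ k0]
      exact hc p q
    refine ⟨this.fixedPoint, ?_⟩
    have h := this.fixedPoint_isFixedPt
    rw [hH]
    exact (sub_eq_iff_eq_add.1 h.eq).symm

instance instHaarProd {n : ℕ} : (volume : Measure (Euc n × Euc n)).IsAddHaarMeasure :=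
  inferInstanceAs ((volume : Measure (Euc n)).prod (volume : Measure (Euc n))).IsAddHaarMeasure

lemma lip_null {n : ℕ} {f : Euc n × Euc n → Euc n × Euc n} {C : NNReal} (hf : LipschitzWith C f)
    {s : Set (Euc n × Euc n)} (hs : volume s = 0) : volume (f '' s) = 0 := by
  set d := Module.finrank ℝ (Euc n × Euc n)
  have h1 : (Measure.hausdorffMeasure (d : ℝ) : Measure (Euc n × Euc n)) ≪ volume :=
    Measure.absolutelyContinuous_isAddHaarMeasure _ _
  have h2 : (volume : Measure (Euc n × Euc n)) ≪ Measure.hausdorffMeasure (d : ℝ) :=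
    Measure.absolutelyContinuous_isAddHaarMeasure _ _
  apply h2
  have := hf.hausdorffMeasure_image_le (d := d) (by positivity) s
  rw [h1 hs, mul_zero] at this
  exact le_antisymm this bot_le

lemma mapH_lip {n : ℕ} {R : Euc n → Euc n} (hR : LipschitzWith 1 R) {σ τ : ℝ}
    (hσ : |σ| < 1) (hτ : |τ| < 1) : LipschitzWith 2 (mapH R σ τ) := by
  apply LipschitzWith.of_dist_le_mul
  intro p q
  have h1 := mapH_contr hR hσ.le hτ.le p q
  have hH : ∀ p, mapH R σ τ p = p + (σ • R p.2, τ • R p.1) := fun p => rfl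
  rw [hH, hH]
  refine (dist_add_add_le _ _ _ _).trans ?_
  have : ((2 : NNReal) : ℝ) = 2 := rfl
  rw [this]
  linarith

/-- change of variables -/
lemma cov_mapH {n : ℕ} {R : Euc n → Euc n} (hR : LipschitzWith 1 R) {σ τ : ℝ}
    (hσ : |σ| < 1) (hτ : |τ| < 1) (F : Euc n × Euc n → ℝ≥0∞) :
    ∫⁻ p, ENNReal.ofReal |Matrix.det (1 - (σ * τ) • (jacM R p.1 * jacM R p.2))| * F (mapH R σ τ p)
      = ∫⁻ p, F p := by
  set D : Set (Euc n) := {a | DifferentiableAt ℝ R a} with hD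
  have mD : MeasurableSet D := measurableSet_of_differentiableAt ℝ R
  have hae : ∀ᵐ a : Euc n, a ∈ D := hR.ae_differentiableAt
  have hs : ∀ᵐ p : Euc n × Euc n, p ∈ D ×ˢ D := by
    have h1 : ∀ᵐ p : Euc n × Euc n, p.1 ∈ D := Measure.quasiMeasurePreserving_fst.ae hae
    have h2 : ∀ᵐ p : Euc n × Euc n, p.2 ∈ D := Measure.quasiMeasurePreserving_snd.ae hae
    filter_upwards [h1, h2] with p a b using ⟨a, b⟩
  have bij := mapH_bij hR hσ hτ
  have hnull : volume (D ×ˢ D)ᶜ = 0 := hs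
  have himg : ∀ᵐ p : Euc n × Euc n, p ∈ mapH R σ τ '' (D ×ˢ D) := by
    have := lip_null (mapH_lip hR hσ hτ) hnull
    rw [image_compl_eq bij] at this
    exact this
  have key := lintegral_image_eq_lintegral_abs_det_fderiv_mul volume (mD.prod mD)
    (f := mapH R σ τ) (f' := fun p => dmapH (fderiv ℝ R p.1) (fderiv ℝ R p.2) σ τ)
    (fun p hp => (hasFDerivAt_mapH hp.1 hp.2).hasFDerivWithinAt) bij.1.injOn F
  rw [Measure.restrict_eq_self_of_ae_mem himg, Measure.restrict_eq_self_of_ae_mem hs] at key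
  rw [key]
  simp only [det_dmapH]
  rfl

lemma measurable_jacM {n : ℕ} (R : Euc n → Euc n) (i j : Fin n) :
    Measurable fun a => jacM R a i j := by
  have := measurable_fderiv_apply_const ℝ R (EuclideanSpace.basisFun (Fin n) ℝ j)
  have h2 : Measurable (fun x : Euc n => x i) := (EuclideanSpace.proj (𝕜 := ℝ) i).continuous.measurable
  have h3 : (fun a => jacM R a i j) = fun a => (fderiv ℝ R a (EuclideanSpace.basisFun (Fin n) ℝ j)) i := by
    ext a; simp [jacM, LinearMap.toMatrix_apply]
  rw [h3]
  exact h2.comp this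

lemma abs_jacM_le {n : ℕ} {R : Euc n → Euc n} (hR : LipschitzWith 1 R) (a : Euc n) (i j : Fin n) :
    |jacM R a i j| ≤ 1 := by
  have h3 : jacM R a i j = (fderiv ℝ R a (EuclideanSpace.basisFun (Fin n) ℝ j)) i := by
    simp [jacM, LinearMap.toMatrix_apply]
  rw [h3, ← Real.norm_eq_abs]
  refine (PiLp.norm_apply_le _ i).trans ?_
  refine ((fderiv ℝ R a).le_opNorm _).trans ?_
  have : ‖fderiv ℝ R a‖ ≤ 1 := by simpa using norm_fderiv_le_of_lipschitz ℝ hR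
  simpa using this

/-- product Jacobian entries -/
def jacC {n : ℕ} (R : Euc n → Euc n) (p : Euc n × Euc n) : Matrix (Fin n) (Fin n) ℝ :=
  jacM R p.1 * jacM R p.2

lemma measurable_jacC {n : ℕ} (R : Euc n → Euc n) (i j : Fin n) :
    Measurable fun p => jacC R p i j := by
  simp only [jacC, Matrix.mul_apply]
  exact Finset.measurable_fun_sum _ fun k _ =>
    ((measurable_jacM R i k).comp measurable_fst).mul ((measurable_jacM R k j).comp measurable_snd)

lemma abs_jacC_le {n : ℕ} {R : Euc n → Euc n} (hR : LipschitzWith 1 R) (p : Euc n × Euc n)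
    (i j : Fin n) : |jacC R p i j| ≤ n := by
  simp only [jacC, Matrix.mul_apply]
  refine (Finset.abs_sum_le_sum_abs _ _).trans ?_
  refine (Finset.sum_le_card_nsmul _ _ 1 ?_).trans (by simp)
  intro k _
  rw [abs_mul]
  exact mul_le_one₀ (abs_jacM_le hR _ _ _) (abs_nonneg _) (abs_jacM_le hR _ _ _)

lemma differentiableOn_param {α : Type*} [MeasurableSpace α] {μ : Measure α} {U : Set ℂ}
    (hU : IsOpen U) {F : ℂ → α → ℂ} {bound : α → ℝ}
    (hm : ∀ t ∈ U, AEStronglyMeasurable (F t) μ)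
    (hb : ∀ t ∈ U, ∀ p, ‖F t p‖ ≤ bound p) (hbi : Integrable bound μ)
    (hd : ∀ p, DifferentiableOn ℂ (fun t => F t p) U) :
    DifferentiableOn ℂ (fun t => ∫ p, F t p ∂μ) U := by
  intro t0 ht0
  obtain ⟨δ, δ0, hδ⟩ := Metric.isOpen_iff.1 hU t0 ht0
  have hsub : ∀ t ∈ ball t0 (δ/2), closedBall t (δ/4) ⊆ U := by
    intro t ht z hz
    apply hδ
    rw [mem_ball] at ht ⊢
    rw [mem_closedBall] at hz
    have := dist_triangle z t t0
    linarith
  have hda : ∀ p, ∀ t ∈ U, HasDerivAt (F · p) (deriv (F · p) t) t := fun p t ht =>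
    ((hd p).differentiableAt (hU.mem_nhds ht)).hasDerivAt
  have key := hasDerivAt_integral_of_dominated_loc_of_deriv_le (𝕜 := ℂ) (μ := μ) (F := F) (x₀ := t0)
    (s := ball t0 (δ/2)) (bound := fun p => bound p / (δ/4))
    (F' := fun t p => deriv (F · p) t) (ball_mem_nhds _ (by positivity))
    (by filter_upwards [hU.mem_nhds ht0] with t ht using hm t ht)
    (hbi.mono' (hm _ ht0) (Filter.Eventually.of_forall (hb _ ht0)))
    ?_ ?_ (hbi.div_const _) ?_
  · exact key.2.differentiableAt.differentiableWithinAt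
  · -- measurability of the derivative
    have hseq : Filter.Tendsto (fun k : ℕ => ((1 / ((k:ℝ) + 1) : ℝ) : ℂ)) Filter.atTop (nhdsWithin 0 {0}ᶜ) := by
      rw [tendsto_nhdsWithin_iff]
      constructor
      · have := tendsto_one_div_add_atTop_nhds_zero_nat (𝕜 := ℝ)
        have h2 := (Complex.continuous_ofReal.tendsto 0).comp this
        rw [Complex.ofReal_zero] at h2
        exact h2
      · filter_upwards with k
        simp only [mem_compl_iff, mem_singleton_iff, Complex.ofReal_eq_zero]
        positivity
    have hin : ∀ᶠ k : ℕ in Filter.atTop, t0 + ((1 / ((k:ℝ) + 1) : ℝ) : ℂ) ∈ U := by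
      have h1 := (tendsto_nhdsWithin_iff.1 hseq).1
      have h2 := h1.const_add t0
      rw [add_zero] at h2
      exact h2.eventually (hU.mem_nhds ht0)
    obtain ⟨k0, hk0⟩ := Filter.eventually_atTop.1 hin
    apply aestronglyMeasurable_of_tendsto_ae Filter.atTop
      (f := fun (k : ℕ) p => (((1 / (((k + k0 : ℕ):ℝ) + 1) : ℝ) : ℂ))⁻¹ • (F (t0 + ((1 / (((k + k0 : ℕ):ℝ) + 1) : ℝ) : ℂ)) p - F t0 p))
    · intro k
      exact ((hm _ (hk0 (k + k0) (by omega))).sub (hm _ ht0)).const_smul ((((1 / (((k + k0 : ℕ):ℝ) + 1) : ℝ) : ℂ))⁻¹)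
    · filter_upwards with p
      have h := (hasDerivAt_iff_tendsto_slope_zero.1 (hda p t0 ht0)).comp hseq
      exact h.comp (Filter.tendsto_add_atTop_nat k0)
  · filter_upwards with p t ht
    apply Complex.norm_deriv_le_of_forall_mem_sphere_norm_le (by positivity)
    · exact ((hd p).mono (hsub t ht)).diffContOnCl_ball Subset.rfl
    · intro z hz
      exact hb z (hsub t ht (sphere_subset_closedBall hz)) p
  · filter_upwards with p t ht
    exact hda p t (hsub t ht (mem_closedBall_self (by positivity)))

def QQ {n : ℕ} (p : Euc n × Euc n) : ℝ := ‖p.1‖^2 + ‖p.2‖^2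
def WW {n : ℕ} (R : Euc n → Euc n) (p : Euc n × Euc n) : ℝ := ‖R p.1‖^2 + ‖R p.2‖^2
def XX {n : ℕ} (R : Euc n → Euc n) (p : Euc n × Euc n) : ℝ := ⟪p.2, R p.1⟫ - ⟪p.1, R p.2⟫

def detC {n : ℕ} (R : Euc n → Euc n) (t : ℂ) (p : Euc n × Euc n) : ℂ :=
  Matrix.det (1 + t^2 • (jacC R p).map (fun x : ℝ => (x : ℂ)))

def Fc {n : ℕ} (R : Euc n → Euc n) (t : ℂ) (p : Euc n × Euc n) : ℂ :=
  Complex.exp (-((QQ p : ℂ) + 2 * t * (XX R p : ℂ) + t^2 * (WW R p : ℂ))) * detC R t p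

lemma detC_diff {n : ℕ} (R : Euc n → Euc n) (p : Euc n × Euc n) :
    Differentiable ℂ (fun t => detC R t p) := by
  simp only [detC, Matrix.det_apply]
  apply Differentiable.fun_sum
  intro σ _
  apply Differentiable.fun_const_smul
  apply Differentiable.fun_finsetProd
  intro i _
  simp only [Matrix.add_apply, Matrix.smul_apply]
  fun_prop

lemma detC_meas {n : ℕ} (R : Euc n → Euc n) (t : ℂ) : Measurable (fun p => detC R t p) := by
  simp only [detC, Matrix.det_apply]
  apply Finset.measurable_fun_sum
  intro σ _
  apply Measurable.const_smul
  apply Finset.measurable_fun_prod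
  intro i _
  simp only [Matrix.add_apply, Matrix.smul_apply, Matrix.map_apply]
  have := measurable_jacC R (σ i) i
  exact measurable_const.add ((Complex.measurable_ofReal.comp this).const_smul (t^2))

lemma detC_bound {n : ℕ} {R : Euc n → Euc n} (hR : LipschitzWith 1 R) {t : ℂ} (ht : ‖t‖ ≤ 3)
    (p : Euc n × Euc n) :
    ‖detC R t p‖ ≤ n.factorial * (1 + 9 * n : ℝ) ^ n := by
  have := Matrix.det_le (A := (1 + t^2 • (jacC R p).map (fun x : ℝ => (x : ℂ))))
    (abv := NormedField.toAbsoluteValue ℂ) (x := (1 + 9 * n : ℝ)) ?_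
  · simpa [detC] using! this
  · intro i j
    change ‖(1 + t^2 • (jacC R p).map (fun x : ℝ => (x : ℂ)) : Matrix (Fin n) (Fin n) ℂ) i j‖ ≤ _
    simp only [Matrix.add_apply, Matrix.smul_apply, Matrix.map_apply, smul_eq_mul]
    refine (norm_add_le _ _).trans (add_le_add ?_ ?_)
    · rw [Matrix.one_apply]; split_ifs <;> simp
    · rw [norm_mul, norm_pow, Complex.norm_real]
      have h1 := abs_jacC_le hR p i j
      have h2 : ‖t‖^2 ≤ 9 := by nlinarith [norm_nonneg t]
      exact mul_le_mul h2 h1 (norm_nonneg _) (by norm_num)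

lemma exp_bound {n : ℕ} {R : Euc n → Euc n} {c : ℝ} (c0 : 0 < c) (c1 : c ≤ 1)
    (hc : ∀ a, c * ‖a‖^2 ≤ ‖a‖^2 - ‖R a‖^2) {t : ℂ} (h1 : |t.re| < c/10) (h2 : |t.im| < 1 + c/10)
    (p : Euc n × Euc n) :
    c/2 * QQ p ≤ ((QQ p : ℂ) + 2 * t * (XX R p : ℂ) + t^2 * (WW R p : ℂ)).re := by
  have e : ((QQ p : ℂ) + 2 * t * (XX R p : ℂ) + t^2 * (WW R p : ℂ)).re =
      QQ p + 2 * t.re * XX R p + (t.re^2 - t.im^2) * WW R p := by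
    simp [pow_two]
  rw [e]
  have hle : ∀ a, ‖R a‖ ≤ ‖a‖ := fun a => by
    have := hc a
    have h' : 0 ≤ c * ‖a‖^2 := by positivity
    exact abs_le_of_sq_le_sq' (by linarith) (norm_nonneg a) |>.2
  have hX : |XX R p| ≤ QQ p := by
    unfold XX QQ
    have i1 := abs_real_inner_le_norm p.2 (R p.1)
    have i2 := abs_real_inner_le_norm p.1 (R p.2)
    have i3 := abs_sub ⟪p.2, R p.1⟫ ⟪p.1, R p.2⟫
    have i4 := mul_le_mul_of_nonneg_left (hle p.1) (norm_nonneg p.2)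
    have i5 := mul_le_mul_of_nonneg_left (hle p.2) (norm_nonneg p.1)
    nlinarith [sq_nonneg (‖p.1‖ - ‖p.2‖)]
  have hW : WW R p ≤ (1 - c) * QQ p := by
    unfold WW QQ
    have := hc p.1; have := hc p.2
    linarith
  have hW0 : 0 ≤ WW R p := by unfold WW; positivity
  have hQ0 : 0 ≤ QQ p := by unfold QQ; positivity
  have a1 : |t.re * XX R p| ≤ c/10 * QQ p := by
    rw [abs_mul]; exact mul_le_mul h1.le hX (abs_nonneg _) (by positivity)
  have a2 := (abs_le.1 a1).1
  have a3 : t.im^2 ≤ (1+c/10)^2 := by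
    rw [← sq_abs]; exact pow_le_pow_left₀ (abs_nonneg _) h2.le 2
  have a4 : t.im^2 * WW R p ≤ (1+c/10)^2 * ((1-c) * QQ p) :=
    mul_le_mul a3 hW hW0 (by positivity)
  have a5 : 0 ≤ t.re^2 * WW R p := by positivity
  have a6 : (1+c/10)^2 * (1-c) ≤ 1 - c * (7/10) := by nlinarith [mul_pos c0 c0, mul_pos c0 (mul_pos c0 c0)]
  have a7 := mul_le_mul_of_nonneg_right a6 hQ0
  nlinarith

lemma gauss_int {n : ℕ} {c : ℝ} (c0 : 0 < c) :
    Integrable (fun p : Euc n × Euc n => Real.exp (-(c * QQ p))) := by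
  have h1 : Integrable (fun v : Euc n => Real.exp (-(c * ‖v‖^2))) := by
    have := (GaussianFourier.integrable_cexp_neg_mul_sq_norm_add (V := Euc n) (b := (c:ℂ))
      (by simpa using c0) 0 0).norm
    refine this.congr (Filter.Eventually.of_forall fun v => ?_)
    simp only [Complex.norm_exp]
    congr 1
    have : (-(c:ℂ) * (‖v‖:ℂ)^2 + 0 * ((⟪(0 : Euc n), v⟫ : ℝ) : ℂ)) = ((-(c * ‖v‖^2) : ℝ) : ℂ) := by
      push_cast; ring
    rw [this, Complex.ofReal_re]
  have := h1.mul_prod h1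
  refine this.congr (Filter.Eventually.of_forall fun p => ?_)
  simp only [QQ]
  rw [← Real.exp_add]; congr 1; ring

lemma Fc_bound {n : ℕ} {R : Euc n → Euc n} (hR : LipschitzWith 1 R) {c : ℝ} (c0 : 0 < c) (c1 : c ≤ 1)
    (hc : ∀ a, c * ‖a‖^2 ≤ ‖a‖^2 - ‖R a‖^2) {t : ℂ} (h1 : |t.re| < c/10) (h2 : |t.im| < 1 + c/10)
    (p : Euc n × Euc n) :
    ‖Fc R t p‖ ≤ n.factorial * (1 + 9 * n : ℝ) ^ n * Real.exp (-(c/2 * QQ p)) := by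
  have h3 : ‖t‖ ≤ 3 := by
    refine (Complex.norm_le_abs_re_add_abs_im t).trans (by linarith)
  rw [Fc, norm_mul, mul_comm, Complex.norm_exp]
  refine mul_le_mul (detC_bound hR h3 p) ?_ (Real.exp_nonneg _) (by positivity)
  rw [Real.exp_le_exp, Complex.neg_re]
  exact neg_le_neg (exp_bound c0 c1 hc h1 h2 p)

lemma Fc_meas {n : ℕ} {R : Euc n → Euc n} (hR : LipschitzWith 1 R) (t : ℂ) :
    Measurable (Fc R t) := by
  unfold Fc
  have hc := hR.continuous
  refine Measurable.mul ?_ (detC_meas R t)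
  apply Continuous.measurable
  unfold QQ XX WW
  fun_prop

lemma det_pos_near (n : ℕ) : ∃ δ > 0, ∀ M : Matrix (Fin n) (Fin n) ℝ,
    (∀ i j, |M i j| ≤ δ) → 0 < Matrix.det (1 + M) := by
  have hcont : Continuous (fun f : Fin n → Fin n → ℝ => Matrix.det (1 + Matrix.of f)) := by
    apply Continuous.matrix_det
    exact continuous_const.add (continuous_id : Continuous (fun f : Fin n → Fin n → ℝ => f))
  have h0 : (0:ℝ) < (fun f : Fin n → Fin n → ℝ => Matrix.det (1 + Matrix.of f)) 0 := by
    have : (1 + Matrix.of (0 : Fin n → Fin n → ℝ)) = (1 : Matrix (Fin n) (Fin n) ℝ) := by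
      ext i j; simp
    simp only [this]; simp
  have := hcont.continuousAt.eventually (lt_mem_nhds h0)
  obtain ⟨δ, δ0, hδ⟩ := Metric.eventually_nhds_iff.1 this
  refine ⟨δ/2, by positivity, fun M hM => ?_⟩
  refine hδ (y := fun i j => M i j) ?_
  rw [dist_zero_right]
  refine lt_of_le_of_lt ?_ (half_lt_self δ0)
  rw [pi_norm_le_iff_of_nonneg (by positivity)]
  intro i
  rw [pi_norm_le_iff_of_nonneg (by positivity)]
  exact hM i

lemma Fc_real {n : ℕ} (R : Euc n → Euc n) (t : ℝ) (p : Euc n × Euc n) :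
    Fc R t p = ((Real.exp (-(QQ (mapH R (-t) t p))) *
      Matrix.det (1 - (-t * t) • (jacM R p.1 * jacM R p.2)) : ℝ) : ℂ) := by
  have e1 : QQ (mapH R (-t) t p) = QQ p + 2 * t * XX R p + t^2 * WW R p := by
    simp only [QQ, mapH, XX, WW]
    rw [@norm_add_sq ℝ, @norm_add_sq ℝ, inner_smul_right, inner_smul_right, norm_smul, norm_smul]
    simp [mul_pow]
    ring
  have e2 : detC R t p = ((Matrix.det (1 - (-t * t) • (jacM R p.1 * jacM R p.2)) : ℝ) : ℂ) := by
    have := RingHom.map_det Complex.ofRealHom (1 - (-t * t) • (jacM R p.1 * jacM R p.2))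
    simp only [Complex.ofRealHom_eq_coe] at this
    rw [this, detC]
    congr 1
    ext i j
    simp [Matrix.one_apply, jacC]
    split_ifs <;> push_cast <;> ring
  rw [Fc, e1, e2]
  push_cast
  rfl

lemma Fc_integral_real {n : ℕ} {R : Euc n → Euc n} (hR : LipschitzWith 1 R) :
    ∃ δ > 0, ∀ t : ℝ, |t| < δ → ∫ p, Fc R t p = ((∫ p : Euc n × Euc n, Real.exp (-(QQ p)) : ℝ) : ℂ) := by
  obtain ⟨δ, δ0, hδ⟩ := det_pos_near n
  refine ⟨min (1/2) (δ / (n+1)), by positivity, fun t ht => ?_⟩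
  have t1 : |t| < 1/2 := lt_of_lt_of_le ht (min_le_left _ _)
  have t2 : |t| < δ/(n+1) := lt_of_lt_of_le ht (min_le_right _ _)
  have hpos : ∀ p : Euc n × Euc n, 0 < Matrix.det (1 - (-t * t) • (jacM R p.1 * jacM R p.2)) := by
    intro p
    have := hδ ((t*t) • jacC R p) ?_
    · convert! this using 2
      rw [jacC]; simp [sub_eq_add_neg]
    · intro i j
      simp only [Matrix.smul_apply, smul_eq_mul, abs_mul]
      have h1 := abs_jacC_le hR p i j
      have h2 : |t| * |t| ≤ δ/(n+1) := by nlinarith [abs_nonneg t]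
      calc |t| * |t| * |jacC R p i j| ≤ δ/(n+1) * (n+1) := by
            apply mul_le_mul h2 (by linarith) (abs_nonneg _) (by positivity)
        _ = δ := by field_simp
  simp only [Fc_real]
  rw [integral_complex_ofReal]
  congr 1
  rw [integral_eq_lintegral_of_nonneg_ae, integral_eq_lintegral_of_nonneg_ae]
  · congr 1
    rw [← cov_mapH hR (σ := -t) (τ := t) (by rw [abs_neg]; linarith) (by linarith)
      (fun p => ENNReal.ofReal (Real.exp (-(QQ p))))]
    apply lintegral_congr
    intro p
    rw [abs_of_pos (hpos p), mul_comm, ENNReal.ofReal_mul (hpos p).le]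
  · exact Filter.Eventually.of_forall fun p => (Real.exp_nonneg _)
  · apply Continuous.aestronglyMeasurable; unfold QQ; fun_prop
  · exact Filter.Eventually.of_forall fun p => mul_nonneg (Real.exp_nonneg _) (hpos p).le
  · have := (Complex.measurable_re.comp (Fc_meas hR t)).aestronglyMeasurable (μ := volume)
    refine this.congr (Filter.Eventually.of_forall fun p => ?_)
    simp only [Function.comp, Fc_real, Complex.ofReal_re]

theorem Fc_integral_I {n : ℕ} {R : Euc n → Euc n} (hR : LipschitzWith 1 R) {c : ℝ} (c0 : 0 < c)
    (c1 : c ≤ 1) (hc : ∀ a, c * ‖a‖^2 ≤ ‖a‖^2 - ‖R a‖^2) :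
    ∫ p, Fc R Complex.I p = ((∫ p : Euc n × Euc n, Real.exp (-(QQ p)) : ℝ) : ℂ) := by
  set Ω : Set ℂ := {t | |t.re| < c/10} ∩ {t | |t.im| < 1 + c/10} with hΩ
  have oΩ : IsOpen Ω := by
    apply IsOpen.inter
    · exact isOpen_lt (by fun_prop) continuous_const
    · exact isOpen_lt (by fun_prop) continuous_const
  have cΩ : Convex ℝ Ω := by
    apply Convex.inter
    · have : {t : ℂ | |t.re| < c/10} = Complex.reLm ⁻¹' (ball (0:ℝ) (c/10)) := by
        ext t; simp
      rw [this]; exact (convex_ball _ _).linear_preimage _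
    · have : {t : ℂ | |t.im| < 1 + c/10} = Complex.imLm ⁻¹' (ball (0:ℝ) (1 + c/10)) := by
        ext t; simp
      rw [this]; exact (convex_ball _ _).linear_preimage _
  have hd : DifferentiableOn ℂ (fun t => ∫ p, Fc R t p) Ω := by
    apply differentiableOn_param oΩ
      (bound := fun p => n.factorial * (1 + 9 * n : ℝ) ^ n * Real.exp (-(c/2 * QQ p)))
    · intro t _; exact (Fc_meas hR t).aestronglyMeasurable
    · intro t ht p; exact Fc_bound hR c0 c1 hc ht.1 ht.2 p
    · exact (gauss_int (by positivity)).const_mul _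
    · intro p
      apply Differentiable.differentiableOn
      unfold Fc
      exact Differentiable.mul (by fun_prop) (detC_diff R p)
  have ha := hd.analyticOnNhd oΩ
  have h0 : (0:ℂ) ∈ Ω := by constructor <;> simp <;> positivity
  have hI : Complex.I ∈ Ω := by constructor <;> simp <;> positivity
  have := ha.eqOn_of_preconnected_of_frequently_eq
    (g := fun _ => ((∫ p : Euc n × Euc n, Real.exp (-(QQ p)) : ℝ) : ℂ))
    analyticOnNhd_const cΩ.isPreconnected h0 ?_
  · exact this hI
  · obtain ⟨δ, δ0, hδ⟩ := Fc_integral_real hR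
    have hseq : Filter.Tendsto (fun k : ℕ => ((1 / ((k:ℝ) + 1) : ℝ) : ℂ)) Filter.atTop (nhdsWithin 0 {0}ᶜ) := by
      rw [tendsto_nhdsWithin_iff]
      constructor
      · have := tendsto_one_div_add_atTop_nhds_zero_nat (𝕜 := ℝ)
        have h2 := (Complex.continuous_ofReal.tendsto 0).comp this
        rw [Complex.ofReal_zero] at h2
        exact h2
      · filter_upwards with k
        simp only [mem_compl_iff, mem_singleton_iff, Complex.ofReal_eq_zero]
        positivity
    refine hseq.frequently ?_
    apply Filter.Eventually.frequently
    have := (tendsto_one_div_add_atTop_nhds_zero_nat (𝕜 := ℝ)).eventually (gt_mem_nhds δ0)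
    filter_upwards [this] with k hk
    exact hδ _ (by rw [abs_of_pos (by positivity)]; exact hk)

theorem bm_ineq {n : ℕ} {R : Euc n → Euc n} (hR : LipschitzWith 1 R) {c : ℝ} (c0 : 0 < c)
    (c1 : c ≤ 1) (hc : ∀ a, c * ‖a‖^2 ≤ ‖a‖^2 - ‖R a‖^2) :
    ∫⁻ p : Euc n × Euc n, ENNReal.ofReal (Real.exp (-(QQ p))) ≤
    ∫⁻ p : Euc n × Euc n, ENNReal.ofReal |Matrix.det (1 - jacM R p.1 * jacM R p.2)| *
      ENNReal.ofReal (Real.exp (-(QQ p - WW R p))) := by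
  have h1 := enorm_integral_le_lintegral_enorm (μ := volume) (Fc R Complex.I)
  rw [Fc_integral_I hR c0 c1 hc] at h1
  have hIntg : Integrable (fun p : Euc n × Euc n => Real.exp (-(QQ p))) := by
    simpa using gauss_int (n := n) one_pos
  have e1 : ‖((∫ p : Euc n × Euc n, Real.exp (-(QQ p)) : ℝ) : ℂ)‖ₑ =
      ∫⁻ p : Euc n × Euc n, ENNReal.ofReal (Real.exp (-(QQ p))) := by
    rw [← ofReal_integral_eq_lintegral_ofReal hIntg (Filter.Eventually.of_forall fun p => Real.exp_nonneg _)]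
    rw [← ofReal_norm_eq_enorm, Complex.norm_real, Real.norm_of_nonneg]
    exact integral_nonneg fun p => Real.exp_nonneg _
  rw [e1] at h1
  refine h1.trans (lintegral_mono fun p => le_of_eq ?_)
  rw [← ofReal_norm_eq_enorm, Fc, norm_mul, mul_comm, ENNReal.ofReal_mul (norm_nonneg _), Complex.norm_exp]
  have e2 : detC R Complex.I p = ((Matrix.det (1 - jacM R p.1 * jacM R p.2) : ℝ) : ℂ) := by
    have := RingHom.map_det Complex.ofRealHom (1 - jacM R p.1 * jacM R p.2)
    simp only [Complex.ofRealHom_eq_coe] at this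
    rw [this, detC]
    congr 1
    ext i j
    simp [Matrix.one_apply, jacC, sub_eq_add_neg]
    split_ifs <;> simp
  rw [e2, Complex.norm_real, Real.norm_eq_abs]
  congr 3
  simp [pow_two]
  ring

lemma sn_cont {n : ℕ} {p : Seminorm ℝ (Euc n)} {M : ℝ} (hM : ∀ v, p v ≤ M * ‖v‖) : Continuous p := by
  have h : LipschitzWith (Real.toNNReal M) p := by
    apply LipschitzWith.of_dist_le_mul
    intro x y
    rw [Real.dist_eq, dist_eq_norm]
    have h1 : |p x - p y| ≤ p (x - y) := abs_sub_map_le_sub p x y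
    refine h1.trans ((hM _).trans ?_)
    exact mul_le_mul_of_nonneg_right (Real.le_coe_toNNReal M) (norm_nonneg _)
  exact h.continuous

lemma nonneg_of_forall_small {D N : ℝ} (hN : 0 ≤ N) (h : ∀ t, 0 < t → t ≤ 1 → 0 ≤ D + t * N) : 0 ≤ D := by
  by_contra hD
  push Not at hD
  have := h (min 1 (-D / (2*(N+1)))) (by
    apply lt_min one_pos; apply div_pos (by linarith) (by linarith)) (min_le_left _ _)
  have h2 : min 1 (-D / (2*(N+1))) * N ≤ -D / (2*(N+1)) * N :=
    mul_le_mul_of_nonneg_right (min_le_right _ _) hN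
  have h3 : -D / (2*(N+1)) * N ≤ -D/2 := by
    rw [div_mul_eq_mul_div, div_le_div_iff₀ (by linarith) (by norm_num)]
    nlinarith
  linarith

lemma exists_prox {n : ℕ} {p : Seminorm ℝ (Euc n)} {m M : ℝ} (m0 : 0 < m)
    (hm : ∀ v, m * ‖v‖ ≤ p v) (hM : ∀ v, p v ≤ M * ‖v‖) (a : Euc n) :
    ∃ x y : Euc n, x + y = (2:ℝ) • a ∧ ∀ z, p x ^ 2 / 2 + ⟪y, z - x⟫ ≤ p z ^ 2 / 2 := by
  have hc := sn_cont hM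
  have hcont : Continuous (fun x => p x ^ 2 / 2 + ‖(2:ℝ) • a - x‖^2 / 2) := by fun_prop
  have hlim : Filter.Tendsto (fun x => p x ^ 2 / 2 + ‖(2:ℝ) • a - x‖^2 / 2)
      (Filter.cocompact (Euc n)) Filter.atTop := by
    have h1 : Filter.Tendsto (fun x : Euc n => (m^2/2) * ‖x‖^2) (Filter.cocompact (Euc n)) Filter.atTop := by
      apply Filter.Tendsto.const_mul_atTop (by positivity)
      exact (Filter.tendsto_pow_atTop (two_ne_zero)).comp (tendsto_norm_cocompact_atTop)
    refine Filter.tendsto_atTop_mono (fun x => ?_) h1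
    have h2 : (m * ‖x‖)^2 ≤ p x ^ 2 := pow_le_pow_left₀ (by positivity) (hm x) 2
    have h3 : 0 ≤ ‖(2:ℝ) • a - x‖^2 := by positivity
    nlinarith
  obtain ⟨x, hx⟩ := hcont.exists_forall_le hlim
  refine ⟨x, (2:ℝ) • a - x, by abel, fun z => ?_⟩
  set y := (2:ℝ) • a - x with hy
  have key : 0 ≤ (p z ^ 2 / 2 - p x ^ 2 / 2 - ⟪y, z - x⟫) := by
    apply nonneg_of_forall_small (N := ‖z - x‖^2/2) (by positivity)
    intro t t0 t1
    have h1 := hx (x + t • (z - x))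
    have e1 : (2:ℝ) • a - (x + t • (z - x)) = y - t • (z - x) := by rw [hy]; abel
    rw [e1, @norm_sub_sq ℝ _ _ _ _ y (t • (z - x)), RCLike.re_to_real, inner_smul_right, norm_smul, Real.norm_of_nonneg t0.le] at h1
    have h2 : p (x + t • (z - x)) ≤ (1 - t) * p x + t * p z := by
      have : x + t • (z - x) = (1 - t) • x + t • z := by
        rw [smul_sub, sub_smul, one_smul]; abel
      rw [this]
      refine (map_add_le_add p _ _).trans ?_
      rw [map_smul_eq_mul, map_smul_eq_mul, Real.norm_of_nonneg t0.le, Real.norm_of_nonneg (by linarith)]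
    have h3 : p (x + t • (z - x))^2 ≤ (1-t) * p x ^ 2 + t * p z ^2 := by
      refine (pow_le_pow_left₀ (apply_nonneg p _) h2 2).trans ?_
      nlinarith [mul_nonneg (mul_nonneg t0.le (sub_nonneg.2 t1)) (sq_nonneg (p x - p z))]
    have h4 : 0 ≤ t * ((p z ^ 2 / 2 - p x ^ 2 / 2 - ⟪y, z - x⟫) + t * (‖z - x‖^2/2)) := by nlinarith
    exact nonneg_of_mul_nonneg_right h4 t0
  linarith

lemma prox_facts {n : ℕ} {p : Seminorm ℝ (Euc n)} {x y : Euc n}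
    (h : ∀ z, p x ^ 2 / 2 + ⟪y, z - x⟫ ≤ p z ^ 2 / 2) :
    ⟪x, y⟫ = p x ^ 2 ∧ ∀ z, ⟪y, z⟫ ≤ p x * p z := by
  have e : ⟪x, y⟫ = p x ^ 2 := by
    rw [real_inner_comm]
    have hs : ∀ s : ℝ, 0 ≤ s * (p x ^ 2 - ⟪y, x⟫) + s^2 * (p x ^2/2) := by
      intro s
      have := h (x + s • x)
      rw [add_sub_cancel_left, inner_smul_right] at this
      have e1 : x + s • x = (1 + s) • x := by rw [add_smul, one_smul]
      rw [e1, map_smul_eq_mul, mul_pow, Real.norm_eq_abs, sq_abs] at this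
      nlinarith
    set A := p x ^ 2 - ⟪y, x⟫ with hA
    set B := p x ^ 2/2 with hB
    have B0 : 0 ≤ B := by positivity
    have := hs (-A/(2*B+1))
    have e2 : -A/(2*B+1) * A + (-A/(2*B+1))^2 * B = -(A^2 * (B+1)) / (2*B+1)^2 := by
      field_simp; ring
    rw [e2, le_div_iff₀ (by positivity)] at this
    have : A = 0 := by
      have h5 : A^2 * (B+1) ≤ 0 := by linarith
      have h6 : A^2 ≤ 0 := by nlinarith [mul_nonneg (sq_nonneg A) B0]
      exact pow_eq_zero_iff (two_ne_zero) |>.1 (le_antisymm h6 (sq_nonneg _))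
    linarith
  refine ⟨e, fun z => ?_⟩
  have hs : ∀ s : ℝ, 0 ≤ (p z ^2/2) * (s*s) + (-⟪y, z⟫) * s + p x ^ 2/2 := by
    intro s
    have := h (s • z)
    rw [inner_sub_right, inner_smul_right, real_inner_comm x y, e, map_smul_eq_mul, mul_pow, Real.norm_eq_abs, sq_abs] at this
    nlinarith
  have hd := discrim_le_zero hs
  unfold discrim at hd
  refine abs_le_of_sq_le_sq' ?_ (mul_nonneg (apply_nonneg p _) (apply_nonneg p _)) |>.2
  nlinarith

theorem exists_R {n : ℕ} {p q : Seminorm ℝ (Euc n)} {m M : ℝ} (m0 : 0 < m)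
    (hm : ∀ v, m * ‖v‖ ≤ p v) (M0 : 0 < M) (hM : ∀ v, p v ≤ M * ‖v‖)
    (hq : ∀ y s, 0 ≤ s → (∀ z, ⟪y, z⟫ ≤ s * p z) → q y ≤ s) :
    ∃ R : Euc n → Euc n, LipschitzWith 1 R ∧ (∃ c, 0 < c ∧ c ≤ 1 ∧ ∀ a, c * ‖a‖^2 ≤ ‖a‖^2 - ‖R a‖^2) ∧
      (∀ a, p (a + R a)^2 = ‖a‖^2 - ‖R a‖^2) ∧ (∀ a, q (a - R a)^2 ≤ ‖a‖^2 - ‖R a‖^2) := by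
  choose X Y hXY hsub using fun a => exists_prox m0 hm hM a
  have hX : ∀ a, a + (X a - a) = X a := fun a => by abel
  have hY : ∀ a, a - (X a - a) = Y a := fun a => by
    have := hXY a
    rw [two_smul] at this
    rw [eq_comm, ← sub_eq_zero]
    rw [← sub_eq_zero] at this
    rw [← this]; abel
  have hpol : ∀ u r : Euc n, ⟪u + r, u - r⟫ = ‖u‖^2 - ‖r‖^2 := by
    intro u r
    rw [inner_add_left, inner_sub_right, inner_sub_right, real_inner_self_eq_norm_sq,
      real_inner_self_eq_norm_sq, real_inner_comm u r]
    ring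
  have hin : ∀ a b, ‖a - b‖^2 - ‖(X a - a) - (X b - b)‖^2 = ⟪X a - X b, Y a - Y b⟫ := by
    intro a b
    rw [← hpol]
    congr 1
    · abel
    · rw [← hY a, ← hY b]; abel
  have hnn : ∀ a, ‖a‖^2 - ‖X a - a‖^2 = ⟪X a, Y a⟫ := by
    intro a
    rw [← hpol, hX, hY]
  have hf := fun a => prox_facts (hsub a)
  refine ⟨fun a => X a - a, ?_, ?_, ?_, ?_⟩
  · apply LipschitzWith.of_dist_le_mul
    intro a b
    rw [dist_eq_norm, dist_eq_norm, NNReal.coe_one, one_mul]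
    refine abs_le_of_sq_le_sq' ?_ (norm_nonneg _) |>.2
    have h1 := hsub a (X b)
    have h2 := hsub b (X a)
    have h3 : 0 ≤ ⟪X a - X b, Y a - Y b⟫ := by
      rw [real_inner_comm, inner_sub_left]
      have : ⟪Y a, X b - X a⟫ = - ⟪Y a, X a - X b⟫ := by rw [← inner_neg_right, neg_sub]
      linarith
    have := hin a b
    linarith
  · refine ⟨min 1 (4 / (1/m + M)^2), by positivity, min_le_left _ _, fun a => ?_⟩
    rw [hnn, (hf a).1]
    have p0 : 0 ≤ p (X a) := apply_nonneg p _
    have h1 : ‖X a‖ ≤ 1/m * p (X a) := by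
      rw [one_div, ← div_eq_inv_mul, le_div_iff₀ m0, mul_comm]; exact hm _
    have h2 : ‖Y a‖ ≤ M * p (X a) := by
      have := (hf a).2 (Y a)
      rw [real_inner_self_eq_norm_sq] at this
      have h3 := mul_le_mul_of_nonneg_left (hM (Y a)) p0
      by_contra hcon
      push Not at hcon
      have : 0 < ‖Y a‖ := lt_of_le_of_lt (by positivity) hcon
      nlinarith
    have h3 : 2 * ‖a‖ ≤ (1/m + M) * p (X a) := by
      have : ‖(2:ℝ) • a‖ ≤ ‖X a‖ + ‖Y a‖ := by rw [← hXY]; exact norm_add_le _ _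
      rw [norm_smul, Real.norm_of_nonneg two_pos.le] at this
      linarith
    have h4 : (2 * ‖a‖)^2 ≤ ((1/m + M) * p (X a))^2 := pow_le_pow_left₀ (by positivity) h3 2
    calc min 1 (4 / (1/m + M)^2) * ‖a‖^2 ≤ (4 / (1/m + M)^2) * ‖a‖^2 :=
          mul_le_mul_of_nonneg_right (min_le_right _ _) (by positivity)
      _ = (2 * ‖a‖)^2 / (1/m+M)^2 := by ring
      _ ≤ p (X a)^2 := by
          rw [div_le_iff₀ (by positivity)]; linarith
  · intro a
    rw [hX, hnn, (hf a).1]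
  · intro a
    rw [hY, hnn, (hf a).1]
    exact pow_le_pow_left₀ (apply_nonneg q _) (hq _ _ (apply_nonneg p _) (hf a).2) 2

lemma det_real_cont {n : ℕ} (C : Matrix (Fin n) (Fin n) ℝ) :
    Continuous (fun s : ℝ => Matrix.det (1 - s • C)) := by
  apply Continuous.matrix_det
  exact continuous_const.sub (continuous_id.smul continuous_const)

lemma det_real_meas {n : ℕ} (R : Euc n → Euc n) (s : ℝ) :
    Measurable (fun p : Euc n × Euc n => Matrix.det (1 - s • (jacM R p.1 * jacM R p.2))) := by
  simp only [Matrix.det_apply]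
  apply Finset.measurable_fun_sum
  intro σ _
  apply Measurable.const_smul
  apply Finset.measurable_fun_prod
  intro i _
  simp only [Matrix.sub_apply, Matrix.smul_apply]
  have := measurable_jacC R (σ i) i
  exact measurable_const.sub (this.const_smul s)

lemma fatou_mapH {n : ℕ} {R : Euc n → Euc n} (hR : LipschitzWith 1 R) {G : Euc n × Euc n → ℝ}
    (hG : Continuous G) :
    ∫⁻ p : Euc n × Euc n, ENNReal.ofReal |Matrix.det (1 - jacM R p.1 * jacM R p.2)| *
      ENNReal.ofReal (G (mapH R 1 1 p)) ≤ ∫⁻ p, ENNReal.ofReal (G p) := by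
  set ρ : ℕ → ℝ := fun k => 1 - 1 / ((k:ℝ) + 1) with hρ
  have hρ1 : Filter.Tendsto ρ Filter.atTop (nhds 1) := by
    have := (tendsto_one_div_add_atTop_nhds_zero_nat (𝕜 := ℝ)).const_sub 1
    rw [sub_zero] at this
    exact this
  have hρa : ∀ k, |ρ k| < 1 := by
    intro k
    have h1 : 0 < 1 / ((k:ℝ) + 1) := by positivity
    have h2 : 1 / ((k:ℝ) + 1) ≤ 1 := by
      rw [div_le_one (by positivity)]; linarith [Nat.cast_nonneg (α := ℝ) k]
    rw [abs_lt]; constructor <;> simp only [hρ] <;> linarith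
  have hRc := hR.continuous
  have hmapc : ∀ k, Continuous (mapH R (ρ k) (ρ k)) := by
    intro k; unfold mapH; fun_prop
  set f : ℕ → Euc n × Euc n → ℝ≥0∞ := fun k p =>
    ENNReal.ofReal |Matrix.det (1 - (ρ k * ρ k) • (jacM R p.1 * jacM R p.2))| *
      ENNReal.ofReal (G (mapH R (ρ k) (ρ k) p)) with hf
  have hlim : ∀ p, Filter.Tendsto (fun k => f k p) Filter.atTop
      (nhds (ENNReal.ofReal |Matrix.det (1 - jacM R p.1 * jacM R p.2)| *
      ENNReal.ofReal (G (mapH R 1 1 p)))) := by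
    intro p
    apply ENNReal.Tendsto.mul
    · apply ENNReal.tendsto_ofReal
      apply Filter.Tendsto.abs
      have h1 : Filter.Tendsto (fun k => ρ k * ρ k) Filter.atTop (nhds 1) := by
        simpa using hρ1.mul hρ1
      have := ((det_real_cont (jacM R p.1 * jacM R p.2)).tendsto 1).comp h1
      simpa [Function.comp_def] using this
    · right; exact ENNReal.ofReal_ne_top
    · apply ENNReal.tendsto_ofReal
      have hc : Continuous (fun s => G (mapH R s s p)) := by
        apply hG.comp; unfold mapH; fun_prop
      exact (hc.tendsto 1).comp hρ1
    · right; exact ENNReal.ofReal_ne_top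
  have hfm : ∀ k, Measurable (f k) := by
    intro k
    have h1 : Measurable (fun p : Euc n × Euc n => ENNReal.ofReal |Matrix.det (1 - (ρ k * ρ k) • (jacM R p.1 * jacM R p.2))|) :=
      ENNReal.measurable_ofReal.comp (continuous_abs.measurable.comp (det_real_meas R _))
    have h2 : Measurable (fun p : Euc n × Euc n => ENNReal.ofReal (G (mapH R (ρ k) (ρ k) p))) :=
      ENNReal.measurable_ofReal.comp (hG.comp (hmapc k)).measurable
    exact h1.mul h2
  have hF := lintegral_liminf_le (μ := (volume : Measure (Euc n × Euc n))) (f := f) (u := Filter.atTop) hfm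
  have hl : ∀ p, Filter.liminf (fun k => f k p) Filter.atTop = ENNReal.ofReal |Matrix.det (1 - jacM R p.1 * jacM R p.2)| *
      ENNReal.ofReal (G (mapH R 1 1 p)) := fun p => (hlim p).liminf_eq
  simp only [hl] at hF
  refine hF.trans ?_
  have hc : ∀ k, ∫⁻ p, f k p = ∫⁻ p, ENNReal.ofReal (G p) := fun k =>
    cov_mapH hR (hρa k) (hρa k) (fun p => ENNReal.ofReal (G p))
  simp only [hc]
  simp

lemma lint_half {n : ℕ} (b : Euc n) {f : Euc n → ℝ≥0∞} (hf : Measurable f) :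
    ∫⁻ a, f ((1/2:ℝ) • (a + b)) = 2 ^ n * ∫⁻ a, f a := by
  rw [lintegral_add_right_eq_self (fun a => f ((1/2:ℝ) • a)) b]
  rw [← lintegral_map hf (measurable_const_smul (1/2:ℝ)), Measure.map_addHaar_smul _ (by norm_num)]
  rw [lintegral_smul_measure]
  simp only [finrank_euclideanSpace, Fintype.card_fin, smul_eq_mul]
  congr 1
  rw [abs_of_pos (by positivity)]
  rw [one_div, inv_pow, inv_inv, ENNReal.ofReal_pow (by norm_num)]
  simp

lemma lint_rot {n : ℕ} {f g : Euc n → ℝ≥0∞} (hf : Measurable f) (hg : Measurable g) :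
    ∫⁻ p : Euc n × Euc n, f ((1/2:ℝ) • (p.1 + p.2)) * g ((1/2:ℝ) • (p.1 - p.2)) =
      2 ^ n * ((∫⁻ a, f a) * ∫⁻ a, g a) := by
  rw [Measure.volume_eq_prod, lintegral_prod_symm _ (by fun_prop)]
  have h1 : ∀ b : Euc n, ∫⁻ a, f ((1/2:ℝ) • (a + b)) * g ((1/2:ℝ) • (a - b)) =
      2 ^ n * ∫⁻ a, f a * g (a - b) := by
    intro b
    rw [← lint_half b (f := fun a => f a * g (a - b)) (by fun_prop)]
    apply lintegral_congr
    intro a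
    congr 2
    rw [smul_add, smul_sub]
    have : (1/2:ℝ) • b - b = - ((1/2:ℝ) • b) := by
      rw [← sub_eq_zero, sub_neg_eq_add, sub_add_eq_add_sub, ← add_smul]; norm_num
    rw [add_sub_assoc, this, sub_eq_add_neg]
  simp only [h1]
  rw [lintegral_const_mul _ (by fun_prop)]
  congr 1
  rw [lintegral_lintegral_swap (by fun_prop)]
  have h2 : ∀ a : Euc n, ∫⁻ b, f a * g (a - b) = f a * ∫⁻ b, g b := by
    intro a
    rw [lintegral_const_mul _ (by fun_prop), lintegral_sub_left_eq_self]
  simp only [h2]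
  rw [lintegral_mul_const _ hf]

lemma sn_vol {n : ℕ} {p : Seminorm ℝ (Euc n)} {m M : ℝ} (m0 : 0 < m)
    (hm : ∀ v, m * ‖v‖ ≤ p v) (hM : ∀ v, p v ≤ M * ‖v‖) :
    ∫⁻ v, ENNReal.ofReal (Real.exp (-(p v ^ 2))) =
      volume {v | p v < 1} * ENNReal.ofReal (Real.Gamma (n / 2 + 1)) := by
  have hc := sn_cont hM
  have hIntg : Integrable (fun v => Real.exp (-(p v ^ 2))) := by
    have h1 : Integrable (fun v : Euc n => Real.exp (-(m^2 * ‖v‖^2))) := by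
      have := (GaussianFourier.integrable_cexp_neg_mul_sq_norm_add (V := Euc n) (b := ((m^2:ℝ):ℂ))
        (by rw [Complex.ofReal_re]; positivity) 0 0).norm
      refine this.congr (Filter.Eventually.of_forall fun v => ?_)
      simp only [Complex.norm_exp]
      congr 1
      have : (-((m^2:ℝ):ℂ) * (‖v‖:ℂ)^2 + 0 * ((⟪(0 : Euc n), v⟫ : ℝ) : ℂ)) = ((-(m^2 * ‖v‖^2) : ℝ) : ℂ) := by
        push_cast; ring
      rw [this, Complex.ofReal_re]
    refine h1.mono' (by apply Continuous.aestronglyMeasurable; fun_prop) (Filter.Eventually.of_forall fun v => ?_)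
    rw [Real.norm_of_nonneg (Real.exp_nonneg _), Real.exp_le_exp]
    have := pow_le_pow_left₀ (by positivity) (hm v) 2
    nlinarith
  have key := measure_lt_one_eq_integral_div_gamma (E := Euc n) volume (g := p) (map_zero p)
    (fun x => map_neg_eq_map p x) (fun x y => map_add_le_add p x y)
    (fun {x} hx => by
      have := hm x
      rw [hx] at this
      have : ‖x‖ ≤ 0 := by nlinarith [norm_nonneg x]
      simpa using this)
    (fun r x => by rw [map_smul_eq_mul]; rfl) (p := 2) two_pos
  rw [key]
  have G0 : 0 < Real.Gamma (n/2+1) := Real.Gamma_pos_of_pos (by positivity)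
  simp only [finrank_euclideanSpace, Fintype.card_fin, Real.rpow_two]
  rw [← ENNReal.ofReal_mul (div_nonneg (integral_nonneg fun _ => Real.exp_nonneg _) G0.le), div_mul_cancel₀ _ G0.ne']
  rw [ofReal_integral_eq_lintegral_ofReal hIntg (Filter.Eventually.of_forall fun p => Real.exp_nonneg _)]

theorem bourgain_milman {n : ℕ} {p q : Seminorm ℝ (Euc n)} {m M m' M' : ℝ} (m0 : 0 < m)
    (hm : ∀ v, m * ‖v‖ ≤ p v) (M0 : 0 < M) (hM : ∀ v, p v ≤ M * ‖v‖)
    (m0' : 0 < m') (hm' : ∀ v, m' * ‖v‖ ≤ q v) (hM' : ∀ v, q v ≤ M' * ‖v‖)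
    (hq : ∀ y s, 0 ≤ s → (∀ z, ⟪y, z⟫ ≤ s * p z) → q y ≤ s) :
    volume (ball (0 : Euc n) 1) ^ 2 ≤ 2 ^ n * (volume {v | p v < 1} * volume {v | q v < 1}) := by
  obtain ⟨R, hR, ⟨c, c0, c1, hc⟩, hRp, hRq⟩ := exists_R m0 hm M0 hM hq
  have hpc := sn_cont hM
  have hqc := sn_cont hM'
  have h1 := bm_ineq hR c0 c1 hc
  set G : Euc n × Euc n → ℝ := fun z => Real.exp (-(p ((1/2:ℝ) • (z.1 + z.2)) ^ 2)) *
    Real.exp (-(q ((1/2:ℝ) • (z.1 - z.2)) ^ 2)) with hG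
  have hGc : Continuous G := by fun_prop
  have hle : ∀ z, Real.exp (-(QQ z - WW R z)) ≤ G (mapH R 1 1 z) := by
    intro z
    simp only [hG, ← Real.exp_add, Real.exp_le_exp, mapH, one_smul]
    have half : ∀ (s : Seminorm ℝ (Euc n)) (u v : Euc n), s ((1/2:ℝ) • (u + v))^2 ≤ (s u ^2 + s v ^2)/2 := by
      intro s u v
      rw [map_smul_eq_mul, Real.norm_of_nonneg (by norm_num)]
      have a1 := map_add_le_add s u v
      have a2 : (1/2 * s (u+v))^2 ≤ (1/2 * (s u + s v))^2 :=
        pow_le_pow_left₀ (mul_nonneg (by norm_num) (apply_nonneg s _)) (by linarith) 2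
      nlinarith [sq_nonneg (s u - s v)]
    have b1 : z.1 + R z.2 + (z.2 + R z.1) = (z.1 + R z.1) + (z.2 + R z.2) := by abel
    have b2 : z.1 + R z.2 - (z.2 + R z.1) = (z.1 - R z.1) + (-(z.2 - R z.2)) := by abel
    have c1 := half p (z.1 + R z.1) (z.2 + R z.2)
    have c2 := half q (z.1 - R z.1) (-(z.2 - R z.2))
    rw [map_neg_eq_map] at c2
    rw [b1, b2]
    have d1 := hRp z.1; have d2 := hRp z.2
    have d3 := hRq z.1; have d4 := hRq z.2
    unfold QQ WW
    linarith
  have h2 := fatou_mapH hR hGc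
  have h3 : ∫⁻ z : Euc n × Euc n, ENNReal.ofReal (Real.exp (-(QQ z))) ≤ ∫⁻ z, ENNReal.ofReal (G z) := by
    refine h1.trans (le_trans (lintegral_mono fun z => ?_) h2)
    gcongr
    exact hle z
  have e1 : ∫⁻ z, ENNReal.ofReal (G z) = 2 ^ n * ((∫⁻ v, ENNReal.ofReal (Real.exp (-(p v ^ 2)))) *
      ∫⁻ v, ENNReal.ofReal (Real.exp (-(q v ^ 2)))) := by
    rw [← lint_rot (by fun_prop) (by fun_prop)]
    apply lintegral_congr
    intro z
    simp only [hG]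
    rw [ENNReal.ofReal_mul (Real.exp_nonneg _)]
  have e2 : ∫⁻ z : Euc n × Euc n, ENNReal.ofReal (Real.exp (-(QQ z))) =
      (∫⁻ v : Euc n, ENNReal.ofReal (Real.exp (-(‖v‖ ^ 2)))) * ∫⁻ v : Euc n, ENNReal.ofReal (Real.exp (-(‖v‖ ^ 2))) := by
    rw [Measure.volume_eq_prod, ← lintegral_prod_mul (by fun_prop) (by fun_prop)]
    apply lintegral_congr
    intro z
    rw [← ENNReal.ofReal_mul (Real.exp_nonneg _), ← Real.exp_add, QQ]
    congr 2; ring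
  have e3 := sn_vol (p := normSeminorm ℝ (Euc n)) (m := 1) (M := 1) one_pos (by simp) (by simp)
  simp only [coe_normSeminorm] at e3
  have e4 : {v : Euc n | ‖v‖ < 1} = ball 0 1 := by ext v; simp
  rw [e1, e2, e3, e4, sn_vol m0 hm hM, sn_vol m0' hm' hM'] at h3
  have G0 : 0 < Real.Gamma (n/2+1) := Real.Gamma_pos_of_pos (by positivity)
  set γ := ENNReal.ofReal (Real.Gamma (n / 2 + 1)) with hγ
  have γ0 : γ ≠ 0 := by rw [hγ]; simpa using G0
  have γt : γ ≠ ⊤ := ENNReal.ofReal_ne_top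
  have γ2 : γ * γ ≠ 0 := mul_ne_zero γ0 γ0
  have γ2t : γ * γ ≠ ⊤ := ENNReal.mul_ne_top γt γt
  rw [← ENNReal.mul_le_mul_iff_left γ2 γ2t]
  calc _ = _ := by ring
    _ ≤ _ := h3
    _ = _ := by ring

lemma polar_convex {n : ℕ} (T : Set (Euc n)) : Convex ℝ (polarSet T) := by
  intro y hy z hz a b ha hb hab x hx
  rw [inner_add_right, inner_smul_right, inner_smul_right]
  have h1 := hy x hx
  have h2 := hz x hx
  nlinarith

lemma sn_le_one_vol {n : ℕ} {p : Seminorm ℝ (Euc n)} :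
    volume {v | p v ≤ 1} ≤ 2 ^ n * volume {v | p v < 1} := by
  have h : {v | p v ≤ 1} ⊆ (2:ℝ) • {v | p v < 1} := by
    intro v hv
    rw [mem_smul_set_iff_inv_smul_mem₀ two_ne_zero]
    change p _ < 1
    have hv' : p v ≤ 1 := hv
    rw [map_smul_eq_mul, Real.norm_of_nonneg (by norm_num)]
    linarith
  refine (measure_mono h).trans ?_
  rw [Measure.addHaar_smul_of_nonneg _ (by norm_num)]
  simp [ENNReal.ofReal_pow]

theorem mahler_sn {n : ℕ} {p : Seminorm ℝ (Euc n)} {m M : ℝ} (m0 : 0 < m)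
    (hm : ∀ v, m * ‖v‖ ≤ p v) (M0 : 0 < M) (hM : ∀ v, p v ≤ M * ‖v‖) :
    volume (ball (0 : Euc n) 1) ^ 2 ≤ 2 ^ n * (volume {v | p v ≤ 1} * volume (polarSet {v | p v ≤ 1})) ∧
    volume {v | p v ≤ 1} * volume (polarSet {v | p v ≤ 1}) ≤ 4 ^ n * volume (ball (0 : Euc n) 1) ^ 2 := by
  set T : Set (Euc n) := {v | p v ≤ 1} with hT
  set P := polarSet T with hP
  have hPc : Convex ℝ P := polar_convex T
  have hPb : Balanced ℝ P := by
    rintro a ha y ⟨z, hz, rfl⟩ x hx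
    simp only
    rw [inner_smul_right, ← real_inner_smul_left]
    apply hz
    change p _ ≤ 1
    rw [map_smul_eq_mul]
    have : p x ≤ 1 := hx
    exact mul_le_one₀ ha (apply_nonneg p _) this
  have hball : closedBall 0 m ⊆ P := by
    intro y hy x hx
    have h1 := real_inner_le_norm x y
    have h2 := hm x
    have h3 : p x ≤ 1 := hx
    have h4 : ‖y‖ ≤ m := by simpa using hy
    nlinarith [norm_nonneg x]
  have hPa : Absorbent ℝ P := absorbent_nhds_zero (Filter.mem_of_superset (closedBall_mem_nhds 0 m0) hball)
  have hP0 : (0 : Euc n) ∈ P := hball (by simp [m0.le])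
  set q : Seminorm ℝ (Euc n) := gaugeSeminorm hPb hPc hPa with hqd
  have hqg : ∀ v, q v = gauge P v := fun v => rfl
  have hq : ∀ y s, 0 ≤ s → (∀ z, ⟪y, z⟫ ≤ s * p z) → q y ≤ s := by
    intro y s hs h
    rcases hs.eq_or_lt with rfl | hs'
    · have := h y
      rw [zero_mul, real_inner_self_nonpos] at this
      rw [this, map_zero]
    · rw [hqg]
      apply gauge_le_of_mem hs
      rw [mem_smul_set_iff_inv_smul_mem₀ hs'.ne']
      intro x hx
      have hx' : p x ≤ 1 := hx
      rw [inner_smul_right, real_inner_comm, ← div_eq_inv_mul, div_le_one hs']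
      refine (h x).trans ?_
      nlinarith
  have hM' : ∀ v, q v ≤ (1/m) * ‖v‖ := by
    intro v
    apply hq _ _ (by positivity)
    intro z
    refine (real_inner_le_norm v z).trans ?_
    have := hm z
    rw [show 1/m * ‖v‖ * p z = ‖v‖ * (p z / m) by ring]
    apply mul_le_mul_of_nonneg_left _ (norm_nonneg _)
    rw [le_div_iff₀ m0]; linarith
  have hPsub : P ⊆ closedBall 0 M := by
    intro y hy
    rw [mem_closedBall_zero_iff]
    by_cases hy0 : y = 0
    · simp [hy0, M0.le]
    · have hn : 0 < ‖y‖ := norm_pos_iff.2 hy0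
      have := hy ((1/(M * ‖y‖)) • y) (by
        change p _ ≤ 1
        rw [map_smul_eq_mul, Real.norm_of_nonneg (by positivity), one_div, ← div_eq_inv_mul, div_le_one (by positivity)]
        exact hM y)
      rw [real_inner_smul_left, real_inner_self_eq_norm_sq] at this
      have e : 1 / (M * ‖y‖) * ‖y‖^2 = ‖y‖ / M := by field_simp
      rw [e, div_le_one M0] at this
      exact this
  have hm' : ∀ v, (1/M) * ‖v‖ ≤ q v := by
    intro v
    have := le_gauge_of_subset_closedBall hPa M0.le hPsub (x := v)
    rw [hqg]
    calc _ = ‖v‖ / M := by ring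
      _ ≤ _ := this
  have hVP : {v | q v < 1} ⊆ P := setOfPred_gauge_lt_one_subset_self hPc hP0 hPa
  have hPV : P ⊆ {v | q v ≤ 1} := fun v hv => gauge_le_one_of_mem hv
  have hpc := sn_cont hM
  have hqc := sn_cont hM'
  constructor
  · refine (bourgain_milman m0 hm M0 hM (by positivity) hm' hM' hq).trans ?_
    gcongr
    · exact fun v (hv : p v < 1) => (le_of_lt hv : p v ≤ 1)
  · have hU : IsOpen {v | p v < 1} := isOpen_lt hpc continuous_const
    have hV : IsOpen {v | q v < 1} := isOpen_lt hqc continuous_const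
    have mp := PiLp.volume_preserving_toLp (Fin n)
    have hcont : Continuous (WithLp.toLp 2 : (Fin n → ℝ) → Euc n) := PiLp.continuous_toLp 2 _
    have key := santalo_pi (U := WithLp.toLp 2 ⁻¹' {v | p v < 1}) (V := WithLp.toLp 2 ⁻¹' {v | q v < 1})
      { openU := hU.preimage hcont
        openV := hV.preimage hcont
        symU := fun x hx => by
          have hx' : p (WithLp.toLp 2 x) < 1 := hx
          change p (WithLp.toLp 2 (-x)) < 1
          rw [WithLp.toLp_neg, map_neg_eq_map]; exact hx'
        symV := fun x hx => by
          have hx' : q (WithLp.toLp 2 x) < 1 := hx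
          change q (WithLp.toLp 2 (-x)) < 1
          rw [WithLp.toLp_neg, map_neg_eq_map]; exact hx'
        dot := fun x hx y hy => by
          have hx' : p (WithLp.toLp 2 x) < 1 := hx
          have h1 := hVP hy (WithLp.toLp 2 x) (le_of_lt hx' : p _ ≤ 1)
          rw [PiLp.inner_apply] at h1
          simpa [mul_comm] using h1 }
    rw [mp.measure_preimage hU.measurableSet.nullMeasurableSet, mp.measure_preimage hV.measurableSet.nullMeasurableSet] at key
    have eB : {z : Fin n → ℝ | ∑ i, z i ^ 2 ≤ 1} = WithLp.toLp 2 ⁻¹' (closedBall (0 : Euc n) 1) := by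
      ext z
      simp only [mem_ofPred_eq, mem_preimage, mem_closedBall_zero_iff, EuclideanSpace.norm_eq]
      rw [Real.sqrt_le_one]
      simp
    rw [eB, mp.measure_preimage measurableSet_closedBall.nullMeasurableSet,
      Measure.addHaar_unitClosedBall_eq_addHaar_unitBall] at key
    calc volume T * volume P ≤ (2^n * volume {v | p v < 1}) * (2^n * volume {v | q v < 1}) := by
          apply mul_le_mul' sn_le_one_vol
          exact (measure_mono hPV).trans sn_le_one_vol
      _ = (2^n * 2^n) * (volume {v | p v < 1} * volume {v | q v < 1}) := by ring
      _ ≤ (2^n * 2^n) * volume (ball (0 : Euc n) 1) ^ 2 := by gcongr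
      _ = _ := by rw [← mul_pow]; norm_num

def GA {d : ℕ} (K : Set (Euc d)) (x : Euc d) : Set (Euc d) := (fun k => k - x) '' K

lemma mem_GA {d : ℕ} {K : Set (Euc d)} {x v : Euc d} : v ∈ GA K x ↔ x + v ∈ K := by
  constructor
  · rintro ⟨k, hk, rfl⟩; simpa using hk
  · intro h; exact ⟨x + v, h, by simp⟩

lemma GA_eq {d : ℕ} (K : Set (Euc d)) (x : Euc d) : GA K x = (fun v => x + v) ⁻¹' K := by
  ext v; exact mem_GA

lemma GA_convex {d : ℕ} {K : Set (Euc d)} (hK : IsConvexBody K) (x : Euc d) : Convex ℝ (GA K x) := by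
  rw [GA_eq]; exact hK.2.1.translate_preimage_right x

lemma GA_closed {d : ℕ} {K : Set (Euc d)} (hK : IsConvexBody K) (x : Euc d) : IsClosed (GA K x) := by
  rw [GA_eq]; exact hK.1.isClosed.preimage (by fun_prop)

lemma GA_nhds {d : ℕ} {K : Set (Euc d)} {x : Euc d} (hx : x ∈ interior K) : GA K x ∈ nhds (0 : Euc d) := by
  rw [GA_eq]
  have : Filter.Tendsto (fun v => x + v) (nhds (0 : Euc d)) (nhds x) := by
    have h : Continuous (fun v : Euc d => x + v) := by fun_prop
    simpa using h.tendsto 0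
  exact this (mem_interior_iff_mem_nhds.1 hx)

lemma GA_bdd {d : ℕ} {K : Set (Euc d)} (hK : IsConvexBody K) (x : Euc d) :
    ∃ R, 0 < R ∧ GA K x ⊆ closedBall 0 R := by
  have : IsCompact (GA K x) := hK.1.image (by fun_prop)
  obtain ⟨R, hR⟩ := this.isBounded.subset_closedBall 0
  exact ⟨max R 1, by positivity, hR.trans (closedBall_subset_closedBall (le_max_left _ _))⟩

/-- shifted gauge -/
def gg {d : ℕ} (K : Set (Euc d)) (x v : Euc d) : ℝ := gauge (GA K x) v

lemma gg_nonneg {d : ℕ} (K : Set (Euc d)) (x v : Euc d) : 0 ≤ gg K x v := gauge_nonneg _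

lemma gg_add {d : ℕ} {K : Set (Euc d)} (hK : IsConvexBody K) {x : Euc d} (hx : x ∈ interior K)
    (u v : Euc d) : gg K x (u + v) ≤ gg K x u + gg K x v :=
  gauge_add_le (GA_convex hK x) (absorbent_nhds_zero (GA_nhds hx)) u v

lemma gg_smul {d : ℕ} (K : Set (Euc d)) (x : Euc d) {t : ℝ} (ht : 0 ≤ t) (v : Euc d) :
    gg K x (t • v) = t * gg K x v := gauge_smul_of_nonneg ht v

lemma gg_le_one {d : ℕ} {K : Set (Euc d)} (hK : IsConvexBody K) {x : Euc d} (hx : x ∈ interior K)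
    {v : Euc d} : gg K x v ≤ 1 ↔ x + v ∈ K := by
  rw [gg, gauge_le_one_iff_mem_closure (GA_convex hK x) (GA_nhds hx), (GA_closed hK x).closure_eq, mem_GA]

lemma gg_lt_one {d : ℕ} {K : Set (Euc d)} (hK : IsConvexBody K) {x : Euc d} (hx : x ∈ interior K)
    {v : Euc d} : gg K x v < 1 ↔ x + v ∈ interior K := by
  rw [gg, gauge_lt_one_iff_mem_interior (GA_convex hK x) (GA_nhds hx), GA_eq]
  have := (Homeomorph.addLeft x).preimage_interior K
  change v ∈ interior ((Homeomorph.addLeft x) ⁻¹' K) ↔ _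
  rw [← this]; rfl

lemma gg_cont {d : ℕ} {K : Set (Euc d)} (hK : IsConvexBody K) {x : Euc d} (hx : x ∈ interior K) :
    Continuous (gg K x) := continuous_gauge (GA_convex hK x) (GA_nhds hx)

lemma gg_lower {d : ℕ} {K : Set (Euc d)} (hK : IsConvexBody K) {x : Euc d} (hx : x ∈ interior K) :
    ∃ m, 0 < m ∧ ∀ v, m * ‖v‖ ≤ gg K x v := by
  obtain ⟨R, R0, hR⟩ := GA_bdd hK x
  refine ⟨1/R, by positivity, fun v => ?_⟩
  have := le_gauge_of_subset_closedBall (absorbent_nhds_zero (GA_nhds hx)) R0.le hR (x := v)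
  calc _ = ‖v‖ / R := by ring
    _ ≤ _ := this

lemma gg_upper {d : ℕ} {K : Set (Euc d)} {x : Euc d} (hx : x ∈ interior K) :
    ∃ M, 0 < M ∧ ∀ v, gg K x v ≤ M * ‖v‖ := by
  obtain ⟨r, r0, hr⟩ := Metric.mem_nhds_iff.1 (GA_nhds hx)
  refine ⟨1/r, by positivity, fun v => ?_⟩
  have := mul_gauge_le_norm hr (x := v)
  rw [one_div, ← div_eq_inv_mul, le_div_iff₀ r0]
  rw [gg]; linarith

/-- comparison of gauges at two base points -/
lemma gg_compare {d : ℕ} {K : Set (Euc d)} (hK : IsConvexBody K) {x y : Euc d} (hx : x ∈ interior K)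
    (hy : y ∈ interior K) (v : Euc d) : (1 - gg K x (y - x)) * gg K y v ≤ gg K x v := by
  set α := gg K x (y - x) with hα
  have α1 : α < 1 := (gg_lt_one hK hx).2 (by simpa using hy)
  have key : ∀ w, gg K x w ≤ 1 → (1 - α) * gg K y w ≤ 1 := by
    intro w hw
    rw [← gg_smul _ _ (by linarith), gg_le_one hK hy]
    have h1 : gg K x ((1 - α) • w + (y - x)) ≤ 1 := by
      refine (gg_add hK hx _ _).trans ?_
      rw [gg_smul _ _ (by linarith), ← hα]
      nlinarith
    rw [gg_le_one hK hx] at h1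
    have e : x + ((1 - α) • w + (y - x)) = y + (1 - α) • w := by abel
    rwa [e] at h1
  rcases (gg_nonneg K x v).eq_or_lt with h0 | h0
  · obtain ⟨m, m0, hm⟩ := gg_lower hK hx
    have h1 := hm v
    rw [← h0] at h1
    have : v = 0 := by
      have : ‖v‖ ≤ 0 := by nlinarith [norm_nonneg v]
      simpa using this
    rw [this]; simp [gg]
  · have := key ((gg K x v)⁻¹ • v) (by rw [gg_smul _ _ (by positivity), inv_mul_cancel₀ h0.ne'])
    rw [gg_smul _ _ (by positivity), mul_left_comm, ← div_eq_inv_mul, div_le_one h0] at this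
    exact this

/-- Finsler seminorm -/
def pp {d : ℕ} {K : Set (Euc d)} (hK : IsConvexBody K) {x : Euc d} (hx : x ∈ interior K) :
    Seminorm ℝ (Euc d) :=
  Seminorm.of (fun v => (gg K x v + gg K x (-v)) / 2)
    (fun u v => by
      have h1 := gg_add hK hx u v
      have h2 := gg_add hK hx (-u) (-v)
      rw [neg_add]; linarith)
    (fun t v => by
      rcases le_total 0 t with ht | ht
      · rw [← smul_neg, gg_smul _ _ ht, gg_smul _ _ ht, Real.norm_of_nonneg ht]; ring
      · have e1 : t • v = (-t) • (-v) := by simp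
        have e2 : -(t • v) = (-t) • v := by simp
        rw [e2, e1, gg_smul _ _ (by linarith), gg_smul _ _ (by linarith), Real.norm_of_nonpos ht]; ring)

lemma pp_apply {d : ℕ} {K : Set (Euc d)} (hK : IsConvexBody K) {x : Euc d} (hx : x ∈ interior K)
    (v : Euc d) : pp hK hx v = (gg K x v + gg K x (-v)) / 2 := rfl

lemma finsler_eq {d : ℕ} {K : Set (Euc d)} (hK : IsConvexBody K) {x : Euc d} (hx : x ∈ interior K) :
    finslerBall K x = {v | pp hK hx v ≤ 1} := by
  ext v
  change gg K x v + gg K x (-v) ≤ 2 ↔ (gg K x v + gg K x (-v)) / 2 ≤ 1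
  constructor <;> intro h <;> linarith

lemma pp_bounds {d : ℕ} {K : Set (Euc d)} (hK : IsConvexBody K) {x : Euc d} (hx : x ∈ interior K) :
    (∃ m, 0 < m ∧ ∀ v, m * ‖v‖ ≤ pp hK hx v) ∧ ∃ M, 0 < M ∧ ∀ v, pp hK hx v ≤ M * ‖v‖ := by
  obtain ⟨m, m0, hm⟩ := gg_lower hK hx
  obtain ⟨M, M0, hM⟩ := gg_upper hx
  refine ⟨⟨m, m0, fun v => ?_⟩, M, M0, fun v => ?_⟩
  · have h1 := hm v; have h2 := hm (-v)
    rw [norm_neg] at h2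
    rw [pp_apply]; linarith
  · have h1 := hM v; have h2 := hM (-v)
    rw [norm_neg] at h2
    rw [pp_apply]; linarith

/-- density -/
def ff {d : ℕ} (K : Set (Euc d)) (y : Euc d) : ℝ := (volume (polarSet (finslerBall K y))).toReal

lemma ωd_pos (d : ℕ) : 0 < ωd d := by
  apply ENNReal.toReal_pos
  · exact (measure_ball_pos volume 0 one_pos).ne'
  · exact measure_ball_lt_top.ne

/-- volume of the Finsler ball -/
def bb {d : ℕ} (K : Set (Euc d)) (y : Euc d) : ℝ := (volume (finslerBall K y)).toReal

lemma finsler_closed {d : ℕ} {K : Set (Euc d)} (hK : IsConvexBody K) {x : Euc d} (hx : x ∈ interior K) :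
    IsClosed (finslerBall K x) := by
  rw [finsler_eq hK hx]
  obtain ⟨M, M0, hM⟩ := (pp_bounds hK hx).2
  exact isClosed_le (sn_cont hM) continuous_const

lemma mahler_real {d : ℕ} {K : Set (Euc d)} (hK : IsConvexBody K) {x : Euc d} (hx : x ∈ interior K) :
    volume (finslerBall K x) ≠ ⊤ ∧ volume (polarSet (finslerBall K x)) ≠ ⊤ ∧
    ωd d ^ 2 ≤ 2 ^ d * (bb K x * ff K x) ∧ bb K x * ff K x ≤ 4 ^ d * ωd d ^ 2 := by
  obtain ⟨⟨m, m0, hm⟩, M, M0, hM⟩ := pp_bounds hK hx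
  obtain ⟨h1, h2⟩ := mahler_sn m0 hm M0 hM
  rw [← finsler_eq hK hx] at h1 h2
  have hω : volume (ball (0 : Euc d) 1) ≠ ⊤ := measure_ball_lt_top.ne
  have hb0 : volume (finslerBall K x) ≠ 0 := by
    have : closedBall (0 : Euc d) (1/M) ⊆ finslerBall K x := by
      rw [finsler_eq hK hx]
      intro v hv
      have hv' : ‖v‖ ≤ 1/M := by simpa using hv
      refine (hM v).trans ?_
      rw [le_div_iff₀ M0] at hv'; linarith
    exact ((measure_closedBall_pos volume (0 : Euc d) (by positivity)).trans_le (measure_mono this)).ne'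
  have hbt : volume (finslerBall K x) ≠ ⊤ := by
    have : finslerBall K x ⊆ closedBall (0 : Euc d) (1/m) := by
      rw [finsler_eq hK hx]
      intro v hv
      have hv' : pp hK hx v ≤ 1 := hv
      rw [mem_closedBall_zero_iff, le_div_iff₀ m0]
      have := hm v
      linarith
    exact ((measure_mono this).trans_lt measure_closedBall_lt_top).ne
  have hr : 4 ^ d * volume (ball (0 : Euc d) 1) ^ 2 ≠ ⊤ :=
    ENNReal.mul_ne_top (ENNReal.pow_ne_top (by norm_num)) (ENNReal.pow_ne_top hω)
  have hft : volume (polarSet (finslerBall K x)) ≠ ⊤ := by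
    intro h
    rw [h, ENNReal.mul_top hb0] at h2
    exact hr (top_le_iff.1 h2)
  refine ⟨hbt, hft, ?_, ?_⟩
  · have := ENNReal.toReal_mono (ENNReal.mul_ne_top (ENNReal.pow_ne_top (by norm_num)) (ENNReal.mul_ne_top hbt hft)) h1
    simpa [ENNReal.toReal_mul, ENNReal.toReal_pow, ωd, bb, ff] using this
  · have := ENNReal.toReal_mono hr h2
    simpa [ENNReal.toReal_mul, ENNReal.toReal_pow, ωd, bb, ff] using this

lemma ff_compare {d : ℕ} {K : Set (Euc d)} (hK : IsConvexBody K) {x y : Euc d} (hx : x ∈ interior K)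
    (hy : y ∈ interior K) : (1 - gg K x (y - x)) ^ d * ff K y ≤ ff K x := by
  set α := gg K x (y - x) with hα
  have α1 : α < 1 := (gg_lt_one hK hx).2 (by simpa using hy)
  have a0 : 0 < 1 - α := by linarith
  have hsub : (1 - α) • polarSet (finslerBall K y) ⊆ polarSet (finslerBall K x) := by
    rintro _ ⟨z, hz, rfl⟩ v hv
    simp only
    rw [inner_smul_right, ← real_inner_smul_left]
    apply hz
    have h1 := gg_compare hK hx hy v
    have h2 := gg_compare hK hx hy (-v)
    change gg K y ((1 - α) • v) + gg K y (-((1 - α) • v)) ≤ 2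
    rw [← smul_neg, gg_smul _ _ a0.le, gg_smul _ _ a0.le]
    have h3 : gg K x v + gg K x (-v) ≤ 2 := hv
    linarith
  have h := measure_mono (μ := volume) hsub
  rw [Measure.addHaar_smul_of_nonneg _ a0.le] at h
  have := ENNReal.toReal_mono (mahler_real hK hx).2.1 h
  rw [ENNReal.toReal_mul, ENNReal.toReal_ofReal (by positivity)] at this
  simpa [ff] using this

lemma ff_contOn {d : ℕ} {K : Set (Euc d)} (hK : IsConvexBody K) :
    ContinuousOn (ff K) (interior K) := by
  intro x hx
  apply ContinuousAt.continuousWithinAt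
  have hc := gg_cont hK hx
  have hα : Filter.Tendsto (fun y => gg K x (y - x)) (nhds x) (nhds 0) := by
    have h : Continuous (fun y => gg K x (y - x)) := by fun_prop
    have := h.tendsto x
    simpa [gg] using this
  have hα' : Filter.Tendsto (fun y => gg K x (x - y)) (nhds x) (nhds 0) := by
    have h : Continuous (fun y => gg K x (x - y)) := by fun_prop
    have := h.tendsto x
    simpa [gg] using this
  have hlow : Filter.Tendsto (fun y => (1 - gg K x (x - y) / (1 - gg K x (y - x))) ^ d * ff K x) (nhds x)
      (nhds (ff K x)) := by
    have h := (((hα'.div (hα.const_sub 1) (by norm_num)).const_sub 1).pow d).mul_const (ff K x)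
    simpa using h
  have hup : Filter.Tendsto (fun y => ff K x / (1 - gg K x (y - x)) ^ d) (nhds x)
      (nhds (ff K x)) := by
    have h := (tendsto_const_nhds (x := ff K x)).div ((hα.const_sub 1).pow d) (by norm_num)
    simp only [sub_zero, one_pow, div_one] at h
    exact h
  have hIntg : ∀ᶠ y in nhds x, y ∈ interior K := isOpen_interior.mem_nhds hx
  refine tendsto_of_tendsto_of_tendsto_of_le_of_le' hlow hup ?_ ?_
  · have hsm : ∀ᶠ y in nhds x, gg K x (x - y) / (1 - gg K x (y - x)) < 1 := by
      have h := hα'.div (hα.const_sub 1) (by norm_num)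
      exact h.eventually (gt_mem_nhds (by norm_num))
    filter_upwards [hIntg, hsm] with y hy hs
    have α1 : gg K x (y - x) < 1 := (gg_lt_one hK hx).2 (by simpa using hy)
    have h1 := ff_compare hK hy hx
    have h2 := gg_compare hK hx hy (x - y)
    have h3 : gg K y (x - y) ≤ gg K x (x - y) / (1 - gg K x (y - x)) := by
      rw [le_div_iff₀ (by linarith)]; linarith
    refine le_trans ?_ h1
    apply mul_le_mul_of_nonneg_right _ ENNReal.toReal_nonneg
    apply pow_le_pow_left₀ (by linarith)
    linarith
  · filter_upwards [hIntg] with y hy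
    have α1 : gg K x (y - x) < 1 := (gg_lt_one hK hx).2 (by simpa using hy)
    have h1 := ff_compare hK hx hy
    rw [le_div_iff₀ (pow_pos (by linarith) d)]
    linarith

def sb {d : ℕ} (K : Set (Euc d)) (x : Euc d) (t : ℝ) : Set (Euc d) :=
  (fun v => x + v) '' (t • finslerBall K x)

lemma mem_sb {d : ℕ} {K : Set (Euc d)} (hK : IsConvexBody K) {x : Euc d} (hx : x ∈ interior K)
    {t : ℝ} (ht : 0 < t) (y : Euc d) : y ∈ sb K x t ↔ pp hK hx (y - x) ≤ t := by
  have : y ∈ sb K x t ↔ y - x ∈ t • finslerBall K x := by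
    unfold sb
    constructor
    · rintro ⟨v, hv, rfl⟩; simpa using hv
    · intro h; exact ⟨y - x, h, by simp⟩
  rw [this, Set.mem_smul_set_iff_inv_smul_mem₀ ht.ne', finsler_eq hK hx, Set.mem_setOf_eq,
    map_smul_eq_mul, Real.norm_of_nonneg (inv_nonneg.2 ht.le), inv_mul_le_iff₀ ht, mul_one]

lemma sb_vol {d : ℕ} {K : Set (Euc d)} (hK : IsConvexBody K) {x : Euc d} (hx : x ∈ interior K)
    {t : ℝ} (ht : 0 < t) : volume (sb K x t) ≠ ⊤ ∧ (volume (sb K x t)).toReal = t ^ d * bb K x := by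
  have h : volume (sb K x t) = ENNReal.ofReal (t ^ d) * volume (finslerBall K x) := by
    unfold sb
    rw [Set.image_add_left, measure_preimage_add, Measure.addHaar_smul]
    simp [abs_of_pos ht]
  rw [h]
  refine ⟨ENNReal.mul_ne_top ENNReal.ofReal_ne_top (mahler_real hK hx).1, ?_⟩
  rw [ENNReal.toReal_mul, ENNReal.toReal_ofReal (by positivity)]
  rfl

lemma sb_meas {d : ℕ} {K : Set (Euc d)} (hK : IsConvexBody K) {x : Euc d} (hx : x ∈ interior K)
    {t : ℝ} (ht : 0 < t) : MeasurableSet (sb K x t) := by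
  have h : IsClosed (sb K x t) := by
    unfold sb
    exact (Homeomorph.addLeft x).isClosedMap _ ((finsler_closed hK hx).smul_of_ne_zero ht.ne')
  exact h.measurableSet

lemma ball_facts {d : ℕ} {K : Set (Euc d)} (hK : IsConvexBody K) {x : Euc d} (hx : x ∈ interior K)
    {r : ℝ} (hr : 0 < r) (hr8 : r ≤ 8) {y : Euc d} (hy : y ∈ hilbertBall K x r) :
    ff K y ≤ Real.exp 16 ^ d * ff K x ∧ ff K x ≤ Real.exp 16 ^ d * ff K y ∧
      pp hK hx (y - x) ≤ 2 * r * Real.exp 16 := by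
  obtain ⟨hyK, hd⟩ := hy
  have hα1 : gg K x (y - x) < 1 := (gg_lt_one hK hx).2 (by simpa using hyK)
  have hβ1 : gg K y (x - y) < 1 := (gg_lt_one hK hyK).2 (by simpa using hx)
  have hα0 := gg_nonneg K x (y - x)
  have hβ0 := gg_nonneg K y (x - y)
  have hd' : -(1 / 2) * Real.log ((1 - gg K x (y - x)) * (1 - gg K y (x - y))) ≤ r := hd
  have hc1 := ff_compare hK hx hyK
  have hc2 := ff_compare hK hyK hx
  have hg := gg_compare hK hyK hx (x - y)
  set α := gg K x (y - x) with hαd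
  set β := gg K y (x - y) with hβd
  have hp : 0 < (1 - α) * (1 - β) := mul_pos (by linarith) (by linarith)
  have hl : Real.exp (-(2 * r)) ≤ (1 - α) * (1 - β) := by
    rw [← Real.le_log_iff_exp_le hp]; linarith
  have h1 : Real.exp (-(2*r)) ≤ 1 - α := hl.trans (by nlinarith)
  have h2 : Real.exp (-(2*r)) ≤ 1 - β := hl.trans (by nlinarith)
  have hE : Real.exp (-16) ≤ Real.exp (-(2*r)) := Real.exp_le_exp.2 (by linarith)
  have hEE : Real.exp 16 * Real.exp (-16) = 1 := by rw [← Real.exp_add]; norm_num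
  have hE0 := Real.exp_pos 16
  have key : ∀ s a b : ℝ, Real.exp (-16) ≤ s → 0 ≤ a → s ^ d * a ≤ b → a ≤ Real.exp 16 ^ d * b := by
    intro s a b hs ha hab
    calc a = Real.exp 16 ^ d * (Real.exp (-16) ^ d * a) := by
          rw [← mul_assoc, ← mul_pow, hEE]; simp
      _ ≤ Real.exp 16 ^ d * (s ^ d * a) := by
          have := Real.exp_pos (-16)
          gcongr
      _ ≤ _ := by gcongr
  refine ⟨key _ _ _ (hE.trans h1) ENNReal.toReal_nonneg hc1,
    key _ _ _ (hE.trans h2) ENNReal.toReal_nonneg hc2, ?_⟩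
  have hsmall : 1 - Real.exp (-(2*r)) ≤ 2 * r := by
    have := Real.add_one_le_exp (-(2*r)); linarith
  have hE1 : 1 ≤ Real.exp 16 := Real.one_le_exp (by norm_num)
  have hγ : gg K x (x - y) ≤ 2 * r * Real.exp 16 := by
    have hγ0 := gg_nonneg K x (x - y)
    have h3 : Real.exp (-16) * gg K x (x - y) ≤ 2 * r := by
      have : Real.exp (-16) * gg K x (x - y) ≤ (1 - β) * gg K x (x - y) := by
        gcongr; linarith
      linarith
    calc gg K x (x - y) = Real.exp 16 * (Real.exp (-16) * gg K x (x - y)) := by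
          rw [← mul_assoc, hEE, one_mul]
      _ ≤ Real.exp 16 * (2 * r) := by gcongr
      _ = _ := by ring
  rw [pp_apply, neg_sub]
  have : α ≤ 2 * r * Real.exp 16 := by
    nlinarith
  linarith

lemma sb_sub {d : ℕ} {K : Set (Euc d)} (hK : IsConvexBody K) {x : Euc d} (hx : x ∈ interior K)
    {r : ℝ} (hr : 0 < r) (hr8 : r ≤ 8) : sb K x (r / 102) ⊆ hilbertBall K x r := by
  intro y hy
  rw [mem_sb hK hx (by positivity), pp_apply, neg_sub] at hy
  have hα0 := gg_nonneg K x (y - x)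
  have hγ0 := gg_nonneg K x (x - y)
  have hα : gg K x (y - x) ≤ r / 51 := by linarith
  have hγ : gg K x (x - y) ≤ r / 51 := by linarith
  have hyK : y ∈ interior K := by
    have := (gg_lt_one hK hx (v := y - x)).1 (by linarith)
    simpa using this
  refine ⟨hyK, ?_⟩
  show -(1 / 2) * Real.log ((1 - gg K x (y - x)) * (1 - gg K y (x - y))) ≤ r
  have hg := gg_compare hK hx hyK (x - y)
  have hβ0 := gg_nonneg K y (x - y)
  have hβ : gg K y (x - y) ≤ 2 * (r / 51) := by nlinarith
  have h1 : 1 - r / 17 ≤ (1 - gg K x (y - x)) * (1 - gg K y (x - y)) := by nlinarith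
  have h2 : Real.exp (-(2 * r)) ≤ 1 - r / 17 := by
    have h3 : (2 * r) + 1 ≤ Real.exp (2 * r) := Real.add_one_le_exp _
    rw [Real.exp_neg, inv_le_comm₀ (Real.exp_pos _) (by linarith)]
    refine le_trans ?_ h3
    rw [inv_le_iff_one_le_mul₀ (by linarith)]
    nlinarith
  have h3 := (Real.le_log_iff_exp_le (by linarith)).2 (h2.trans h1)
  linarith

lemma ball_int {d : ℕ} {K : Set (Euc d)} (hK : IsConvexBody K) {x : Euc d} (hx : x ∈ interior K)
    {r : ℝ} (hr : 0 < r) (hr8 : r ≤ 8) :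
    (∫ y in hilbertBall K x r, ff K y) ≤
        (Real.exp 16 ^ d * ff K x) * ((2 * r * Real.exp 16) ^ d * bb K x) ∧
      (ff K x) * ((r / 102) ^ d * bb K x) ≤
        Real.exp 16 ^ d * (∫ y in hilbertBall K x r, ff K y) := by
  have hE0 := Real.exp_pos 16
  have hff : ∀ y, 0 ≤ ff K y := fun y => ENNReal.toReal_nonneg
  set M := Real.exp 16 ^ d * ff K x with hM
  have hM0 : 0 ≤ M := mul_nonneg (by positivity) (hff x)
  set T := sb K x (2 * r * Real.exp 16) with hT
  have ht : 0 < 2 * r * Real.exp 16 := by positivity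
  set S := (interior K ∩ ff K ⁻¹' Iic M) ∩ T with hS
  have hSm : MeasurableSet S := by
    refine MeasurableSet.inter ?_ (sb_meas hK hx ht)
    have : interior K ∩ ff K ⁻¹' Ioi M = interior K \ (interior K ∩ ff K ⁻¹' Iic M) := by
      ext z; simp only [mem_inter_iff, mem_preimage, mem_Ioi, mem_sdiff, mem_Iic]
      constructor
      · rintro ⟨h1, h2⟩; exact ⟨h1, fun h => absurd h.2 (not_le.2 h2)⟩
      · rintro ⟨h1, h2⟩; exact ⟨h1, not_le.1 fun h => h2 ⟨h1, h⟩⟩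
    have ho : IsOpen (interior K ∩ ff K ⁻¹' Ioi M) :=
      (ff_contOn hK).isOpen_inter_preimage isOpen_interior isOpen_Ioi
    have h2 : interior K ∩ ff K ⁻¹' Iic M = interior K \ (interior K ∩ ff K ⁻¹' Ioi M) := by
      rw [this, Set.sdiff_sdiff_cancel_left inter_subset_left]
    rw [h2]
    exact isOpen_interior.measurableSet.diff ho.measurableSet
  have hBS : hilbertBall K x r ⊆ S := by
    intro y hy
    obtain ⟨h1, h2, h3⟩ := ball_facts hK hx hr hr8 hy
    exact ⟨⟨hy.1, h1⟩, (mem_sb hK hx ht y).2 h3⟩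
  obtain ⟨hTf, hTv⟩ := sb_vol hK hx ht
  have hSf : volume S ≠ ⊤ := measure_ne_top_of_subset inter_subset_right hTf
  have hSint : IntegrableOn (ff K) S := by
    have hc : ContinuousOn (ff K) S := (ff_contOn hK).mono fun z hz => hz.1.1
    have : IsFiniteMeasure (volume.restrict S) := ⟨by simpa using hSf.lt_top⟩
    refine Integrable.of_bound (hc.aestronglyMeasurable hSm) M ?_
    refine (ae_restrict_iff' hSm).2 (Filter.Eventually.of_forall fun z hz => ?_)
    rw [Real.norm_of_nonneg (hff z)]; exact hz.1.2
  have hBint : IntegrableOn (ff K) (hilbertBall K x r) := hSint.mono_set hBS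
  constructor
  · calc (∫ y in hilbertBall K x r, ff K y) ≤ ∫ y in S, ff K y :=
          setIntegral_mono_set hSint (Filter.Eventually.of_forall hff)
            (Filter.Eventually.of_forall hBS)
      _ ≤ ∫ y in S, M := by
          refine setIntegral_mono_on hSint (integrableOn_const hSf) hSm fun z hz => hz.1.2
      _ = (volume S).toReal * M := by simp [Measure.real]
      _ ≤ (volume T).toReal * M := by
          gcongr
          exact inter_subset_right
      _ = _ := by rw [hTv]; ring
  · set L := sb K x (r / 102) with hL
    have hr' : 0 < r / 102 := by positivity
    have hLB : L ⊆ hilbertBall K x r := sb_sub hK hx hr hr8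
    obtain ⟨hLf, hLv⟩ := sb_vol hK hx hr'
    calc (ff K x) * ((r / 102) ^ d * bb K x) = ∫ y in L, ff K x := by
          rw [← hLv]; simp [Measure.real, mul_comm, hL]
      _ ≤ ∫ y in L, Real.exp 16 ^ d * ff K y := by
          refine setIntegral_mono_on (integrableOn_const hLf) ((hBint.mono_set hLB).const_mul _)
            (sb_meas hK hx hr') fun z hz => (ball_facts hK hx hr hr8 (hLB hz)).2.1
      _ = Real.exp 16 ^ d * ∫ y in L, ff K y := integral_const_mul _ _
      _ ≤ _ := by
          gcongr ?_ * ?_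
          exact setIntegral_mono_set hBint (Filter.Eventually.of_forall hff)
            (Filter.Eventually.of_forall hLB)

/-- Holmes–Thompson volume growth of bounded-radius Hilbert balls. -/
theorem hilbert_ball_volume_growth :
    ∃ c : ℝ, 1 ≤ c ∧ ∀ d : ℕ, 2 ≤ d →
      ∀ K : Set (Euc d), IsConvexBody K →
        ∀ x ∈ interior K, ∀ r : ℝ, 0 < r → r ≤ 8 →
          (c ^ d)⁻¹ * (ωd d * r ^ d) ≤ volH K (hilbertBall K x r) ∧
          volH K (hilbertBall K x r) ≤ c ^ d * (ωd d * r ^ d) := by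
  have hE1 : 1 ≤ Real.exp 16 := Real.one_le_exp (by norm_num)
  refine ⟨204 * Real.exp 16 ^ 2, by nlinarith, ?_⟩
  intro d _ K hK x hx r hr hr8
  obtain ⟨hU, hL⟩ := ball_int hK hx hr hr8
  obtain ⟨-, -, m1, m2⟩ := mahler_real hK hx
  have hω := ωd_pos d
  have hv : volH K (hilbertBall K x r) = (1 / ωd d) * ∫ y in hilbertBall K x r, ff K y := rfl
  rw [hv]
  set I := ∫ y in hilbertBall K x r, ff K y
  set E := Real.exp 16
  have hE0 : 0 < E := by linarith
  constructor
  · have h1 : ωd d ^ 2 * r ^ d ≤ (204 * E) ^ d * I := by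
      calc ωd d ^ 2 * r ^ d ≤ (2 ^ d * (bb K x * ff K x)) * r ^ d := by gcongr
        _ = 204 ^ d * (ff K x * ((r / 102) ^ d * bb K x)) := by
            have : (204 : ℝ) ^ d = 2 ^ d * 102 ^ d := by rw [← mul_pow]; norm_num
            rw [this, div_pow]; field_simp
        _ ≤ 204 ^ d * (E ^ d * I) := by gcongr
        _ = _ := by rw [mul_pow]; ring
    have hI : 0 ≤ I := integral_nonneg fun y => ENNReal.toReal_nonneg
    have h2 : (204 * E) ^ d * I ≤ (204 * E ^ 2) ^ d * I := by
      gcongr; nlinarith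
    rw [inv_mul_le_iff₀ (by positivity), one_div, mul_left_comm, le_inv_mul_iff₀ hω]
    nlinarith
  · rw [one_div, inv_mul_le_iff₀ hω]
    calc I ≤ _ := hU
      _ = (2 * E ^ 2) ^ d * r ^ d * (bb K x * ff K x) := by
          simp only [mul_pow]; ring
      _ ≤ (2 * E ^ 2) ^ d * r ^ d * (4 ^ d * ωd d ^ 2) := by gcongr
      _ = (8 * E ^ 2) ^ d * (ωd d * r ^ d) * ωd d := by
          have : (8 * E ^ 2) ^ d = 4 ^ d * (2 * E ^ 2) ^ d := by
            rw [← mul_pow]; congr 1; ring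
          rw [this]; ring
      _ ≤ (204 * E ^ 2) ^ d * (ωd d * r ^ d) * ωd d := by
          gcongr; norm_num
      _ = _ := by ring
end
end

section
/- Let K be a convex body in ℝ^d, let G ⊆ int(K) be a convex body, let 0 < α ≤ 1, and let G₊ := {x ∈ int(K) : inf_{g∈G} d_H^K(x,g) ≤ α} be the Hilbert α-expansion of G in K. Then for every x in the frontier ∂G there exists y in the frontier ∂G₊ such that d_H^K(x,y) = α. In particular, every point of ∂G is within Hilbert distance α of ∂G₊. -/
open Set MeasureTheory Metric
open scoped Pointwise RealInnerProductSpace ENNReal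

noncomputable section

lemma ht_wiggle {d : ℕ} {K : Set (Euc d)} {x : Euc d} (hx : x ∈ interior K) (w : Euc d) :
    ∃ ε : ℝ, 0 < ε ∧ x + ε • w ∈ K ∧ x - ε • w ∈ K := by
  have hn : K ∈ nhds x := mem_interior_iff_mem_nhds.1 hx
  have h1 : Filter.Tendsto (fun t : ℝ => x + t • w) (nhds 0) (nhds x) := by
    have : Continuous (fun t : ℝ => x + t • w) := by fun_prop
    simpa using this.tendsto 0
  have h2 : Filter.Tendsto (fun t : ℝ => x - t • w) (nhds 0) (nhds x) := by
    have : Continuous (fun t : ℝ => x - t • w) := by fun_prop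
    simpa using this.tendsto 0
  have h3 := (h1 hn)
  have h4 := (h2 hn)
  have h5 : ∀ᶠ t : ℝ in nhds 0, x + t • w ∈ K ∧ x - t • w ∈ K := by
    filter_upwards [h3, h4] with t ht1 ht2 using ⟨ht1, ht2⟩
  obtain ⟨δ, hδ, hh⟩ := Metric.eventually_nhds_iff.1 h5
  refine ⟨δ / 2, by positivity, hh ?_⟩
  rw [Real.dist_eq, sub_zero, abs_of_pos (by positivity)]
  linarith

lemma ht_pos {d : ℕ} {K : Set (Euc d)} {x y : Euc d} (hy : y ∈ interior K)
    (ψ : StrongDual ℝ (Euc d)) (c : ℝ) (hK : ∀ p ∈ K, 0 ≤ c + ψ p) (hx : 0 < c + ψ x) :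
    0 < c + ψ y := by
  obtain ⟨ε, hε, -, h⟩ := ht_wiggle hy (x - y)
  have h1 := hK _ h
  have h2 := hK _ (interior_subset hy)
  simp only [map_sub, map_smul, smul_eq_mul] at h1
  nlinarith

lemma ht_nhds {d : ℕ} {K : Set (Euc d)} {x y : Euc d} (hy : y ∈ interior K) :
    (fun k => k - x) '' K ∈ nhds (y - x) := by
  have hn : K ∈ nhds y := mem_interior_iff_mem_nhds.1 hy
  have : Filter.Tendsto (fun z : Euc d => z + x) (nhds (y - x)) (nhds y) := by
    have : Continuous (fun z : Euc d => z + x) := by fun_prop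
    simpa using this.tendsto (y - x)
  filter_upwards [this hn] with z hz
  exact ⟨z + x, hz, by simp⟩

lemma ht_gauge_lt {d : ℕ} {K : Set (Euc d)} {x y : Euc d} (hy : y ∈ interior K) :
    gauge ((fun k => k - x) '' K) (y - x) < 1 :=
  interior_subset_gauge_lt_one _ (mem_interior_iff_mem_nhds.2 (ht_nhds hy))

lemma ht_gauge_ge {d : ℕ} {K : Set (Euc d)} {x : Euc d} (y : Euc d) (hx : x ∈ interior K)
    (ψ : StrongDual ℝ (Euc d)) (c : ℝ) (hK : ∀ p ∈ K, 0 ≤ c + ψ p) (hx0 : 0 < c + ψ x) :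
    1 - gauge ((fun k => k - x) '' K) (y - x) ≤ (c + ψ y) / (c + ψ x) := by
  by_contra! hcon
  have h0 : (fun k => k - x) '' K ∈ nhds (0 : Euc d) := by
    simpa using ht_nhds (x := x) hx
  have h1 : gauge ((fun k => k - x) '' K) (y - x) < 1 - (c + ψ y) / (c + ψ x) := by linarith
  obtain ⟨r, hr, hr1, hr2⟩ := exists_lt_of_gauge_lt (absorbent_nhds_zero h0) h1
  obtain ⟨_, ⟨k, hk, rfl⟩, hk2⟩ := hr2
  have h2 := hK k hk
  have h3 : ψ y - ψ x = r * (ψ k - ψ x) := by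
    have := congrArg ψ hk2
    simpa using this.symm
  have h4 : (c + ψ y) / (c + ψ x) < 1 - r := by linarith
  rw [div_lt_iff₀ hx0] at h4
  nlinarith

lemma ht_gauge_eq {d : ℕ} {K : Set (Euc d)} {x y b : Euc d} (hx : x ∈ interior K)
    (ψ : StrongDual ℝ (Euc d)) (c : ℝ) (hK : ∀ p ∈ K, 0 ≤ c + ψ p) (hx0 : 0 < c + ψ x)
    (hb : b ∈ K) (hb0 : c + ψ b = 0) (s : ℝ) (hs : 0 ≤ s) (hy : y - x = s • (b - x)) :
    1 - gauge ((fun k => k - x) '' K) (y - x) = (c + ψ y) / (c + ψ x) := by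
  refine le_antisymm (ht_gauge_ge y hx ψ c hK hx0) ?_
  have h1 : gauge ((fun k => k - x) '' K) (y - x) ≤ s :=
    gauge_le_of_mem hs ⟨b - x, ⟨b, hb, rfl⟩, hy.symm⟩
  have h3 : ψ y - ψ x = s * (ψ b - ψ x) := by
    have := congrArg ψ hy
    simpa using this
  have : (c + ψ y) / (c + ψ x) = 1 - s := by
    rw [div_eq_iff hx0.ne']
    linear_combination h3 + s * hb0
  linarith

lemma ht_key {d : ℕ} {K : Set (Euc d)} (hK : IsConvexBody K) {x : Euc d} (hx : x ∈ interior K)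
    (f : StrongDual ℝ (Euc d)) (hf : f ≠ 0) :
    ∃ (φ : StrongDual ℝ (Euc d)) (M l : ℝ) (a b : Euc d), 0 < M ∧ 0 < l ∧ l < 1 ∧ a ∈ K ∧ b ∈ K ∧
      l • a + (1 - l) • b = x ∧ (∀ p ∈ K, 0 ≤ M + φ (p - x)) ∧
      (∀ p ∈ K, f (p - x) ≤ M + φ (p - x)) ∧ M + φ (a - x) = 0 ∧
      M + φ (b - x) = f (b - x) ∧ 0 < f (b - x) := by
  obtain ⟨hKc, hKconv, hKi⟩ := hK
  have hxK := interior_subset hx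
  let T : Set (ℝ × Euc d × Euc d) :=
    (Icc (0 : ℝ) 1 ×ˢ K ×ˢ K) ∩ {q | q.1 • q.2.1 + (1 - q.1) • q.2.2 = x}
  have hT : IsCompact T := by
    refine (isCompact_Icc.prod (hKc.prod hKc)).inter_right ?_
    exact isClosed_eq (by fun_prop) (by fun_prop)
  have hTne : T.Nonempty := ⟨(1, x, x), ⟨⟨by simp, hxK, hxK⟩, by simp⟩⟩
  have hcont : Continuous (fun q : ℝ × Euc d × Euc d => (1 - q.1) * f (q.2.2 - x)) := by fun_prop
  obtain ⟨⟨l, a, b⟩, ⟨⟨⟨hl0, hl1⟩, ha, hb⟩, hlab⟩, hmax⟩ := hT.exists_isMaxOn hTne hcont.continuousOn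
  simp only [mem_setOf_eq] at hl0 hl1 ha hb hlab
  have hmax' : ∀ m ∈ Icc (0 : ℝ) 1, ∀ p ∈ K, ∀ q ∈ K, m • p + (1 - m) • q = x →
      (1 - m) * f (q - x) ≤ (1 - l) * f (b - x) := fun m hm p hp q hq h =>
    hmax (show (m, p, q) ∈ T from ⟨⟨hm, hp, hq⟩, h⟩)
  obtain ⟨M, hM⟩ : ∃ M, M = (1 - l) * f (b - x) := ⟨_, rfl⟩
  rw [← hM] at hmax'
  have hMpos : 0 < M := by
    obtain ⟨w, hw⟩ : ∃ w, 0 < f w := by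
      by_contra! hcon
      apply hf
      ext w
      have h1 := hcon w
      have h2 := hcon (-w)
      simp only [map_neg] at h2
      simp only [ContinuousLinearMap.zero_apply]
      linarith
    obtain ⟨ε, hε, h1, h2⟩ := ht_wiggle hx w
    have := hmax' (1 / 2) (by norm_num) _ h2 _ h1 (by module)
    simp only [add_sub_cancel_left, map_smul, smul_eq_mul] at this
    have : 0 < ε * f w := by positivity
    linarith
  have hl1' : l < 1 := by
    rcases hl1.lt_or_eq with h | h
    · exact h
    · rw [h] at hM; simp at hM; linarith
  have hfb : 0 < f (b - x) := by
    have : 0 < (1 - l) * f (b - x) := by linarith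
    exact (pos_iff_pos_of_mul_pos this).1 (by linarith)
  have hl0' : 0 < l := by
    rcases hl0.lt_or_eq with h | h
    · exact h
    · rw [← h] at hlab; simp at hlab; rw [hlab] at hfb; simp at hfb
  -- the concave hull
  let A : Set (Euc d × ℝ) := K ×ˢ {0}
  let B : Set (Euc d × ℝ) := (fun p => (p, f (p - x))) '' K
  let C : Set (Euc d × ℝ) := convexJoin ℝ A B + ({0} : Set (Euc d)) ×ˢ Iic (0 : ℝ)
  have hA : Convex ℝ A := hKconv.prod (convex_singleton 0)
  have hB : Convex ℝ B := by
    rintro _ ⟨p, hp, rfl⟩ _ ⟨q, hq, rfl⟩ s t hs ht hst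
    refine ⟨s • p + t • q, hKconv hp hq hs ht hst, ?_⟩
    simp only [Prod.smul_mk, Prod.mk_add_mk, Prod.mk.injEq, true_and, map_sub, map_add, map_smul,
      smul_eq_mul]
    linear_combination (-(f x)) * (1 - hst) 
  have hC : Convex ℝ C := (hA.convexJoin hB).add ((convex_singleton 0).prod (convex_Iic 0))
  have hAC : ∀ p ∈ K, ∀ t ≤ (0 : ℝ), (p, t) ∈ C := fun p hp t ht =>
    Set.mem_add.2 ⟨(p, 0), mem_convexJoin.2 ⟨(p, 0), ⟨hp, rfl⟩, (p, f (p - x)), ⟨p, hp, rfl⟩,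
      left_mem_segment _ _ _⟩, (0, t), ⟨rfl, ht⟩, by simp⟩
  have hBC : ∀ p ∈ K, (p, f (p - x)) ∈ C := fun p hp =>
    Set.mem_add.2 ⟨(p, f (p - x)), mem_convexJoin.2 ⟨(p, 0), ⟨hp, rfl⟩, (p, f (p - x)),
      ⟨p, hp, rfl⟩, right_mem_segment _ _ _⟩, (0, 0), ⟨rfl, le_refl (0 : ℝ)⟩, by simp⟩
  have hCx : ∀ t, (x, t) ∈ C → t ≤ M := by
    intro t ht
    obtain ⟨p1, hp1, p2, ⟨h21, h22⟩, h3⟩ := Set.mem_add.1 ht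
    obtain ⟨⟨p, z⟩, ⟨hp, hz⟩, _, ⟨q, hq, rfl⟩, m, n, hm, hn, hmn, rfl⟩ := mem_convexJoin.1 hp1
    obtain ⟨e, r⟩ := p2
    simp only [mem_singleton_iff, mem_Iic] at h21 h22 hz hp
    subst h21 hz
    obtain rfl : n = 1 - m := by linarith
    simp only [Prod.smul_mk, Prod.mk_add_mk, Prod.mk.injEq, smul_eq_mul, mul_zero, zero_add,
      add_zero] at h3
    have := hmax' m ⟨hm, by linarith⟩ p hp q hq h3.1
    linarith [h3.2]
  have hCi : (interior C).Nonempty := by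
    refine ⟨(x, -1), mem_interior.2 ⟨interior K ×ˢ Iio 0, ?_, isOpen_interior.prod isOpen_Iio, 
      hx, by norm_num⟩⟩
    rintro ⟨p, t⟩ ⟨hp, ht⟩
    exact hAC p (interior_subset hp) t (le_of_lt ht)
  have hxC : (x, M) ∉ interior C := by
    intro hcon
    have hn : C ∈ nhds (x, M) := mem_interior_iff_mem_nhds.1 hcon
    have h1 : Filter.Tendsto (fun t : ℝ => (x, t)) (nhds M) (nhds (x, M)) := by
      have : Continuous (fun t : ℝ => (x, t)) := by fun_prop
      exact this.tendsto M
    obtain ⟨δ, hδ, hh⟩ := Metric.eventually_nhds_iff.1 (h1 hn)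
    have h2 := hCx (M + δ / 2) (hh (by
      rw [Real.dist_eq, add_sub_cancel_left, abs_of_pos (by positivity)]; linarith))
    linarith
  obtain ⟨L, hL0, hL⟩ := geometric_hahn_banach_of_nonempty_interior_point hC hxC hCi
  obtain ⟨c, hc⟩ : ∃ c, c = L (0, 1) := ⟨_, rfl⟩
  let φ : StrongDual ℝ (Euc d) := L.comp (ContinuousLinearMap.inl ℝ (Euc d) ℝ)
  have hLd : ∀ p t, L (p, t) = φ p + t * c := by
    intro p t
    have : (p, t) = (p, (0 : ℝ)) + t • ((0 : Euc d), (1 : ℝ)) := by simp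
    rw [this, map_add, map_smul, ← hc]
    simp [φ]
  have hc0 : 0 ≤ c := by
    have := hL _ (hAC x hxK (-1) (by norm_num))
    rw [hLd, hLd] at this
    nlinarith
  have hcpos : 0 < c := by
    rcases hc0.lt_or_eq with h | h
    · exact h
    · exfalso
      apply hL0
      have hφ : ∀ w, φ w = 0 := by
        intro w
        obtain ⟨ε, hε, h1, h2⟩ := ht_wiggle hx w
        have h3 := hL _ (hAC _ h1 0 le_rfl)
        have h4 := hL _ (hAC _ h2 0 le_rfl)
        rw [hLd, hLd, ← h] at h3 h4
        simp only [map_add, map_sub, map_smul, smul_eq_mul] at h3 h4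
        have : ε * φ w = 0 := by linarith
        rcases mul_eq_zero.1 this with h | h
        · linarith
        · exact h
      refine ContinuousLinearMap.ext ?_
      rintro ⟨p, t⟩
      rw [hLd, hφ, ← h]; simp
  have hu0 : ∀ p ∈ K, 0 ≤ M + (-(c⁻¹) • φ) (p - x) := by
    intro p hp
    have := hL _ (hAC p hp 0 le_rfl)
    rw [hLd, hLd] at this
    have h2 : c⁻¹ * (φ p - φ x) ≤ c⁻¹ * (M * c) := by gcongr; linarith
    have h3 : c⁻¹ * (M * c) = M := by field_simp
    simp only [ContinuousLinearMap.smul_apply, smul_eq_mul, map_sub]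
    linarith
  have huh : ∀ p ∈ K, f (p - x) ≤ M + (-(c⁻¹) • φ) (p - x) := by
    intro p hp
    have := hL _ (hBC p hp)
    rw [hLd, hLd] at this
    have h2 : c⁻¹ * (φ p - φ x) ≤ c⁻¹ * ((M - f (p - x)) * c) := by gcongr; linarith
    have h3 : c⁻¹ * ((M - f (p - x)) * c) = M - f (p - x) := by field_simp
    simp only [ContinuousLinearMap.smul_apply, smul_eq_mul, map_sub] at *
    linarith
  obtain ⟨χ, hχ⟩ : ∃ χ, χ = -(c⁻¹) • φ := ⟨_, rfl⟩
  rw [← hχ] at hu0 huh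
  have e1 := hu0 a ha
  have e2 := huh b hb
  have e3 : l * χ (a - x) + (1 - l) * χ (b - x) = 0 := by
    have : l • (a - x) + (1 - l) • (b - x) = 0 := by
      rw [← sub_eq_zero] at hlab
      rw [← hlab]; module
    have := congrArg χ this
    simpa using this
  refine ⟨χ, M, l, a, b, hMpos, hl0', hl1', ha, hb, hlab, hu0, huh, ?_, ?_, hfb⟩
  · have : l * (M + χ (a - x)) ≤ 0 := by nlinarith
    nlinarith
  · have : (1 - l) * (M + χ (b - x) - f (b - x)) ≤ 0 := by nlinarith
    nlinarith

theorem hilbert_expansion_boundary_transfer {d : ℕ} (K G : Set (Euc d))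
    (hK : IsConvexBody K) (hG : IsConvexBody G) (hGK : G ⊆ interior K)
    (α : ℝ) (hα : 0 < α) (hα1 : α ≤ 1) :
    ∀ x ∈ frontier G, ∃ y ∈ frontier (hilbertExpand K G α),
      hilbertDist K x y = α := by
  intro x hx
  have hxG : x ∈ G := hG.1.isClosed.frontier_subset hx
  have hxi : x ∈ interior K := hGK hxG
  obtain ⟨f, hf0, hf⟩ := geometric_hahn_banach_of_nonempty_interior_point hG.2.1 hx.2 hG.2.2
  obtain ⟨φ, M, l, a, b, hM, hl0, hl1, ha, hb, hlab, hu, huf, hua, hvb, hfb⟩ :=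
    ht_key hK hxi f hf0
  -- the two supporting functionals
  obtain ⟨cu, hcu⟩ : ∃ cu, cu = M - φ x := ⟨_, rfl⟩
  obtain ⟨ψ, hψ⟩ : ∃ ψ, ψ = φ - f := ⟨_, rfl⟩
  obtain ⟨cv, hcv⟩ : ∃ cv, cv = M - φ x + f x := ⟨_, rfl⟩
  have hψa : ∀ p, ψ p = φ p - f p := fun p => by rw [hψ]; rfl
  simp only [map_sub] at hu huf hua hvb hfb
  have hU : ∀ p ∈ K, 0 ≤ cu + φ p := fun p hp => by linarith [hu p hp]
  have hV : ∀ p ∈ K, 0 ≤ cv + ψ p := fun p hp => by linarith [huf p hp, hψa p]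
  have hUx : cu + φ x = M := by linarith
  have hVx : cv + ψ x = M := by linarith [hψa x]
  have hUa : cu + φ a = 0 := by linarith
  have hVb : cv + ψ b = 0 := by linarith [hψa b]
  have hUpos : ∀ p ∈ interior K, 0 < cu + φ p := fun p hp => ht_pos hp φ cu hU (by rw [hUx]; exact hM)
  have hVpos : ∀ p ∈ interior K, 0 < cv + ψ p := fun p hp => ht_pos hp ψ cv hV (by rw [hVx]; exact hM)
  -- lower bound
  have hlow : ∀ y ∈ interior K, ∀ g ∈ G,
      (1 / 2) * Real.log ((cu + φ y) / (cv + ψ y)) ≤ hilbertDist K y g := by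
    intro y hy g hg
    have hgi := hGK hg
    have h1 := ht_gauge_ge g hy φ cu hU (hUpos y hy)
    have h2 := ht_gauge_ge y hgi ψ cv hV (hVpos g hgi)
    have h3 := ht_gauge_lt (x := y) hgi
    have h4 := ht_gauge_lt (x := g) hy
    have u1 := hUpos y hy
    have u2 := hUpos g hgi
    have v1 := hVpos y hy
    have v2 := hVpos g hgi
    have huv : cu + φ g ≤ cv + ψ g := by linarith [hf g hg, hψa g]
    have h5 : (1 - gauge ((fun k => k - y) '' K) (g - y)) *
        (1 - gauge ((fun k => k - g) '' K) (y - g)) ≤ ((cu + φ y) / (cv + ψ y))⁻¹ := by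
      calc _ ≤ ((cu + φ g) / (cu + φ y)) * ((cv + ψ y) / (cv + ψ g)) := by
            apply mul_le_mul h1 h2 (by linarith) (by positivity)
        _ = ((cu + φ g) / (cv + ψ g)) * ((cu + φ y) / (cv + ψ y))⁻¹ := by
            rw [inv_div]; field_simp
        _ ≤ 1 * ((cu + φ y) / (cv + ψ y))⁻¹ := by
            gcongr
            rw [div_le_one v2]; exact huv
        _ = _ := one_mul _
    have h6 := Real.log_le_log (mul_pos (by linarith) (by linarith)) h5
    rw [Real.log_inv] at h6
    unfold hilbertDist
    linarith
  -- points on the segment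
  have hint : ∀ s : ℝ, 0 ≤ s → s < 1 → x + s • (b - x) ∈ interior K := by
    intro s hs hs1
    have := hK.2.1.combo_interior_self_mem_interior hxi hb (a := 1 - s) (b := s) (by linarith) hs
      (by ring)
    convert this using 1
    module
  have hdist : ∀ s : ℝ, 0 ≤ s → s < 1 → hilbertDist K x (x + s • (b - x)) =
      (1 / 2) * Real.log ((cu + φ (x + s • (b - x))) / (cv + ψ (x + s • (b - x)))) := by
    intro s hs hs1
    have hyi := hint s hs hs1
    have u1 := hUpos _ hyi
    have v1 := hVpos _ hyi
    obtain ⟨y, hy⟩ : ∃ y, y = x + s • (b - x) := ⟨_, rfl⟩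
    rw [← hy] at hyi u1 v1 ⊢
    have h1 := ht_gauge_eq (y := y) hxi ψ cv hV (hVpos x hxi) hb hVb s hs (by rw [hy]; module)
    -- x lies on the segment from y to a
    obtain ⟨r, hr⟩ : ∃ r, r = s * l / (s * l + (1 - l)) := ⟨_, rfl⟩
    have hden : 0 < s * l + (1 - l) := by nlinarith
    have h2 := ht_gauge_eq (y := x) hyi φ cu hU u1 ha hUa (s * l / (s * l + (1 - l)))
      (by positivity) (by
        have hden' : (s * l + (1 - l)) ≠ 0 := hden.ne'
        have key : (s * l + (1 - l)) • (x - y) = (s * l) • (a - y) := by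
          have e : l • (a - x) = - ((1 - l) • (b - x)) := by
            rw [← sub_eq_zero] at hlab ⊢
            rw [← hlab]; module
          have : (s * l) • (a - y) = s • (l • (a - x)) - (s * l * s) • (b - x) := by
            rw [hy]; module
          rw [this, e, hy]; module
        rw [div_eq_inv_mul, mul_smul, ← key, smul_smul, inv_mul_cancel₀ hden', one_smul])
    unfold hilbertDist
    rw [h1, h2, hUx, hVx]
    have : (cv + ψ y) / M * (M / (cu + φ y)) = ((cu + φ y) / (cv + ψ y))⁻¹ := by
      rw [inv_div]; field_simp
    rw [this, Real.log_inv]; ring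
  obtain ⟨H, hH⟩ : ∃ H, H = f b - f x := ⟨_, rfl⟩
  have hHpos : 0 < H := by linarith
  have hUs : ∀ s : ℝ, cu + φ (x + s • (b - x)) = (1 - s) * M + s * H := by
    intro s
    simp only [map_add, map_smul, map_sub, smul_eq_mul]
    linear_combination s * hvb + (1 - s) * hUx + s * hcu - s * hH
  have hVs : ∀ s : ℝ, cv + ψ (x + s • (b - x)) = (1 - s) * M := by
    intro s
    simp only [map_add, map_smul, map_sub, smul_eq_mul]
    linear_combination s * hVb + (1 - s) * hVx
  obtain ⟨κ, hκ⟩ : ∃ κ, κ = (Real.exp (2 * α) - 1) * M / H := ⟨_, rfl⟩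
  have hexp : 1 < Real.exp (2 * α) := Real.one_lt_exp_iff.2 (by linarith)
  have hκ0 : 0 < κ := by
    rw [hκ]; exact div_pos (mul_pos (by linarith) hM) hHpos
  obtain ⟨s, hs⟩ : ∃ s, s = κ / (1 + κ) := ⟨_, rfl⟩
  have hs0 : 0 < s := by rw [hs]; positivity
  have hs1 : s < 1 := by rw [hs, div_lt_one (by positivity)]; linarith
  have hval : ((1 - s) * M + s * H) / ((1 - s) * M) = Real.exp (2 * α) := by
    have e1 : κ * H = (Real.exp (2 * α) - 1) * M := by rw [hκ]; field_simp
    have e2 : 1 - s = 1 / (1 + κ) := by rw [hs]; field_simp; ring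
    rw [div_eq_iff (by rw [e2]; positivity), e2, hs]
    field_simp
    linear_combination e1
  have hds : hilbertDist K x (x + s • (b - x)) = α := by
    rw [hdist s hs0.le hs1, hUs, hVs, hval, Real.log_exp]; ring
  refine ⟨x + s • (b - x), ⟨subset_closure ⟨hint s hs0.le hs1, ?_⟩, ?_⟩, hds⟩
  · have hsym : hilbertDist K (x + s • (b - x)) x = α := by
      rw [← hds]; unfold hilbertDist
      rw [mul_comm (1 - gauge _ (x - _))]
    refine csInf_le ⟨α, ?_⟩ ⟨x, hxG, hsym⟩
    rintro _ ⟨g, hg, rfl⟩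
    have := hlow _ (hint s hs0.le hs1) g hg
    rwa [← hdist s hs0.le hs1, hds] at this
  · intro hcon
    have hn := mem_interior_iff_mem_nhds.1 hcon
    have h1 : Filter.Tendsto (fun t : ℝ => x + t • (b - x)) (nhds s) (nhds (x + s • (b - x))) := by
      have : Continuous (fun t : ℝ => x + t • (b - x)) := by fun_prop
      exact this.tendsto s
    have h2 : ∀ᶠ t in nhdsWithin s (Ioi s), x + t • (b - x) ∈ hilbertExpand K G α :=
      (h1.mono_left nhdsWithin_le_nhds) hn
    have h3 : ∀ᶠ t in nhdsWithin s (Ioi s), t ∈ Ioo s 1 := Ioo_mem_nhdsGT hs1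
    obtain ⟨t, ⟨ht, ht'⟩, hst, ht1⟩ := (h2.and h3).exists
    have ht0 : 0 < t := hs0.trans hst
    have h4 : (1 / 2) * Real.log (((1 - t) * M + t * H) / ((1 - t) * M)) ≤
        sInf (hilbertDist K (x + t • (b - x)) '' G) := by
      refine le_csInf ⟨_, x, hxG, rfl⟩ ?_
      rintro _ ⟨g, hg, rfl⟩
      have := hlow _ (hint t ht0.le ht1) g hg
      rwa [hUs, hVs] at this
    have h5 : Real.exp (2 * α) < ((1 - t) * M + t * H) / ((1 - t) * M) := by
      have q1 : 0 < (1 - s) * M := mul_pos (by linarith) hM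
      have q2 : 0 < (1 - t) * M := mul_pos (by linarith) hM
      rw [← hval, div_lt_div_iff₀ q1 q2]
      have : 0 < (t - s) * (M * H) := mul_pos (by linarith) (mul_pos hM hHpos)
      nlinarith
    have h6 := (Real.lt_log_iff_exp_lt ((Real.exp_pos _).trans h5)).2 h5
    linarith
end
end

section
/- There exists an absolute constant c ≥ 1 such that for every dimension d ≥ 2, every convex body D ⊆ ℝ^d whose centroid is the origin (i.e., ∫_D x dλ_d(x) = 0), every set U ⊆ ℝ^d, and every α > 0, one has N_{D ∩ (−D)}(U, α) ≤ c^{d} · N_D(U, α), where N_A(U,α) denotes the translative covering number of U by translates of α·A and D ∩ (−D) is the symmetric core of D. -/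
open Set MeasureTheory Metric
open scoped Pointwise RealInnerProductSpace ENNReal

noncomputable section

theorem aux_amgm (a b : ℝ≥0∞) : 4 * a * b ≤ (a + b) ^ 2 := by
  have key : ∀ a b : ℝ≥0∞, a ≤ b → 4 * a * b ≤ (a + b) ^ 2 := by
    intro a b h
    obtain ⟨c, rfl⟩ := exists_add_of_le h
    have : (a + (a + c)) ^ 2 = 4 * a * (a + c) + c ^ 2 := by ring
    rw [this]; exact le_self_add
  rcases le_total a b with h | h
  · exact key a b h
  · have := key b a h
    calc 4 * a * b = 4 * b * a := by ring
      _ ≤ _ := this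
      _ = _ := by ring

theorem aux_bm1_compact {A B C : Set ℝ} (hA : IsCompact A) (hB : IsCompact B)
    (hA0 : A.Nonempty) (hB0 : B.Nonempty) (h : ∀ a ∈ A, ∀ b ∈ B, a + b ∈ C) :
    volume A + volume B ≤ volume C := by
  have ha := hA.sSup_mem hA0
  have hb := hB.sInf_mem hB0
  set a := sSup A
  set b := sInf B
  have hA1 : ∀ x ∈ A, x ≤ a := fun x hx => le_csSup hA.bddAbove hx
  have hB1 : ∀ x ∈ B, b ≤ x := fun x hx => csInf_le hB.bddBelow hx
  have e1 : volume A = volume ((fun x => x - b) ⁻¹' A) := by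
    simp only [sub_eq_add_neg, measure_preimage_add_right]
  have e2 : volume B = volume ((fun x => x - a) ⁻¹' B) := by
    simp only [sub_eq_add_neg, measure_preimage_add_right]
  rw [e1, e2, ← measure_union₀]
  · apply measure_mono
    rintro x (hx | hx)
    · have := h _ hx _ hb; simpa using this
    · have := h _ ha _ hx; simpa using this
  · exact (hB.measurableSet.preimage (by fun_prop)).nullMeasurableSet
  · refine measure_mono_null (t := {a + b}) ?_ (by simp)
    rintro x ⟨hx, hy⟩
    have h1 := hA1 _ hx
    have h2 := hB1 _ hy
    simp only [mem_singleton_iff]; linarith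

theorem aux_inner {A : Set ℝ} (hA : MeasurableSet A) (hA0 : A.Nonempty) {b c : ℝ≥0∞}
    (h : ∀ K ⊆ A, IsCompact K → K.Nonempty → volume K + b ≤ c) : volume A + b ≤ c := by
  obtain ⟨a, ha⟩ := hA0
  by_cases hc : c = ⊤
  · simp [hc]
  have hb : b ≤ c := le_trans le_add_self (h {a} (by simpa using ha) isCompact_singleton (by simp))
  have hb' : b ≠ ⊤ := ne_top_of_le_ne_top hc hb
  have : volume A ≤ c - b := by
    refine le_of_forall_lt fun r hr => ?_
    obtain ⟨K, hK, hKc, hr⟩ := hA.exists_lt_isCompact hr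
    refine hr.trans_le (ENNReal.le_sub_of_add_le_right hb' ?_)
    refine h K hK hKc ?_
    by_contra h0
    rw [not_nonempty_iff_eq_empty] at h0
    simp [h0] at hr
  calc volume A + b ≤ c - b + b := by gcongr
    _ = c := tsub_add_cancel_of_le hb

theorem aux_bm1 {A B C : Set ℝ} (hA : MeasurableSet A) (hB : MeasurableSet B)
    (hA0 : A.Nonempty) (hB0 : B.Nonempty) (h : ∀ a ∈ A, ∀ b ∈ B, a + b ∈ C) :
    volume A + volume B ≤ volume C := by
  refine aux_inner hA hA0 fun K hK hKc hK0 => ?_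
  rw [add_comm]
  refine aux_inner hB hB0 fun L hL hLc hL0 => ?_
  rw [add_comm]
  exact aux_bm1_compact hKc hLc hK0 hL0 fun a ha b hb => h a (hK ha) b (hL hb)

theorem aux_pl_norm {f g h : ℝ → ℝ} (hf : Measurable f) (hg : Measurable g) (hh : Measurable h)
    (f0 : ∀ x, 0 ≤ f x) (g0 : ∀ x, 0 ≤ g x) (h0 : ∀ x, 0 ≤ h x)
    (f1 : ∀ x, f x ≤ 1) (g1 : ∀ x, g x ≤ 1)
    (fs : ∀ t < 1, ∃ x, t < f x) (gs : ∀ t < 1, ∃ x, t < g x)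
    (H : ∀ x y, f x * g y ≤ h (x + y) ^ 2) :
    (∫⁻ x, ENNReal.ofReal (f x)) + (∫⁻ x, ENNReal.ofReal (g x)) ≤
      ∫⁻ x, ENNReal.ofReal (h x) := by
  rw [lintegral_eq_lintegral_meas_lt _ (.of_forall f0) hf.aemeasurable,
    lintegral_eq_lintegral_meas_lt _ (.of_forall g0) hg.aemeasurable,
    lintegral_eq_lintegral_meas_lt _ (.of_forall h0) hh.aemeasurable]
  refine (le_lintegral_add _ _).trans ?_
  refine setLIntegral_mono' measurableSet_Ioi fun t (ht : 0 < t) => ?_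
  by_cases h1 : t < 1
  · refine aux_bm1 (measurableSet_lt measurable_const hf) (measurableSet_lt measurable_const hg)
      (fs t h1) (gs t h1) fun a (ha : t < f a) b (hb : t < g b) => ?_
    show t < h (a + b)
    refine lt_of_pow_lt_pow_left₀ 2 (h0 _) ((?_ : t ^ 2 < _).trans_le (H a b))
    nlinarith
  · have e1 : {a | t < f a} = ∅ := by
      ext a; simp only [mem_ofPred_eq, mem_empty_iff_false, iff_false]; linarith [f1 a]
    have e2 : {a | t < g a} = ∅ := by
      ext a; simp only [mem_ofPred_eq, mem_empty_iff_false, iff_false]; linarith [g1 a]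
    simp [e1, e2]

theorem aux_pl_real {f g h : ℝ → ℝ} (hf : Measurable f) (hg : Measurable g) (hh : Measurable h)
    (f0 : ∀ x, 0 ≤ f x) (g0 : ∀ x, 0 ≤ g x) (h0 : ∀ x, 0 ≤ h x)
    (f1 : BddAbove (range f)) (g1 : BddAbove (range g))
    (H : ∀ x y, f x * g y ≤ h (x + y) ^ 2) :
    4 * (∫⁻ x, ENNReal.ofReal (f x)) * (∫⁻ x, ENNReal.ofReal (g x)) ≤
      (∫⁻ x, ENNReal.ofReal (h x)) ^ 2 := by
  have fm : ∀ x, f x ≤ ⨆ x, f x := fun x => le_ciSup f1 x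
  have gm : ∀ x, g x ≤ ⨆ x, g x := fun x => le_ciSup g1 x
  have fl : ∀ t < ⨆ x, f x, ∃ x, t < f x := fun t ht => exists_lt_of_lt_ciSup ht
  have gl : ∀ t < ⨆ x, g x, ∃ x, t < g x := fun t ht => exists_lt_of_lt_ciSup ht
  set m := ⨆ x, f x
  set n := ⨆ x, g x
  have m0 : 0 ≤ m := (f0 0).trans (fm 0)
  have n0 : 0 ≤ n := (g0 0).trans (gm 0)
  rcases m0.eq_or_lt with hm | hm
  · have : ∀ x, f x = 0 := fun x => le_antisymm (hm ▸ fm x) (f0 x)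
    simp [this]
  rcases n0.eq_or_lt with hn | hn
  · have : ∀ x, g x = 0 := fun x => le_antisymm (hn ▸ gm x) (g0 x)
    simp [this]
  have hs : 0 < √(m * n) := Real.sqrt_pos.2 (by positivity)
  have hs2 : √(m * n) ^ 2 = m * n := Real.sq_sqrt (by positivity)
  set s := √(m * n)
  have key := aux_pl_norm (f := fun x => f x / m) (g := fun x => g x / n) (h := fun x => h x / s)
    (hf.div_const _) (hg.div_const _) (hh.div_const _)
    (fun x => div_nonneg (f0 x) m0) (fun x => div_nonneg (g0 x) n0)
    (fun x => div_nonneg (h0 x) hs.le)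
    (fun x => (div_le_one hm).2 (fm x)) (fun x => (div_le_one hn).2 (gm x))
    (fun t ht => by
      obtain ⟨x, hx⟩ := fl (t * m) (by nlinarith)
      exact ⟨x, (lt_div_iff₀ hm).2 hx⟩)
    (fun t ht => by
      obtain ⟨x, hx⟩ := gl (t * n) (by nlinarith)
      exact ⟨x, (lt_div_iff₀ hn).2 hx⟩)
    (fun x y => by
      rw [div_pow, hs2, div_mul_div_comm]
      exact div_le_div_of_nonneg_right (H x y) (by positivity))
  have sc : ∀ (u : ℝ → ℝ) (c : ℝ), Measurable u → 0 < c →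
      ∫⁻ x, ENNReal.ofReal (u x) = ENNReal.ofReal c * ∫⁻ x, ENNReal.ofReal (u x / c) := by
    intro u c hu hc
    rw [← lintegral_const_mul _ (hu.div_const c).ennreal_ofReal]
    refine lintegral_congr fun x => ?_
    rw [← ENNReal.ofReal_mul hc.le]; congr 1; field_simp
  rw [sc f m hf hm, sc g n hg hn, sc h s hh hs]
  have e : ENNReal.ofReal s ^ 2 = ENNReal.ofReal m * ENNReal.ofReal n := by
    rw [← ENNReal.ofReal_pow hs.le, hs2, ENNReal.ofReal_mul m0]
  set I := ∫⁻ x, ENNReal.ofReal (f x / m)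
  set J := ∫⁻ x, ENNReal.ofReal (g x / n)
  calc 4 * (ENNReal.ofReal m * I) * (ENNReal.ofReal n * J)
      = ENNReal.ofReal m * ENNReal.ofReal n * (4 * I * J) := by ring
    _ ≤ ENNReal.ofReal m * ENNReal.ofReal n * (I + J) ^ 2 := by gcongr; exact aux_amgm _ _
    _ ≤ ENNReal.ofReal m * ENNReal.ofReal n * (∫⁻ x, ENNReal.ofReal (h x / s)) ^ 2 := by gcongr
    _ = _ := by rw [mul_pow, e]

theorem aux_trunc (f : ℝ → ℝ≥0∞) (hf : Measurable f) :
    ∫⁻ x, f x = ⨆ n : ℕ, ∫⁻ x, min (f x) n := by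
  rw [← lintegral_iSup]
  · refine lintegral_congr fun x => ?_
    rw [← inf_iSup_eq, ENNReal.iSup_natCast, inf_top_eq]
  · intro n; exact hf.min measurable_const
  · intro n k hnk x
    exact min_le_min le_rfl (by exact_mod_cast hnk)

theorem aux_pl1 {f g h : ℝ → ℝ≥0∞} (hf : Measurable f) (hg : Measurable g) (hh : Measurable h)
    (H : ∀ x y, f x * g y ≤ h (x + y) ^ 2) :
    4 * (∫⁻ x, f x) * (∫⁻ x, g x) ≤ (∫⁻ x, h x) ^ 2 := by
  rw [aux_trunc f hf, aux_trunc g hg, ENNReal.mul_iSup (a := 4), ENNReal.iSup_mul]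
  refine iSup_le fun n => ?_
  rw [ENNReal.mul_iSup]
  refine iSup_le fun k => ?_
  have ft : ∀ (u : ℝ → ℝ≥0∞) (n : ℕ) x, min (u x) n ≠ ⊤ := fun u n x =>
    ne_top_of_le_ne_top (ENNReal.natCast_ne_top n) (min_le_right _ _)
  have bd : ∀ (u : ℝ → ℝ≥0∞) (n : ℕ), BddAbove (range fun x => (min (u x) n).toReal) := by
    intro u n
    refine ⟨n, ?_⟩
    rintro _ ⟨x, rfl⟩
    have := ENNReal.toReal_mono (ENNReal.natCast_ne_top n) (min_le_right (u x) n)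
    simpa using this
  have key := aux_pl_real (f := fun x => (min (f x) n).toReal) (g := fun x => (min (g x) k).toReal)
    (h := fun x => (min (h x) (max n k : ℕ)).toReal)
    (hf.min measurable_const).ennreal_toReal (hg.min measurable_const).ennreal_toReal
    (hh.min measurable_const).ennreal_toReal
    (fun x => ENNReal.toReal_nonneg) (fun x => ENNReal.toReal_nonneg)
    (fun x => ENNReal.toReal_nonneg) (bd f n) (bd g k)
    (fun x y => by
      rw [← ENNReal.toReal_mul, ← ENNReal.toReal_pow]
      refine ENNReal.toReal_mono (ENNReal.pow_ne_top (ft _ _ _)) ?_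
      rcases le_total (h (x + y)) ((max n k : ℕ) : ℝ≥0∞) with hl | hl
      · rw [min_eq_left hl]
        exact le_trans (mul_le_mul' (min_le_left _ _) (min_le_left _ _)) (H x y)
      · rw [min_eq_right hl, sq]
        refine mul_le_mul' ((min_le_right _ _).trans ?_) ((min_le_right _ _).trans ?_)
        · exact_mod_cast le_max_left _ _
        · exact_mod_cast le_max_right _ _)
  simp only [ENNReal.ofReal_toReal (ft _ _ _)] at key
  refine key.trans ?_
  gcongr
  exact min_le_left _ _

theorem aux_cons (n : ℕ) (f : (Fin (n + 1) → ℝ) → ℝ≥0∞) (hf : Measurable f) :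
    ∫⁻ x, f x = ∫⁻ s : ℝ, ∫⁻ y : Fin n → ℝ, f (Fin.cons s y) := by
  have mp := (volume_preserving_piFinSuccAbove (fun _ : Fin (n + 1) => ℝ) 0).symm
  rw [← mp.lintegral_comp_emb (MeasurableEquiv.measurableEmbedding _)]
  rw [Measure.volume_eq_prod, lintegral_prod]
  · refine lintegral_congr fun s => lintegral_congr fun y => ?_
    congr 1
    simp [MeasurableEquiv.piFinSuccAbove]
    rfl
  · exact (hf.comp (MeasurableEquiv.measurable _)).aemeasurable

theorem aux_cons_meas (n : ℕ) : Measurable fun p : ℝ × (Fin n → ℝ) =>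
    (Fin.cons p.1 p.2 : Fin (n + 1) → ℝ) := by
  refine measurable_pi_lambda _ fun i => ?_
  refine Fin.cases ?_ (fun j => ?_) i
  · simpa using measurable_fst
  · simp only [Fin.cons_succ]; fun_prop

theorem aux_pln (n : ℕ) : ∀ {f g h : (Fin n → ℝ) → ℝ≥0∞} (_ : Measurable f) (_ : Measurable g)
    (_ : Measurable h) (_ : ∀ x y, f x * g y ≤ h (x + y) ^ 2),
    4 ^ n * (∫⁻ x, f x) * (∫⁻ x, g x) ≤ (∫⁻ x, h x) ^ 2 := by
  induction n with
  | zero =>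
    intro f g h hf hg hh H
    simp only [lintegral_unique, volume_pi, Measure.pi_univ]
    simp only [pow_zero, Finset.univ_eq_empty, Finset.prod_empty, mul_one, one_mul]
    refine (H _ _).trans (le_of_eq ?_)
    congr 2
    exact Subsingleton.elim _ _
  | succ n ih =>
    intro f g h hf hg hh H
    rw [aux_cons n f hf, aux_cons n g hg, aux_cons n h hh]
    have mf := (hf.comp (aux_cons_meas n))
    have mg := (hg.comp (aux_cons_meas n))
    have mh := (hh.comp (aux_cons_meas n))
    have key := aux_pl1 (f := fun s => 4 ^ n * ∫⁻ y : Fin n → ℝ, f (Fin.cons s y))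
      (g := fun s => ∫⁻ y : Fin n → ℝ, g (Fin.cons s y))
      (h := fun s => ∫⁻ y : Fin n → ℝ, h (Fin.cons s y))
      (mf.lintegral_prod_right'.const_mul _) mg.lintegral_prod_right' mh.lintegral_prod_right'
      (fun s t => by
        refine ih (mf.comp measurable_prodMk_left) (mg.comp measurable_prodMk_left)
          (mh.comp measurable_prodMk_left) fun x y => ?_
        refine (H _ _).trans (le_of_eq ?_)
        congr 2
        ext i
        refine Fin.cases ?_ (fun j => ?_) i <;> simp)
    have e : ∫⁻ s : ℝ, 4 ^ n * ∫⁻ y : Fin n → ℝ, f (Fin.cons s y) =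
        4 ^ n * ∫⁻ s : ℝ, ∫⁻ y : Fin n → ℝ, f (Fin.cons s y) :=
      lintegral_const_mul _ mf.lintegral_prod_right'
    rw [e] at key
    refine le_trans (le_of_eq ?_) key
    ring

theorem aux_bm {d : ℕ} {A B C : Set (Euc d)} (hA : MeasurableSet A) (hB : MeasurableSet B)
    (hC : MeasurableSet C) (h : ∀ a ∈ A, ∀ b ∈ B, a + b ∈ C) :
    4 ^ d * volume A * volume B ≤ volume C ^ 2 := by
  have mp := (EuclideanSpace.volume_preserving_symm_measurableEquiv_toLp (Fin d)).symm
  have tr : ∀ S : Set (Euc d), MeasurableSet S →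
      volume S = ∫⁻ x : Fin d → ℝ, S.indicator 1 (WithLp.toLp 2 x) := by
    intro S hS
    rw [← lintegral_indicator_one hS,
      ← mp.lintegral_comp_emb (MeasurableEquiv.measurableEmbedding _)]
    rfl
  have me : ∀ S : Set (Euc d), MeasurableSet S →
      Measurable fun x : Fin d → ℝ => (S.indicator 1 (WithLp.toLp 2 x) : ℝ≥0∞) := by
    intro S hS
    exact (measurable_one.indicator hS).comp (MeasurableEquiv.toLp 2 (Fin d → ℝ)).measurable
  rw [tr A hA, tr B hB, tr C hC]
  refine aux_pln d (me A hA) (me B hB) (me C hC) fun x y => ?_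
  by_cases ha : WithLp.toLp 2 x ∈ A
  · by_cases hb : WithLp.toLp 2 y ∈ B
    · have := h _ ha _ hb
      simp [ha, hb, this]
    · simp [hb]
  · simp [ha]

def auxK {d : ℕ} (D : Set (Euc d)) (x : Euc d) : Set (Euc d) := {y | y ∈ D ∧ x - y ∈ D}

theorem auxK_compact {d : ℕ} {D : Set (Euc d)} (hD : IsCompact D) (x : Euc d) :
    IsCompact (auxK D x) :=
  hD.inter_right (hD.isClosed.preimage (by fun_prop : Continuous fun y : Euc d => x - y))

theorem aux_vol_smul {d : ℕ} (r : ℝ) (hr : 0 ≤ r) (S : Set (Euc d)) :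
    volume (r • S) = ENNReal.ofReal r ^ d * volume S := by
  rw [Measure.addHaar_smul, abs_of_nonneg (by positivity), ENNReal.ofReal_pow hr]
  simp

theorem auxK_comb {d : ℕ} {D : Set (Euc d)} (hc : Convex ℝ D) {x y u v : Euc d} {a b : ℝ}
    (ha : 0 ≤ a) (hb : 0 ≤ b) (hab : a + b = 1) (hu : u ∈ auxK D x) (hv : v ∈ auxK D y) :
    a • u + b • v ∈ auxK D (a • x + b • y) := by
  refine ⟨hc hu.1 hv.1 ha hb hab, ?_⟩
  have := hc hu.2 hv.2 ha hb hab
  convert this using 1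
  module

theorem auxK_mid {d : ℕ} {D : Set (Euc d)} (hD : IsCompact D) (hc : Convex ℝ D) (x y : Euc d) :
    volume (auxK D x) * volume (auxK D y) ≤
      volume (auxK D ((1 / 2 : ℝ) • x + (1 / 2 : ℝ) • y)) ^ 2 := by
  have key := aux_bm (auxK_compact hD x).measurableSet (auxK_compact hD y).measurableSet
    (C := (2 : ℝ) • auxK D ((1 / 2 : ℝ) • x + (1 / 2 : ℝ) • y))
    ((auxK_compact hD _).smul (2 : ℝ)).measurableSet
    (fun a ha b hb => by
      refine ⟨(1 / 2 : ℝ) • a + (1 / 2 : ℝ) • b,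
        auxK_comb hc (by norm_num) (by norm_num) (by norm_num) ha hb, ?_⟩
      show (2 : ℝ) • ((1 / 2 : ℝ) • a + (1 / 2 : ℝ) • b) = a + b
      module)
  rw [aux_vol_smul 2 (by norm_num), mul_pow, ← pow_mul, mul_comm d 2, pow_mul, mul_assoc] at key
  have e : (ENNReal.ofReal 2 ^ 2) = 4 := by
    rw [← ENNReal.ofReal_pow (by norm_num)]; norm_num
  rw [e] at key
  exact (ENNReal.mul_le_mul_iff_right (by positivity) (by finiteness)).1 key

theorem auxL_closed {d : ℕ} {D : Set (Euc d)} (hD : IsCompact D) (t : ℝ≥0∞) :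
    IsClosed {x | t ≤ volume (auxK D x)} := by
  rw [← isOpen_compl_iff, isOpen_iff_mem_nhds]
  intro x hx
  have hx : volume (auxK D x) < t := not_le.1 hx
  obtain ⟨W, hW, hWo, hWt⟩ := Set.exists_isOpen_lt_of_lt _ _ hx
  have hcl : IsClosed (D \ W + D) := ((hD.diff hWo).add hD).isClosed
  have hmem : x ∈ (D \ W + D)ᶜ := by
    rintro ⟨a, ha, b, hb, hab⟩
    refine ha.2 (hW ⟨ha.1, ?_⟩)
    have : x - a = b := by rw [← hab]; simp
    rwa [this]
  refine Filter.mem_of_superset (hcl.isOpen_compl.mem_nhds hmem) fun x' hx' => ?_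
  show ¬ (t ≤ volume (auxK D x'))
  rw [not_le]
  refine lt_of_le_of_lt (measure_mono fun y hy => ?_) hWt
  by_contra hyW
  exact hx' ⟨y, ⟨hy.1, hyW⟩, x' - y, hy.2, by simp⟩

theorem aux_midconvex {E : Type*} [NormedAddCommGroup E] [NormedSpace ℝ E] {s : Set E}
    (hs : IsClosed s) (h : ∀ x ∈ s, ∀ y ∈ s, (1 / 2 : ℝ) • x + (1 / 2 : ℝ) • y ∈ s) :
    Convex ℝ s := by
  intro x hx y hy a b ha hb hab
  set φ : ℝ → E := fun t => (1 - t) • x + t • y with hφ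
  have hcont : Continuous φ := by fun_prop
  have hT : IsClosed (φ ⁻¹' s) := hs.preimage hcont
  suffices hh : b ∈ φ ⁻¹' s by
    have : φ b ∈ s := hh
    rw [← hab] at hφ
    have e : (1 - b) = a := by linarith
    simpa [hφ, e] using this
  by_contra hbs
  have c1 : IsCompact (φ ⁻¹' s ∩ Icc 0 b) := isCompact_Icc.inter_left hT
  have c2 : IsCompact (φ ⁻¹' s ∩ Icc b 1) := isCompact_Icc.inter_left hT
  have hu := c1.sSup_mem ⟨0, by simpa [hφ] using hx, le_rfl, hb⟩
  have hv := c2.sInf_mem ⟨1, by simpa [hφ] using hy, by linarith, le_rfl⟩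
  have hu' : ∀ w ∈ φ ⁻¹' s ∩ Icc 0 b, w ≤ sSup (φ ⁻¹' s ∩ Icc 0 b) :=
    fun w hw => le_csSup c1.bddAbove hw
  have hv' : ∀ w ∈ φ ⁻¹' s ∩ Icc b 1, sInf (φ ⁻¹' s ∩ Icc b 1) ≤ w :=
    fun w hw => csInf_le c2.bddBelow hw
  set u := sSup (φ ⁻¹' s ∩ Icc 0 b)
  set v := sInf (φ ⁻¹' s ∩ Icc b 1)
  obtain ⟨hus, hu0, hub⟩ := hu
  obtain ⟨hvs, hvb, hv1⟩ := hv
  have hub2 : u < b := lt_of_le_of_ne hub fun e => hbs (e ▸ hus)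
  have hvb2 : b < v := lt_of_le_of_ne hvb fun e => hbs (e ▸ hvs)
  have hw : (u + v) / 2 ∈ φ ⁻¹' s := by
    have := h _ hus _ hvs
    show φ _ ∈ s
    convert this using 1
    simp only [hφ]
    module
  rcases le_total ((u + v) / 2) b with hl | hl
  · have := hu' _ ⟨hw, by linarith, hl⟩
    linarith
  · have := hv' _ ⟨hw, hl, by linarith⟩
    linarith

theorem auxL_convex {d : ℕ} {D : Set (Euc d)} (hD : IsCompact D) (hc : Convex ℝ D) (t : ℝ≥0∞) :
    Convex ℝ {x | t ≤ volume (auxK D x)} := by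
  refine aux_midconvex (auxL_closed hD t) fun x (hx : t ≤ _) y (hy : t ≤ _) => ?_
  show t ≤ _
  have h1 := auxK_mid hD hc x y
  have h2 : t ^ 2 ≤ volume (auxK D x) * volume (auxK D y) := by
    rw [sq]; exact mul_le_mul' hx hy
  exact (ENNReal.pow_le_pow_left_iff (by norm_num)).1 (h2.trans h1)

theorem aux_bad {d : ℕ} {D : Set (Euc d)} (hD : IsCompact D) (hc : Convex ℝ D) (t : ℝ≥0∞) :
    (volume.prod volume) ((D ×ˢ D) ∩ {p : Euc d × Euc d | volume (auxK D (p.1 + p.2)) < t})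
      ≤ t * (2 ^ d * volume D) := by
  have hm : MeasurableSet {z | volume (auxK D z) < t} := by
    have := (auxL_closed hD t).measurableSet.compl
    convert this using 1
    ext z; simp
  have hsm : Measurable fun p : Euc d × Euc d => p.1 + p.2 := by fun_prop
  have hM : MeasurableSet ((D ×ˢ D) ∩ {p : Euc d × Euc d | volume (auxK D (p.1 + p.2)) < t}) :=
    (hD.measurableSet.prod hD.measurableSet).inter (hsm hm)
  set S := (D ×ˢ D) ∩ {p : Euc d × Euc d | volume (auxK D (p.1 + p.2)) < t} with hS
  have hM2 : MeasurableSet {p : Euc d × Euc d | (p.1, p.2 - p.1) ∈ S} :=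
    (by fun_prop : Measurable fun p : Euc d × Euc d => (p.1, p.2 - p.1)) hM
  have e1 : (volume.prod volume) S =
      ∫⁻ x : Euc d, ∫⁻ z : Euc d, S.indicator 1 (x, z - x) := by
    rw [← lintegral_indicator_one hM, lintegral_prod _ (measurable_one.indicator hM).aemeasurable]
    refine lintegral_congr fun x => ?_
    rw [lintegral_sub_right_eq_self (fun y => (S.indicator 1 (x, y) : ℝ≥0∞))]
  rw [e1, lintegral_lintegral_swap]
  swap
  · exact ((measurable_one.indicator hM).comp
      (by fun_prop : Measurable fun p : Euc d × Euc d => (p.1, p.2 - p.1))).aemeasurable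
  have e2 : (2 ^ d * volume D) = volume ((2 : ℝ) • D) := by
    rw [aux_vol_smul 2 (by norm_num)]; norm_num
  rw [e2, ← setLIntegral_const, ← lintegral_indicator (hD.smul (2 : ℝ)).measurableSet]
  refine lintegral_mono fun z => ?_
  by_cases hz : volume (auxK D z) < t ∧ z ∈ (2 : ℝ) • D
  · rw [indicator_of_mem hz.2]
    refine le_trans ?_ hz.1.le
    rw [← lintegral_indicator_one (auxK_compact hD z).measurableSet]
    refine lintegral_mono fun x => ?_
    by_cases hx : (x, z - x) ∈ S
    · have : x ∈ auxK D z := hx.1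
      simp [hx, this]
    · simp [hx]
  · have : ∀ x, (x, z - x) ∉ S := by
      intro x hx
      refine hz ⟨by simpa using hx.2, ?_⟩
      refine ⟨(1 / 2 : ℝ) • x + (1 / 2 : ℝ) • (z - x),
        hc hx.1.1 hx.1.2 (by norm_num) (by norm_num) (by norm_num), ?_⟩
      show (2 : ℝ) • ((1 / 2 : ℝ) • x + (1 / 2 : ℝ) • (z - x)) = z
      module
    simp [this]

theorem aux_core_vol {d : ℕ} (hd : 2 ≤ d) {D : Set (Euc d)} (hD : IsCompact D) (hc : Convex ℝ D)
    (hV : volume D ≠ 0) (h0 : (∫ x in D, x) = 0) :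
    (volume D).toReal ≤ 8 ^ d * (volume (auxK D 0)).toReal := by
  have hVt : volume D ≠ ⊤ := hD.measure_ne_top
  set t : ℝ≥0∞ := volume D / 4 ^ d with ht
  set L : Set (Euc d) := {x | t ≤ volume (auxK D x)} with hL
  have hLc : IsClosed L := auxL_closed hD t
  have hLx : Convex ℝ L := auxL_convex hD hc t
  set μ : Measure (Euc d × Euc d) := volume.prod volume with hμ
  set sm : Euc d × Euc d → Euc d := fun p => p.1 + p.2 with hsm
  have hcont : Continuous sm := by fun_prop
  set P := D ×ˢ D with hP
  have hPc : IsCompact P := hD.prod hD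
  have hPm : MeasurableSet P := hPc.measurableSet
  have hEm : MeasurableSet (sm ⁻¹' L) := (hLc.preimage hcont).measurableSet
  have hbad : μ (P \ sm ⁻¹' L) ≤ t * (2 ^ d * volume D) := by
    have := aux_bad hD hc t
    convert this using 2
    ext p
    simp [hP, hL, hsm]
  have hμP : μ P = volume D * volume D := Measure.prod_prod _ _
  have hint : IntegrableOn sm P μ := hcont.continuousOn.integrableOn_compact hPc
  have hmean : ∫ p in P, sm p ∂μ = 0 := by
    rw [hμ, hP, ← Measure.prod_restrict]
    have i0 : Integrable (fun x : Euc d => x) (volume.restrict D) :=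
      continuous_id.continuousOn.integrableOn_compact hD
    have : IsFiniteMeasure (volume.restrict D) := ⟨by simpa using hVt.lt_top⟩
    rw [integral_add (i0.comp_fst _) (i0.comp_snd _)]
    rw [integral_fun_fst (fun x : Euc d => x), integral_fun_snd (fun x : Euc d => x), h0]
    simp
  have hsplit : (∫ p in P ∩ sm ⁻¹' L, sm p ∂μ) + ∫ p in P \ sm ⁻¹' L, sm p ∂μ = 0 := by
    rw [integral_inter_add_sdiff hEm hint, hmean]
  have hPt : μ P ≠ ⊤ := by rw [hμP]; exact ENNReal.mul_ne_top hVt hVt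
  have hEt : μ (P ∩ sm ⁻¹' L) ≠ ⊤ := ne_top_of_le_ne_top hPt (measure_mono inter_subset_left)
  have hFt : μ (P \ sm ⁻¹' L) ≠ ⊤ := ne_top_of_le_ne_top hPt (measure_mono sdiff_subset)
  have hsum : (μ (P ∩ sm ⁻¹' L)).toReal + (μ (P \ sm ⁻¹' L)).toReal = (μ P).toReal := by
    rw [← ENNReal.toReal_add hEt hFt, measure_inter_add_sdiff _ hEm]
  have hv : 0 < (volume D).toReal := ENNReal.toReal_pos hV hVt
  have hPv : (μ P).toReal = (volume D).toReal ^ 2 := by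
    rw [hμP, ENNReal.toReal_mul, sq]
  have htt : t.toReal = (volume D).toReal / 4 ^ d := by
    rw [ht, ENNReal.toReal_div]; simp
  have ht_top : t ≠ ⊤ := ENNReal.div_ne_top hVt (by positivity)
  have hFv : (μ (P \ sm ⁻¹' L)).toReal ≤ (volume D).toReal ^ 2 / 2 := by
    have h1 := ENNReal.toReal_mono (by finiteness) hbad
    rw [ENNReal.toReal_mul, htt, ENNReal.toReal_mul] at h1
    simp only [ENNReal.toReal_pow, ENNReal.toReal_ofNat] at h1
    refine h1.trans ?_
    have e : (4 : ℝ) ^ d = 2 ^ d * 2 ^ d := by rw [← mul_pow]; norm_num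
    have h2 : (2 : ℝ) ≤ 2 ^ d := by
      calc (2 : ℝ) = 2 ^ 1 := by norm_num
        _ ≤ 2 ^ d := pow_le_pow_right₀ (by norm_num) (by omega)
    calc _ = (volume D).toReal ^ 2 / 2 ^ d := by rw [e]; field_simp
      _ ≤ _ := by gcongr
  set v := (volume D).toReal
  set e := (μ (P ∩ sm ⁻¹' L)).toReal
  set f := (μ (P \ sm ⁻¹' L)).toReal with hf
  have he : v ^ 2 / 2 ≤ e := by linarith
  have he0 : 0 < e := lt_of_lt_of_le (by positivity) he
  have hE0 : μ (P ∩ sm ⁻¹' L) ≠ 0 := fun h => by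
    simp [e, h] at he0
  have ha : (⨍ p in P ∩ sm ⁻¹' L, sm p ∂μ) ∈ L :=
    hLx.set_average_mem hLc hE0 hEt
      (ae_restrict_of_forall_mem (hPm.inter hEm) fun p hp => hp.2) (hint.mono_set inter_subset_left)
  have ha' : ∫ p in P ∩ sm ⁻¹' L, sm p ∂μ = e • ⨍ p in P ∩ sm ⁻¹' L, sm p ∂μ := by
    rw [setAverage_eq, smul_smul]
    change _ = (e * e⁻¹) • _
    rw [mul_inv_cancel₀ he0.ne', one_smul]
  set a := ⨍ p in P ∩ sm ⁻¹' L, sm p ∂μ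
  have hKt : volume (auxK D 0) ≠ ⊤ := (auxK_compact hD 0).measure_ne_top
  -- the centroid is a convex combination
  have main : ∃ p : ℝ, 0 ≤ p ∧ p ≤ 1 / 2 ∧ ∃ q ∈ D, (1 - p) • a + p • ((2 : ℝ) • q) = 0 := by
    by_cases hF0 : μ (P \ sm ⁻¹' L) = 0
    · have : (∫ p in P \ sm ⁻¹' L, sm p ∂μ) = 0 := by
        rw [Measure.restrict_eq_zero.2 hF0]; simp
      rw [this, add_zero, ha'] at hsplit
      have a0 : a = 0 := by
        rcases smul_eq_zero.1 hsplit with h | h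
        · exact absurd h he0.ne'
        · exact h
      obtain ⟨q, hq⟩ : D.Nonempty := by
        rw [nonempty_iff_ne_empty]; rintro rfl; simp at hV
      exact ⟨0, le_rfl, by norm_num, q, hq, by simp [a0]⟩
    · have hb : (⨍ p in P \ sm ⁻¹' L, sm p ∂μ) ∈ (2 : ℝ) • D := by
        refine (hc.smul 2).set_average_mem (hD.smul (2 : ℝ)).isClosed hF0 hFt
          (ae_restrict_of_forall_mem (hPm.diff hEm) fun p hp => ?_) (hint.mono_set sdiff_subset)
        refine ⟨(1 / 2 : ℝ) • p.1 + (1 / 2 : ℝ) • p.2,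
          hc hp.1.1 hp.1.2 (by norm_num) (by norm_num) (by norm_num), ?_⟩
        show (2 : ℝ) • ((1 / 2 : ℝ) • p.1 + (1 / 2 : ℝ) • p.2) = p.1 + p.2
        module
      have hf0 : 0 < f := ENNReal.toReal_pos hF0 hFt
      have hb' : ∫ p in P \ sm ⁻¹' L, sm p ∂μ = f • ⨍ p in P \ sm ⁻¹' L, sm p ∂μ := by
        rw [setAverage_eq, smul_smul]
        change _ = (f * f⁻¹) • _
        rw [mul_inv_cancel₀ hf0.ne', one_smul]
      obtain ⟨q, hq, hqb⟩ := hb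
      change (2 : ℝ) • q = _ at hqb
      rw [ha', hb', ← hqb] at hsplit
      refine ⟨f / v ^ 2, by positivity, ?_, q, hq, ?_⟩
      · rw [div_le_iff₀ (by positivity)]; linarith
      · have e1 : 1 - f / v ^ 2 = (v ^ 2)⁻¹ * e := by
          field_simp; linarith
        have e2 : f / v ^ 2 = (v ^ 2)⁻¹ * f := by ring
        rw [e1, e2, mul_smul, mul_smul (v ^ 2)⁻¹ f, ← smul_add, hsplit, smul_zero]
  obtain ⟨p, hp0, hp1, q, hq, hcomb⟩ := main
  have hqK : q ∈ auxK D ((2 : ℝ) • q) := ⟨hq, by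
    have : (2 : ℝ) • q - q = q := by module
    rwa [this]⟩
  have hsub : (p • q) +ᵥ ((1 - p) • auxK D a) ⊆ auxK D 0 := by
    rintro _ ⟨_, ⟨y, hy, rfl⟩, rfl⟩
    have := auxK_comb hc (by linarith : 0 ≤ 1 - p) hp0 (by ring) hy hqK
    rw [hcomb] at this
    change p • q + (1 - p) • y ∈ _
    rwa [add_comm]
  have h1 := measure_mono (μ := volume) hsub
  rw [measure_vadd, aux_vol_smul _ (by linarith)] at h1
  have h2 : ENNReal.ofReal (1 - p) ^ d * t ≤ volume (auxK D 0) := by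
    refine le_trans ?_ h1
    gcongr
    exact ha
  have h3 := ENNReal.toReal_mono hKt h2
  rw [ENNReal.toReal_mul, htt, ENNReal.toReal_pow, ENNReal.toReal_ofReal (by linarith)] at h3
  have h4 : (1 / 2 : ℝ) ^ d * (v / 4 ^ d) ≤ (volume (auxK D 0)).toReal := by
    refine le_trans ?_ h3
    gcongr
    linarith
  have e8 : (8 : ℝ) ^ d = 2 ^ d * 4 ^ d := by rw [← mul_pow]; norm_num
  calc v = 8 ^ d * ((1 / 2 : ℝ) ^ d * (v / 4 ^ d)) := by
        rw [e8, div_pow, one_pow]; field_simp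
    _ ≤ _ := by gcongr

theorem aux_card {d : ℕ} {D : Set (Euc d)} (hD : IsCompact D) (hc : Convex ℝ D)
    (hV : 0 < (volume D).toReal)
    (hK : (volume D).toReal ≤ 8 ^ d * (volume (auxK D 0)).toReal)
    (s : Finset (Euc d)) (hs : ∀ x ∈ s, x ∈ D)
    (hp : ∀ x ∈ s, ∀ y ∈ s, x ≠ y → x - y ∉ auxK D 0) : s.card ≤ 24 ^ d := by
  have hVt : volume D ≠ ⊤ := hD.measure_ne_top
  have hKt : volume (auxK D 0) ≠ ⊤ := (auxK_compact hD 0).measure_ne_top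
  have hsub : (⋃ x ∈ s, (x +ᵥ (1 / 2 : ℝ) • auxK D 0)) ⊆ (3 / 2 : ℝ) • D := by
    intro z hz
    simp only [mem_iUnion] at hz
    obtain ⟨x, hx, hz⟩ := hz
    obtain ⟨_, ⟨y, hy, rfl⟩, rfl⟩ := hz
    have : (3 / 2 : ℝ) • D = (1 : ℝ) • D + (1 / 2 : ℝ) • D := by
      rw [← hc.add_smul (by norm_num) (by norm_num)]; norm_num
    rw [this, one_smul]
    exact ⟨x, hs x hx, (1 / 2 : ℝ) • y, ⟨y, hy.1, rfl⟩, rfl⟩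
  have h1 := measure_mono (μ := volume) hsub
  rw [measure_biUnion_finset] at h1
  · simp only [measure_vadd, aux_vol_smul (1 / 2) (by norm_num : (0 : ℝ) ≤ 1 / 2),
      aux_vol_smul (3 / 2) (by norm_num : (0 : ℝ) ≤ 3 / 2), Finset.sum_const, nsmul_eq_mul] at h1
    have h2 := ENNReal.toReal_mono (by finiteness) h1
    simp only [ENNReal.toReal_mul, ENNReal.toReal_pow, ENNReal.toReal_natCast] at h2
    rw [ENNReal.toReal_ofReal (by norm_num), ENNReal.toReal_ofReal (by norm_num)] at h2
    set k := (volume (auxK D 0)).toReal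
    have hk : 0 < k := by
      by_contra hk
      have : 8 ^ d * k ≤ 0 := mul_nonpos_of_nonneg_of_nonpos (by positivity) (not_lt.1 hk)
      linarith
    have h3 : (s.card : ℝ) * ((1 / 2) ^ d * k) ≤ (3 / 2) ^ d * (8 ^ d * k) :=
      h2.trans (by gcongr)
    have e : (3 / 2 : ℝ) ^ d * (8 ^ d * k) = 24 ^ d * ((1 / 2) ^ d * k) := by
      rw [← mul_assoc, ← mul_assoc, ← mul_pow, ← mul_pow]; norm_num
    rw [e] at h3
    have h4 := le_of_mul_le_mul_right h3 (by positivity)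
    exact_mod_cast h4
  · intro x hx y hy hxy
    rw [Function.onFun, Set.disjoint_left]
    rintro _ ⟨_, ⟨u, hu, rfl⟩, rfl⟩ ⟨_, ⟨w, hw, h⟩, h'⟩
    refine hp x hx y hy hxy ?_
    change y + _ = x + (1 / 2 : ℝ) • u at h'
    rw [← h] at h'
    change y + (1 / 2 : ℝ) • w = x + (1 / 2 : ℝ) • u at h'
    have e : x - y = (1 / 2 : ℝ) • w + (1 / 2 : ℝ) • (0 - u) := by
      have : x = y + (1 / 2 : ℝ) • w - (1 / 2 : ℝ) • u := by rw [h']; abel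
      rw [this]; module
    rw [e]
    have hu' : (0 - u) ∈ auxK D 0 := ⟨hu.2, by simpa using hu.1⟩
    have := auxK_comb hc (by norm_num : (0 : ℝ) ≤ 1 / 2) (by norm_num : (0 : ℝ) ≤ 1 / 2)
      (by norm_num) hw hu'
    simpa using this
  · intro x hx
    exact (((auxK_compact hD 0).smul (1 / 2 : ℝ)).vadd x).measurableSet

theorem aux_cover {d : ℕ} {D : Set (Euc d)} (hD : IsCompact D) (hc : Convex ℝ D)
    (hV : 0 < (volume D).toReal)
    (hK : (volume D).toReal ≤ 8 ^ d * (volume (auxK D 0)).toReal) :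
    ∃ s : Finset (Euc d), s.card ≤ 24 ^ d ∧ ∀ z ∈ D, ∃ x ∈ s, z - x ∈ auxK D 0 := by
  classical
  let T : Set ℕ := {n | ∃ s : Finset (Euc d), s.card = n ∧ (∀ x ∈ s, x ∈ D) ∧
    ∀ x ∈ s, ∀ y ∈ s, x ≠ y → x - y ∉ auxK D 0}
  have hT : BddAbove T := by
    refine ⟨24 ^ d, ?_⟩
    rintro _ ⟨s, rfl, h1, h2⟩
    exact aux_card hD hc hV hK s h1 h2
  have hT0 : T.Nonempty := ⟨0, ∅, by simp⟩
  obtain ⟨s, hs, h1, h2⟩ := Nat.sSup_mem hT0 hT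
  refine ⟨s, aux_card hD hc hV hK s h1 h2, fun z hz => ?_⟩
  by_contra hcon
  push Not at hcon
  have hk : volume (auxK D 0) ≠ 0 := by
    intro h; rw [h] at hK; simp at hK; linarith
  obtain ⟨u, hu⟩ : (auxK D 0).Nonempty := by
    rw [nonempty_iff_ne_empty]; intro h; rw [h] at hk; simp at hk
  have hneg : ∀ u ∈ auxK D 0, -u ∈ auxK D 0 := fun u hu => ⟨by simpa using hu.2, by simpa using hu.1⟩
  have h00 : (0 : Euc d) ∈ auxK D 0 := by
    have := auxK_comb hc (by norm_num : (0 : ℝ) ≤ 1 / 2) (by norm_num : (0 : ℝ) ≤ 1 / 2)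
      (by norm_num) hu (hneg u hu)
    simpa using this
  have hzs : z ∉ s := fun h => hcon z h (by simpa using h00)
  have hmem : s.card + 1 ∈ T := by
    refine ⟨insert z s, Finset.card_insert_of_notMem hzs, ?_, ?_⟩
    · intro x hx
      rcases Finset.mem_insert.1 hx with rfl | hx
      · exact hz
      · exact h1 x hx
    · intro x hx y hy hxy
      rcases Finset.mem_insert.1 hx with rfl | hx1 <;>
        rcases Finset.mem_insert.1 hy with rfl | hy1
      · exact absurd rfl hxy
      · exact hcon y hy1
      · intro h
        have := hneg _ h
        rw [neg_sub] at this
        exact hcon x hx1 this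
      · exact h2 x hx1 y hy1 hxy
  have := le_csSup hT hmem
  omega

/-- Covering with the symmetric core. -/
theorem symmetric_core_cover :
    ∃ c : ℝ, 1 ≤ c ∧ ∀ d : ℕ, 2 ≤ d →
      ∀ D : Set (Euc d), IsConvexBody D → (∫ x in D, x) = 0 →
        ∀ U : Set (Euc d), ∀ α : ℝ, 0 < α →
          (transCov (D ∩ -D) U α : ℝ) ≤ c ^ d * (transCov D U α : ℝ) := by
  refine ⟨24, by norm_num, fun d hd D ⟨hD, hc, hi⟩ h0 U α hα => ?_⟩
  have hV : volume D ≠ 0 := fun h =>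
    (isOpen_interior.measure_pos volume hi).ne' (measure_mono_null interior_subset h)
  have hKeq : auxK D 0 = D ∩ -D := by
    ext x; simp [auxK]
  obtain ⟨s, hs, hcov⟩ := aux_cover hD hc (ENNReal.toReal_pos hV hD.measure_ne_top)
    (aux_core_vol hd hD hc hV h0)
  rw [hKeq] at hcov
  by_cases hne : {m : ℕ | ∃ x : Fin m → Euc d, U ⊆ ⋃ i, x i +ᵥ α • D}.Nonempty
  · obtain ⟨x, hx⟩ := Nat.sInf_mem hne
    change U ⊆ ⋃ i : Fin (transCov D U α), _ at hx
    have hle : transCov (D ∩ -D) U α ≤ transCov D U α * s.card := by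
      refine Nat.sInf_le ?_
      let e : Fin (transCov D U α * s.card) ≃ Fin (transCov D U α) × Fin s.card :=
        finProdFinEquiv.symm
      refine ⟨fun j => x (e j).1 + α • (s.equivFin.symm (e j).2 : Euc d), fun u hu => ?_⟩
      obtain ⟨i, hi⟩ := mem_iUnion.1 (hx hu)
      obtain ⟨_, ⟨z, hz, rfl⟩, rfl⟩ := hi
      obtain ⟨y, hy, hzy⟩ := hcov z hz
      refine mem_iUnion.2 ⟨e.symm (i, s.equivFin ⟨y, hy⟩), ?_⟩
      simp only [Equiv.apply_symm_apply, Equiv.symm_apply_apply]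
      refine ⟨α • (z - y), ⟨z - y, hzy, rfl⟩, ?_⟩
      change x i + α • y + α • (z - y) = x i + α • z
      module
    calc (transCov (D ∩ -D) U α : ℝ) ≤ ((transCov D U α * s.card : ℕ) : ℝ) := by
          exact_mod_cast hle
      _ ≤ ((transCov D U α * 24 ^ d : ℕ) : ℝ) := by
          exact_mod_cast Nat.mul_le_mul_left _ hs
      _ = _ := by push_cast; ring
  · have : {m : ℕ | ∃ x : Fin m → Euc d, U ⊆ ⋃ i, x i +ᵥ α • (D ∩ -D)} = ∅ := by
      rw [← not_nonempty_iff_eq_empty]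
      rintro ⟨m, x, hx⟩
      refine hne ⟨m, x, hx.trans (iUnion_mono fun i => ?_)⟩
      exact vadd_set_mono (smul_set_mono inter_subset_left)
    have h0 : transCov (D ∩ -D) U α = 0 := by
      rw [transCov, this, Nat.sInf_empty]
    rw [h0]
    simp only [Nat.cast_zero]
    positivity
end
end
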